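/- arXiv:2511.22212 — 2 statements merged into one kernel-verified Lean document; each statement's English description precedes it below -/
import Mathlib

section
/- There is an absolute constant c > 0 such that the following holds. Let Σ be a finite alphabet, let 1 ≤ N ≤ M with M ≥ 2, and let G be a 2D SLP deriving a 2D string T over Σ of size N×M. Then there exists a 2D SLP G' with exp(G') = T, size |G'| ≤ c·|G|·N, and depth at most c·log₂ M. -/
/-!
## Two-dimensional strings.
A 2D string over alphabet `A` of size `h × w` is represented canonically:
`f i j` is `some` of the character in (0-indexed) row `i`, column `j` when
`i < h` and `j < w`, and `none` outside of the rectangle.  All operations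
below produce such canonical representations, so equality of 2D strings
built from them coincides with equality of the dimensions and of all entries.
-/
structure Str2 (A : Type) where
  h : ℕ
  w : ℕ
  f : ℕ → ℕ → Option A

namespace Str2

variable {A : Type}

/-- Canonical constructor: pads with `none` outside of the `h × w` rectangle. -/
def mk' (h w : ℕ) (g : ℕ → ℕ → Option A) : Str2 A :=
  ⟨h, w, fun i j => if i < h ∧ j < w then g i j else none⟩

/-- The empty 2D string. -/
def empty : Str2 A := ⟨0, 0, fun _ _ => none⟩

/-- The `1 × 1` 2D string consisting of a single character. -/
def single (a : A) : Str2 A := mk' 1 1 fun _ _ => some a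

/-- Horizontal concatenation `S ⊞ T` (meaningful when the heights agree). -/
def hcat (S T : Str2 A) : Str2 A :=
  mk' S.h (S.w + T.w) fun i j => if j < S.w then S.f i j else T.f i (j - S.w)

/-- Vertical concatenation `S ⊟ T` (meaningful when the widths agree). -/
def vcat (S T : Str2 A) : Str2 A :=
  mk' (S.h + T.h) S.w fun i j => if i < S.h then S.f i j else T.f (i - S.h) j

/-- Horizontal concatenation `S₁ ⊞ S₂ ⊞ ⋯ ⊞ S_k` of a list of 2D strings. -/
def hcatList : List (Str2 A) → Str2 A
  | [] => empty
  | S :: rest => rest.foldl hcat S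

/-- Vertical concatenation `S₁ ⊟ S₂ ⊟ ⋯ ⊟ S_k` of a list of 2D strings. -/
def vcatList : List (Str2 A) → Str2 A
  | [] => empty
  | S :: rest => rest.foldl vcat S

/-- The transpose. -/
def transpose (S : Str2 A) : Str2 A := mk' S.w S.h fun i j => S.f j i

/-- The `i`-th row (0-indexed) of `S`, as a `1 × w` 2D string. -/
def rowStr (S : Str2 A) (i : ℕ) : Str2 A := mk' 1 S.w fun _ j => S.f i j

/-- The `j`-th column (0-indexed) of `S`, read top to bottom, as a `1 × h` 2D string. -/
def colStr (S : Str2 A) (j : ℕ) : Str2 A := mk' 1 S.h fun _ i => S.f i j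

/-- A height-one 2D string, viewed as an ordinary (1D) string, i.e. a list. -/
def toList (S : Str2 A) : List A := (List.range S.w).filterMap fun j => S.f 0 j

/-- An ordinary (1D) string viewed as a height-one 2D string. -/
def ofList (l : List A) : Str2 A := mk' 1 l.length fun _ j => l[j]?

/-- The concatenation of all rows of `S` from top to bottom,
as a height-one 2D string of width `h * w`. -/
def rowsConcat (S : Str2 A) : Str2 A :=
  mk' 1 (S.h * S.w) fun _ j => S.f (j / S.w) (j % S.w)

end Str2

/-- The right-hand side of a production of a 2D SLP: a single character,
a horizontal concatenation of two nonterminals, or a vertical concatenation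
of two nonterminals. -/
inductive Rhs2 (A V : Type) where
  | chr : A → Rhs2 A V
  | horiz : V → V → Rhs2 A V
  | vert : V → V → Rhs2 A V

/-- A two-dimensional straight-line program over the alphabet `A`:
a finite set `V` of nonterminals, a starting nonterminal, and a production
map `rhs`.  Acyclicity of the relation "appears in the right-hand side of"
is witnessed by the function `rank`, which strictly decreases from the
left-hand side of each production to the nonterminals on its right-hand side. -/
structure SLP2 (A : Type) where
  V : Type
  fintypeV : Fintype V
  start : V
  rhs : V → Rhs2 A V
  rank : V → ℕ
  rank_horiz : ∀ {X Y Z}, rhs X = Rhs2.horiz Y Z → rank Y < rank X ∧ rank Z < rank X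
  rank_vert : ∀ {X Y Z}, rhs X = Rhs2.vert Y Z → rank Y < rank X ∧ rank Z < rank X

namespace SLP2

variable {A : Type}

/-- Fuel-based evaluation of expansions (with enough fuel it computes the
unique expansion of a nonterminal). -/
def expAux (G : SLP2 A) : ℕ → G.V → Str2 A
  | 0, _ => Str2.empty
  | n + 1, X =>
    match G.rhs X with
    | .chr a => Str2.single a
    | .horiz Y Z => (G.expAux n Y).hcat (G.expAux n Z)
    | .vert Y Z => (G.expAux n Y).vcat (G.expAux n Z)

/-- The (unique) expansion of a nonterminal `X`: since `rank` strictly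
decreases along productions, fuel `rank X + 1` always suffices. -/
def expNT (G : SLP2 A) (X : G.V) : Str2 A := G.expAux (G.rank X + 1) X

/-- The 2D string derived by the SLP. -/
def exp (G : SLP2 A) : Str2 A := G.expNT G.start

/-- Fuel-based computation of the depth of the derivation tree below a
nonterminal (a node labeled by a production `chr σ` has a single leaf child). -/
def depthAux (G : SLP2 A) : ℕ → G.V → ℕ
  | 0, _ => 0
  | n + 1, X =>
    match G.rhs X with
    | .chr _ => 1
    | .horiz Y Z => 1 + max (G.depthAux n Y) (G.depthAux n Z)
    | .vert Y Z => 1 + max (G.depthAux n Y) (G.depthAux n Z)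

/-- The depth of the derivation tree below nonterminal `X`. -/
def depthNT (G : SLP2 A) (X : G.V) : ℕ := G.depthAux (G.rank X + 1) X

/-- The depth of the SLP: the depth of its derivation tree. -/
def depth (G : SLP2 A) : ℕ := G.depthNT G.start

/-- The size of the SLP: the total number of symbols on the right-hand
sides of all productions. -/
def size (G : SLP2 A) : ℕ :=
  letI := G.fintypeV
  ∑ X : G.V, (match G.rhs X with
    | .chr _ => 1
    | .horiz _ _ => 2
    | .vert _ _ => 2)

/-- The number of nonterminals of the SLP. -/
def numNT (G : SLP2 A) : ℕ :=
  letI := G.fintypeV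
  Fintype.card G.V

/-- Well-formedness: dimensions match in every production, i.e. in a
horizontal concatenation both arguments have equal heights, and in a
vertical concatenation both arguments have equal widths. -/
def WF (G : SLP2 A) : Prop :=
  ∀ X : G.V,
    match G.rhs X with
    | .chr _ => True
    | .horiz Y Z => (G.expNT Y).h = (G.expNT Z).h
    | .vert Y Z => (G.expNT Y).w = (G.expNT Z).w

/-- A 1D SLP: a 2D SLP that uses only horizontal concatenations and derives
a string of height `1`. -/
def OneDim (G : SLP2 A) : Prop :=
  (∀ X Y Z, G.rhs X ≠ Rhs2.vert Y Z) ∧ (G.exp).h = 1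

end SLP2

/-!
Cut the shared parse trees of a family of strings into heavy chains, along which neither the number
of occurrences of a node nor its length changes its order of magnitude (symmetric centroid
decomposition). Each chain is derived by a biased balanced tree along a coordinate that combines
occurrences and length. The depth spent on entering a chain telescopes in the number of occurrences
and the depth spent on leaving it telescopes in the length, so the total depth is logarithmic in the
total length of the family, while the number of new strings is linear in the number of nodes.

The rows of the expansions of the nonterminals of height at most `N` are at most `N` times as many
as the nonterminals, and every such row of length at least two is a concatenation of two others. So
the rows of the text can be balanced simultaneously and then stacked by a balanced tree.
-/

section Derivation

variable {A : Type*}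

/-- `DerivableIn P d s`: the string `s` is empty or has a binary derivation tree of depth at most
`d` all of whose nodes are strings of `P`. Letting the empty string be derivable for free avoids
case distinctions on empty contexts. -/
inductive DerivableIn (P : Set (List A)) : ℕ → List A → Prop
  | nil (d : ℕ) : DerivableIn P d []
  | singleton {d : ℕ} {a : A} : [a] ∈ P → DerivableIn P (d + 1) [a]
  | append {d : ℕ} {x y : List A} :
      DerivableIn P d x → DerivableIn P d y → x ++ y ∈ P → DerivableIn P (d + 1) (x ++ y)

theorem DerivableIn.mono {P : Set (List A)} {d d' : ℕ} {s : List A} (h : DerivableIn P d s)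
    (hd : d ≤ d') : DerivableIn P d' s := by
  induction h generalizing d' with
  | nil => exact .nil d'
  | singleton ha =>
    obtain ⟨e, rfl⟩ := Nat.exists_eq_add_of_le' (Nat.one_le_of_lt hd)
    exact .singleton ha
  | append _ _ hP ihx ihy =>
    obtain ⟨e, rfl⟩ := Nat.exists_eq_add_of_le' (Nat.one_le_of_lt hd)
    exact .append (ihx (by lia)) (ihy (by lia)) hP

open Classical in
/-- The strings by which one derives `X ++ u ++ Y` from its middle part `u`. -/
noncomputable def wrapping (X u Y : List A) : Finset (List A) := {X, Y, X ++ u, X ++ u ++ Y}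

theorem card_wrapping_le (X u Y : List A) : (wrapping X u Y).card ≤ 4 :=
  open Classical in Finset.card_le_four

theorem DerivableIn.wrap {P : Set (List A)} {X u Y : List A} {d : ℕ}
    (hP : ↑(wrapping X u Y) ⊆ P) (hX : DerivableIn P d X) (hu : DerivableIn P d u)
    (hY : DerivableIn P d Y) : DerivableIn P (d + 2) (X ++ u ++ Y) :=
  .append (.append hX hu (hP (by simp [wrapping]))) (hY.mono d.le_succ) (hP (by simp [wrapping]))

end Derivation

section Spine

variable {A : Type*} {v L R : ℕ → List A} {x α : ℕ → ℕ} {l m r s : ℕ}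

/-- A chain of strings `v l, …, v r`, each obtained from the next one by adding contexts `L i` and
`R i`, whose `i`-th step has weight at least `2 ^ α i`; the weights are encoded as the increments
of the coordinate `x`. -/
structure Spine (v L R : ℕ → List A) (x α : ℕ → ℕ) (l r : ℕ) : Prop where
  eq_append : ∀ i, l ≤ i → i < r → v i = L i ++ v (i + 1) ++ R i
  add_two_pow_le : ∀ i, l ≤ i → i < r → x i + 2 ^ α i ≤ x (i + 1)

namespace Spine

theorem restrict {l' r' : ℕ} (h : Spine v L R x α l r) (hl : l ≤ l') (hr : r' ≤ r) :
    Spine v L R x α l' r' where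
  eq_append i hi hi' := h.eq_append i (hl.trans hi) (hi'.trans_le hr)
  add_two_pow_le i hi hi' := h.add_two_pow_le i (hl.trans hi) (hi'.trans_le hr)

theorem lt_succ (h : Spine v L R x α l r) {i : ℕ} (hl : l ≤ i) (hr : i < r) : x i < x (i + 1) :=
  (Nat.lt_add_of_pos_right (Nat.two_pow_pos _)).trans_le (h.add_two_pow_le i hl hr)

theorem monotoneOn (h : Spine v L R x α l r) : MonotoneOn x (Set.Icc l r) :=
  monotoneOn_of_le_succ Set.ordConnected_Icc fun _ _ hi hi' =>
    (h.lt_succ hi.1 (Nat.lt_of_succ_le hi'.2)).le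

theorem exponent_le (h : Spine v L R x α l r) (hx : x r < x l + 2 ^ (s + 1)) {i β : ℕ}
    (hl : l ≤ i) (hr : i < r) (hβ : x i + 2 ^ β ≤ x (i + 1)) : β ≤ s := by
  have hlr : l ≤ r := hl.trans hr.le
  have hli : x l ≤ x i := h.monotoneOn ⟨le_rfl, hlr⟩ ⟨hl, hr.le⟩ hl
  have hir : x (i + 1) ≤ x r := h.monotoneOn ⟨hl.trans i.le_succ, hr⟩ ⟨hlr, le_rfl⟩ hr
  exact Nat.lt_succ_iff.1 ((Nat.pow_lt_pow_iff_right Nat.one_lt_two).1 (by lia))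

end Spine

theorem exists_crossing {c : ℕ} (hlr : l ≤ r) (hl : x l < c) (hr : c ≤ x r) :
    ∃ m, l ≤ m ∧ m < r ∧ x m < c ∧ c ≤ x (m + 1) := by
  induction r, hlr using Nat.le_induction with
  | base => exact absurd hr hl.not_ge
  | succ n hn ih =>
    by_cases h : c ≤ x n
    · obtain ⟨m, hlm, hmn, hm⟩ := ih h
      exact ⟨m, hlm, hmn.trans n.lt_succ_self, hm⟩
    · exact ⟨n, hn, n.lt_succ_self, not_le.1 h, hr⟩

/-- A biased balanced derivation of a spine of total weight less than `2 ^ s`, with contexts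
derivable in depth `E`: `CL` and `CR` are the products of the contexts, and `v i` is obtained from
`v r` within an extra depth proportional to `s - β`, where `2 ^ β` is a lower bound on the weight
of the step entering `v i`. -/
structure SpineBalanced (P : Set (List A)) (v : ℕ → List A) (x : ℕ → ℕ) (E l r s : ℕ)
    (CL CR : List A) : Prop where
  left : DerivableIn P (E + 4 * s + 4) CL
  right : DerivableIn P (E + 4 * s + 4) CR
  node : ∀ F, E + 4 * s ≤ F → DerivableIn P F (v r) → ∀ i, l ≤ i → i ≤ r → ∀ β ≤ s,
    (l < i → x (i - 1) + 2 ^ β ≤ x i) → DerivableIn P (F + 4 * (s - β) + 4) (v i)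

variable {P : Set (List A)} {E : ℕ} {CL CR CL₁ CR₁ CL₂ CR₂ : List A}

theorem SpineBalanced.refl (l s : ℕ) : SpineBalanced P v x E l l s [] [] where
  left := .nil _
  right := .nil _
  node F _ hv i hl hr β _ _ := by
    obtain rfl : i = l := le_antisymm hr hl
    exact hv.mono (by lia)

theorem SpineBalanced.succ (h : Spine v L R x α l r) (hx : x r < x l + 2 ^ (s + 1))
    (hs : SpineBalanced P v x E l r s CL CR) : SpineBalanced P v x E l r (s + 1) CL CR where
  left := hs.left.mono (by lia)
  right := hs.right.mono (by lia)
  node F hF hv i hl hr β hβ hxi := by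
    rcases hβ.lt_or_eq with hβs | rfl
    · exact (hs.node F (by lia) hv i hl hr β (by lia) hxi).mono (by lia)
    · have hil : i = l := by
        by_contra hne
        have hlt : l < i := lt_of_le_of_ne hl (Ne.symm hne)
        have := h.exponent_le hx (i := i - 1) (β := s + 1) (by lia) (by lia)
          (by simpa only [Nat.sub_add_cancel (Nat.one_le_of_lt hlt)] using hxi hlt)
        lia
      exact (hs.node F (by lia) hv i hl hr s le_rfl (by lia)).mono (by lia)

theorem SpineBalanced.glue (h : Spine v L R x α l r) (hx : x r < x l + 2 ^ (s + 1))
    (hlm : l ≤ m) (hmr : m < r) (hL : DerivableIn P (E + 4 * α m) (L m))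
    (hR : DerivableIn P (E + 4 * α m) (R m))
    (h₁ : SpineBalanced P v x E l m s CL₁ CR₁) (hv₁ : v l = CL₁ ++ v m ++ CR₁)
    (h₂ : SpineBalanced P v x E (m + 1) r s CL₂ CR₂) (hv₂ : v (m + 1) = CL₂ ++ v r ++ CR₂)
    (hPm : ↑(wrapping (L m ++ CL₂) (v r) (CR₂ ++ R m)) ⊆ P)
    (hPl : ↑(wrapping (CL₁ ++ (L m ++ CL₂)) (v r) (CR₂ ++ R m ++ CR₁)) ⊆ P) :
    SpineBalanced P v x E l r (s + 1) (CL₁ ++ (L m ++ CL₂)) (CR₂ ++ R m ++ CR₁) := by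
  have hαs : α m ≤ s := h.exponent_le hx hlm hmr (h.add_two_pow_le m hlm hmr)
  have hLm : DerivableIn P (E + 4 * s + 5) (L m ++ CL₂) :=
    .append (hL.mono (by lia)) h₂.left (hPm (by simp [wrapping]))
  have hRm : DerivableIn P (E + 4 * s + 5) (CR₂ ++ R m) :=
    .append h₂.right (hR.mono (by lia)) (hPm (by simp [wrapping]))
  have hLl : DerivableIn P (E + 4 * s + 6) (CL₁ ++ (L m ++ CL₂)) :=
    .append (h₁.left.mono (by lia)) hLm (hPl (by simp [wrapping]))
  have hRl : DerivableIn P (E + 4 * s + 6) (CR₂ ++ R m ++ CR₁) :=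
    .append hRm (h₁.right.mono (by lia)) (hPl (by simp [wrapping]))
  refine ⟨hLl.mono (by lia), hRl.mono (by lia), fun F hF hv i hl hr β hβ hxi => ?_⟩
  have hvm : DerivableIn P (F + 3) (v m) := by
    rw [show v m = L m ++ CL₂ ++ v r ++ (CR₂ ++ R m) by
      simp only [h.eq_append m hlm hmr, hv₂, List.append_assoc]]
    exact .wrap (d := F + 1) hPm (hLm.mono (by lia)) (hv.mono (by lia)) (hRm.mono (by lia))
  have hvl : DerivableIn P (F + 4) (v l) := by
    rw [show v l = CL₁ ++ (L m ++ CL₂) ++ v r ++ (CR₂ ++ R m ++ CR₁) by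
      simp only [hv₁, h.eq_append m hlm hmr, hv₂, List.append_assoc]]
    exact .wrap (d := F + 2) hPl (hLl.mono (by lia)) (hv.mono (by lia)) (hRl.mono (by lia))
  rcases hl.eq_or_lt with rfl | hli
  · exact hvl.mono (by lia)
  have hβs : β ≤ s := h.exponent_le hx (i := i - 1) (by lia) (by lia)
    (by simpa only [Nat.sub_add_cancel (Nat.one_le_of_lt hli)] using hxi hli)
  rcases le_or_gt i m with him | hmi
  · exact (h₁.node (F + 3) (by lia) hvm i hl him β hβs hxi).mono (by lia)
  · exact (h₂.node F (by lia) hv i hmi hr β hβs fun _ => hxi hli).mono (by lia)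

/-- A biased balanced derivation of a spine exists over a set of `P₀` strings of cardinality
linear in the length of the spine; neither `P₀` nor the contexts depend on `E`. -/
def Spine.HasBalancing (v L R : ℕ → List A) (x α : ℕ → ℕ) (l r s : ℕ) : Prop :=
  ∃ (P₀ : Finset (List A)) (CL CR : List A), P₀.card ≤ 8 * (r - l) ∧ v l = CL ++ v r ++ CR ∧
    ∀ P : Set (List A), ↑P₀ ⊆ P → ∀ E,
      (∀ j, l ≤ j → j < r →
        DerivableIn P (E + 4 * α j) (L j) ∧ DerivableIn P (E + 4 * α j) (R j)) →
      SpineBalanced P v x E l r s CL CR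

open Classical in
theorem Spine.HasBalancing.glue (h : Spine v L R x α l r) (hx : x r < x l + 2 ^ (s + 1))
    (hlm : l ≤ m) (hmr : m < r) (h₁ : HasBalancing v L R x α l m s)
    (h₂ : HasBalancing v L R x α (m + 1) r s) : HasBalancing v L R x α l r (s + 1) := by
  obtain ⟨P₁, CL₁, CR₁, hcard₁, hv₁, hb₁⟩ := h₁
  obtain ⟨P₂, CL₂, CR₂, hcard₂, hv₂, hb₂⟩ := h₂
  let Wm := wrapping (L m ++ CL₂) (v r) (CR₂ ++ R m)
  let Wl := wrapping (CL₁ ++ (L m ++ CL₂)) (v r) (CR₂ ++ R m ++ CR₁)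
  refine ⟨P₁ ∪ P₂ ∪ (Wm ∪ Wl), CL₁ ++ (L m ++ CL₂), CR₂ ++ R m ++ CR₁, ?_, ?_, ?_⟩
  · have hm : Wm.card ≤ 4 := card_wrapping_le ..
    have hl : Wl.card ≤ 4 := card_wrapping_le ..
    have := Finset.card_union_le (P₁ ∪ P₂) (Wm ∪ Wl)
    have := Finset.card_union_le P₁ P₂
    have := Finset.card_union_le Wm Wl
    lia
  · simp only [hv₁, h.eq_append m hlm hmr, hv₂, List.append_assoc]
  · intro P hP E hE
    simp only [Finset.coe_union, Set.union_subset_iff] at hP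
    obtain ⟨⟨hP₁, hP₂⟩, hPm, hPl⟩ := hP
    exact .glue h hx hlm hmr (hE m hlm hmr).1 (hE m hlm hmr).2
      (hb₁ P hP₁ E fun j hj hj' => hE j hj (hj'.trans hmr)) hv₁
      (hb₂ P hP₂ E fun j hj hj' => hE j (hlm.trans (m.le_succ.trans hj)) hj') hv₂ hPm hPl

theorem Spine.hasBalancing (h : Spine v L R x α l r) (hlr : l ≤ r) (hx : x r < x l + 2 ^ s) :
    HasBalancing v L R x α l r s := by
  induction s generalizing l r with
  | zero =>
    obtain rfl : l = r := by
      by_contra hne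
      have hlt : l < r := lt_of_le_of_ne hlr hne
      have := h.lt_succ le_rfl hlt
      have := h.monotoneOn ⟨l.le_succ, hlt⟩ ⟨hlr, le_rfl⟩ hlt
      lia
    exact ⟨∅, [], [], by simp, by simp, fun _ _ _ _ => .refl l 0⟩
  | succ s ih =>
    by_cases hxs : x r < x l + 2 ^ s
    · obtain ⟨P₀, CL, CR, hcard, hv, hb⟩ := ih h hlr hxs
      exact ⟨P₀, CL, CR, hcard, hv, fun P hP E hE => (hb P hP E hE).succ h hx⟩
    obtain ⟨m, hlm, hmr, hm, hm'⟩ := exists_crossing (x := x) (c := x l + 2 ^ s) hlr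
      (Nat.lt_add_of_pos_right (Nat.two_pow_pos s)) (not_lt.1 hxs)
    exact .glue h hx hlm hmr (ih (h.restrict le_rfl hmr.le) hlm hm)
      (ih (h.restrict (hlm.trans m.le_succ) le_rfl) hmr (by lia))

end Spine

section Splitting

variable {A : Type*}

/-- A choice, for every string of length at least two, of a position at which it is cut into two
nonempty parts. It determines a binary parse tree of every string. -/
structure Splitting (A : Type*) where
  cut : List A → ℕ
  cut_pos : ∀ q, 1 < q.length → 0 < cut q
  cut_lt : ∀ q, 1 < q.length → cut q < q.length

namespace Splitting

variable (S : Splitting A) {u v w r : List A}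

/-- The left child of a string. -/
def left (q : List A) : List A := q.take (S.cut q)

/-- The right child of a string. -/
def right (q : List A) : List A := q.drop (S.cut q)

theorem left_append_right (q : List A) : S.left q ++ S.right q = q := List.take_append_drop _ q

theorem length_left_add_length_right (q : List A) :
    (S.left q).length + (S.right q).length = q.length := by
  rw [← List.length_append, left_append_right]

/-- `v` is one of the two children of `u` in the parse trees. -/
def IsChild (u v : List A) : Prop := 1 < u.length ∧ (v = S.left u ∨ v = S.right u)

theorem isChild_left (hu : 1 < u.length) : S.IsChild u (S.left u) := ⟨hu, .inl rfl⟩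

theorem isChild_right (hu : 1 < u.length) : S.IsChild u (S.right u) := ⟨hu, .inr rfl⟩

variable {S}

theorem IsChild.length_pos (h : S.IsChild u v) : 0 < v.length := by
  obtain ⟨hu, rfl | rfl⟩ := h
  · simpa only [left, List.length_take, lt_min_iff] using ⟨S.cut_pos u hu, by lia⟩
  · simpa only [right, List.length_drop, Nat.sub_pos_iff_lt] using S.cut_lt u hu

theorem IsChild.exists_sibling (h : S.IsChild u v) : ∃ w, S.IsChild u w ∧
    u.length = v.length + w.length ∧ (u = v ++ w ∨ u = w ++ v) := by
  have hlen := S.length_left_add_length_right u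
  have happend := (S.left_append_right u).symm
  obtain ⟨hu, rfl | rfl⟩ := h
  · exact ⟨_, S.isChild_right hu, hlen.symm, .inl happend⟩
  · exact ⟨_, S.isChild_left hu, by lia, .inr happend⟩

theorem IsChild.length_lt (h : S.IsChild u v) : v.length < u.length := by
  obtain ⟨w, hw, hlen, -⟩ := h.exists_sibling
  have := hw.length_pos
  lia

variable (S)

open Classical in
/-- The number of occurrences of `v` as a node of the parse tree of `u`. -/
noncomputable def occ (u v : List A) : ℕ :=
  (if u = v then 1 else 0) + if 1 < u.length then occ (S.left u) v + occ (S.right u) v else 0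
termination_by u.length
decreasing_by
  · exact (S.isChild_left ‹_›).length_lt
  · exact (S.isChild_right ‹_›).length_lt

theorem occ_eq_zero_of_length_lt (h : u.length < v.length) : S.occ u v = 0 := by
  induction hn : u.length using Nat.strong_induction_on generalizing u with
  | _ n ih =>
    have hne : u ≠ v := by rintro rfl; exact lt_irrefl _ h
    rw [occ, if_neg hne, zero_add]
    split_ifs with hu
    · have hl := (S.isChild_left hu).length_lt
      have hr := (S.isChild_right hu).length_lt
      rw [ih _ (hn ▸ hl) (hl.trans h) rfl, ih _ (hn ▸ hr) (hr.trans h) rfl]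
    · rfl

theorem occ_self (v : List A) : S.occ v v = 1 := by
  rw [occ, if_pos rfl]
  split_ifs with hv
  · rw [S.occ_eq_zero_of_length_lt (S.isChild_left hv).length_lt,
      S.occ_eq_zero_of_length_lt (S.isChild_right hv).length_lt]
  · rfl

open Classical in
theorem occ_of_one_lt_length (hu : 1 < u.length) (v : List A) :
    S.occ u v = (if u = v then 1 else 0) + (S.occ (S.left u) v + S.occ (S.right u) v) := by
  rw [occ, if_pos hu]

theorem occ_mul_length_le (u v : List A) : S.occ u v * v.length ≤ u.length := by
  induction hn : u.length using Nat.strong_induction_on generalizing u with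
  | _ n ih =>
    rcases eq_or_ne u v with rfl | hne
    · rw [S.occ_self, one_mul, hn]
    by_cases hu : 1 < u.length
    · rw [S.occ_of_one_lt_length hu, if_neg hne, zero_add, add_mul, ← hn,
        ← S.length_left_add_length_right u]
      exact add_le_add (ih _ (hn ▸ (S.isChild_left hu).length_lt) _ rfl)
        (ih _ (hn ▸ (S.isChild_right hu).length_lt) _ rfl)
    · rw [occ, if_neg hne, if_neg hu, zero_add, zero_mul]
      exact n.zero_le

theorem mem_of_occ_pos {Q : Set (List A)} (hQ : ∀ u ∈ Q, ∀ w, S.IsChild u w → w ∈ Q)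
    (hu : u ∈ Q) (huv : 0 < S.occ u v) : v ∈ Q := by
  induction hn : u.length using Nat.strong_induction_on generalizing u with
  | _ n ih =>
    rcases eq_or_ne u v with rfl | hne
    · exact hu
    by_cases hlen : 1 < u.length
    · rw [S.occ_of_one_lt_length hlen, if_neg hne, zero_add, Nat.add_pos_iff_pos_or_pos] at huv
      have hl := S.isChild_left hlen
      have hr := S.isChild_right hlen
      exact huv.elim (fun h => ih _ (hn ▸ hl.length_lt) (hQ u hu _ hl) h rfl)
        fun h => ih _ (hn ▸ hr.length_lt) (hQ u hu _ hr) h rfl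
    · rw [occ, if_neg hne, if_neg hlen] at huv
      exact absurd huv (lt_irrefl 0)

theorem sum_occ_eq_zero {U : Finset (List A)} (hU : ∀ u ∈ U, S.IsChild u v)
    (hr : r.length ≤ v.length) : ∑ u ∈ U, S.occ r u = 0 :=
  Finset.sum_eq_zero fun u hu => S.occ_eq_zero_of_length_lt (hr.trans_lt (hU u hu).length_lt)

open Classical in
theorem sum_occ_of_one_lt_length (hr : 1 < r.length) (U : Finset (List A)) :
    ∑ u ∈ U, S.occ r u = (if r ∈ U then 1 else 0) +
      (∑ u ∈ U, S.occ (S.left r) u + ∑ u ∈ U, S.occ (S.right r) u) := by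
  simp only [S.occ_of_one_lt_length hr, Finset.sum_add_distrib, Finset.sum_ite_eq]

theorem sum_occ_le_occ {U : Finset (List A)} (hU : ∀ u ∈ U, S.IsChild u v) (r : List A) :
    ∑ u ∈ U, S.occ r u ≤ S.occ r v := by
  induction hn : r.length using Nat.strong_induction_on generalizing r with
  | _ n ih =>
    by_cases hrv : r.length ≤ v.length
    · exact (S.sum_occ_eq_zero hU hrv).trans_le (Nat.zero_le _)
    by_cases hr : 1 < r.length
    swap
    · exact (Finset.sum_eq_zero fun u hu => S.occ_eq_zero_of_length_lt
        ((not_lt.1 hr).trans_lt (hU u hu).1)).trans_le (Nat.zero_le _)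
    have ihl := ih _ (hn ▸ (S.isChild_left hr).length_lt) (S.left r) rfl
    have ihr := ih _ (hn ▸ (S.isChild_right hr).length_lt) (S.right r) rfl
    have hne : r ≠ v := by rintro rfl; exact hrv le_rfl
    rw [S.sum_occ_of_one_lt_length hr, S.occ_of_one_lt_length hr, if_neg hne]
    split_ifs with hrU
    · -- The tree of `r` itself is charged to the occurrence of `v` as a child of its root.
      obtain ⟨-, hv | hv⟩ := hU r hrU
      · have hzero := S.sum_occ_eq_zero hU (r := S.left r) (by rw [hv])
        have hself : S.occ (S.left r) v = 1 := hv ▸ S.occ_self v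
        lia
      · have hzero := S.sum_occ_eq_zero hU (r := S.right r) (by rw [hv])
        have hself : S.occ (S.right r) v = 1 := hv ▸ S.occ_self v
        lia
    · lia

end Splitting

theorem exists_splitting {Q : Set (List A)}
    (hQ : ∀ q ∈ Q, 1 < q.length → ∃ y ∈ Q, ∃ z ∈ Q, y ≠ [] ∧ z ≠ [] ∧ q = y ++ z) :
    ∃ S : Splitting A, ∀ u ∈ Q, ∀ w, S.IsChild u w → w ∈ Q := by
  have hcut : ∀ q : List A, ∃ k, 1 < q.length → 0 < k ∧ k < q.length ∧
      (q ∈ Q → q.take k ∈ Q ∧ q.drop k ∈ Q) := by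
    intro q
    by_cases hq : q ∈ Q ∧ 1 < q.length
    · obtain ⟨y, hy, z, hz, hy₀, hz₀, rfl⟩ := hQ q hq.1 hq.2
      refine ⟨y.length, fun _ => ⟨List.length_pos_of_ne_nil hy₀, ?_, fun _ => ?_⟩⟩
      · rw [List.length_append]
        exact Nat.lt_add_of_pos_right (List.length_pos_of_ne_nil hz₀)
      · rw [List.take_left, List.drop_left]
        exact ⟨hy, hz⟩
    · exact ⟨1, fun hlen => ⟨Nat.one_pos, hlen, fun hqQ => absurd ⟨hqQ, hlen⟩ hq⟩⟩
  choose cut hcut using hcut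
  refine ⟨⟨cut, fun q hq => (hcut q hq).1, fun q hq => (hcut q hq).2.1⟩, fun u hu w hw => ?_⟩
  obtain ⟨hlen, rfl | rfl⟩ := hw
  · exact ((hcut u hlen).2.2 hu).1
  · exact ((hcut u hlen).2.2 hu).2

end Splitting

section ParseForest

variable {A : Type*}

theorem lt_add_of_log_two_eq {a b c : ℕ} (ha : a ≠ 0) (hb : b ≠ 0) (hac : Nat.log 2 a = Nat.log 2 c)
    (hbc : Nat.log 2 b = Nat.log 2 c) : c < a + b :=
  calc c < 2 ^ (Nat.log 2 c + 1) := Nat.lt_pow_succ_log_self Nat.one_lt_two c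
    _ = 2 ^ Nat.log 2 a + 2 ^ Nat.log 2 b := by rw [hac, hbc, pow_succ, mul_two]
    _ ≤ a + b := add_le_add (Nat.pow_log_le_self 2 ha) (Nat.pow_log_le_self 2 hb)

/-- The parse trees of finitely many strings, the roots, of total length less than
`2 ^ (logBound + 1)`. -/
structure ParseForest (A : Type*) extends Splitting A where
  roots : Finset (List A)
  logBound : ℕ
  sum_length_lt : ∑ r ∈ roots, r.length < 2 ^ (logBound + 1)

namespace ParseForest

variable (G : ParseForest A) {u u' v w r : List A}

/-- The number of occurrences of `v` in the forest. -/
noncomputable def weight (v : List A) : ℕ := ∑ r ∈ G.roots, G.occ r v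

/-- `v` is nonempty and occurs in the forest. -/
structure IsNode (v : List A) : Prop where
  ne_nil : v ≠ []
  weight_pos : 0 < G.weight v

variable {G}

theorem IsNode.length_pos (h : G.IsNode v) : 0 < v.length := List.length_pos_of_ne_nil h.ne_nil

theorem weight_mul_length_lt (v : List A) : G.weight v * v.length < 2 ^ (G.logBound + 1) := by
  rw [weight, Finset.sum_mul]
  exact (Finset.sum_le_sum fun r _ => G.occ_mul_length_le r v).trans_lt G.sum_length_lt

theorem IsNode.log_weight_le (h : G.IsNode v) : Nat.log 2 (G.weight v) ≤ G.logBound :=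
  Nat.lt_succ_iff.1 <| Nat.log_lt_of_lt_pow h.weight_pos.ne' <|
    (Nat.le_mul_of_pos_right _ h.length_pos).trans_lt (weight_mul_length_lt v)

theorem IsNode.log_length_le (h : G.IsNode v) : Nat.log 2 v.length ≤ G.logBound :=
  Nat.lt_succ_iff.1 <| Nat.log_lt_of_lt_pow h.length_pos.ne' <|
    (Nat.le_mul_of_pos_left _ h.weight_pos).trans_lt (weight_mul_length_lt v)

theorem sum_weight_le_weight {U : Finset (List A)} (hU : ∀ u ∈ U, G.IsChild u v) :
    ∑ u ∈ U, G.weight u ≤ G.weight v := by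
  simp only [weight]
  rw [Finset.sum_comm]
  exact Finset.sum_le_sum fun r _ => G.sum_occ_le_occ hU r

theorem weight_le_of_isChild (h : G.IsChild u v) : G.weight u ≤ G.weight v := by
  simpa only [Finset.sum_singleton] using
    sum_weight_le_weight (U := {u}) (by simpa only [Finset.mem_singleton, forall_eq] using h)

theorem weight_add_weight_le (h : G.IsChild u v) (h' : G.IsChild u' v) (hne : u ≠ u') :
    G.weight u + G.weight u' ≤ G.weight v := by
  classical
  rw [← Finset.sum_pair hne]
  exact sum_weight_le_weight (by simp [h, h'])

theorem weight_lt_of_mem_roots (hv : v ∈ G.roots) (h : G.IsChild u v) :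
    G.weight u < G.weight v := by
  refine Finset.sum_lt_sum (fun r _ => ?_) ⟨v, hv, ?_⟩
  · simpa only [Finset.sum_singleton] using
      G.sum_occ_le_occ (U := {u}) (by simpa only [Finset.mem_singleton, forall_eq] using h) r
  · rw [G.occ_eq_zero_of_length_lt h.length_lt, G.occ_self]
    exact Nat.one_pos

theorem weight_pos_of_mem_roots (hv : v ∈ G.roots) : 0 < G.weight v :=
  Nat.one_pos.trans_le <| (G.occ_self v).symm.trans_le <|
    Finset.single_le_sum (f := fun r => G.occ r v) (fun _ _ => Nat.zero_le _) hv

theorem IsNode.of_isChild (hu : G.IsNode u) (h : G.IsChild u v) : G.IsNode v where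
  ne_nil := List.ne_nil_of_length_pos h.length_pos
  weight_pos := hu.weight_pos.trans_le (weight_le_of_isChild h)

variable (G)

/-- A parent–child pair in which neither the weight nor the length changes its order of
magnitude. The heavy pairs form vertex-disjoint chains. -/
structure IsHeavy (u v : List A) : Prop where
  isNode : G.IsNode u
  isChild : G.IsChild u v
  log_weight_eq : Nat.log 2 (G.weight u) = Nat.log 2 (G.weight v)
  log_length_eq : Nat.log 2 u.length = Nat.log 2 v.length

variable {G}

theorem IsHeavy.isNode_child (h : G.IsHeavy u v) : G.IsNode v := h.isNode.of_isChild h.isChild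

theorem IsHeavy.parent_unique (h : G.IsHeavy u v) (h' : G.IsHeavy u' v) : u = u' := by
  by_contra hne
  exact (lt_add_of_log_two_eq h.isNode.weight_pos.ne' h'.isNode.weight_pos.ne'
    h.log_weight_eq h'.log_weight_eq).not_ge (weight_add_weight_le h.isChild h'.isChild hne)

theorem IsHeavy.length_sibling_lt (h : G.IsHeavy u v) (hw : u.length = v.length + w.length) :
    w.length < 2 ^ Nat.log 2 u.length := by
  have hu := Nat.lt_pow_succ_log_self Nat.one_lt_two u.length
  have hv := Nat.pow_log_le_self 2 h.isNode_child.length_pos.ne'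
  rw [← h.log_length_eq] at hv
  lia

theorem IsHeavy.exists_light_sibling (h : G.IsHeavy u v) : ∃ L R w, u = L ++ v ++ R ∧
    (L = [] ∧ R = w ∨ L = w ∧ R = []) ∧ u.length = v.length + w.length ∧
    G.IsChild u w ∧ ¬ G.IsHeavy u w := by
  obtain ⟨w, hw, hlen, happend⟩ := h.isChild.exists_sibling
  have hlight : ¬ G.IsHeavy u w := fun hheavy =>
    (h.length_sibling_lt hlen).not_ge
      (hheavy.log_length_eq ▸ Nat.pow_log_le_self 2 hw.length_pos.ne')
  rcases happend with rfl | rfl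
  · exact ⟨[], w, w, rfl, .inl ⟨rfl, rfl⟩, hlen, hw, hlight⟩
  · exact ⟨w, [], w, (List.append_nil _).symm, .inr ⟨rfl, rfl⟩, hlen, hw, hlight⟩

theorem log_add_log_lt_of_not_isHeavy (hv : G.IsNode v) (hw : G.IsChild v w)
    (hlight : ¬ G.IsHeavy v w) : Nat.log 2 w.length + Nat.log 2 (G.weight v) <
      Nat.log 2 v.length + Nat.log 2 (G.weight w) := by
  have hlen : Nat.log 2 w.length ≤ Nat.log 2 v.length := Nat.log_mono_right hw.length_lt.le
  have hweight : Nat.log 2 (G.weight v) ≤ Nat.log 2 (G.weight w) :=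
    Nat.log_mono_right (weight_le_of_isChild hw)
  have : ¬ (Nat.log 2 (G.weight v) = Nat.log 2 (G.weight w) ∧
    Nat.log 2 v.length = Nat.log 2 w.length) := fun h => hlight ⟨hv, hw, h.1, h.2⟩
  lia

variable (G)

/-- At least `2 ^ τ` of the occurrences of `v` are not below its heavy parent, if there is one. -/
structure IsEntry (v : List A) (τ : ℕ) : Prop where
  le_weight : 2 ^ τ ≤ G.weight v
  weight_add_le : ∀ u, G.IsHeavy u v → G.weight u + 2 ^ τ ≤ G.weight v

/-- The depth reserved for what lies below the heavy chain of `v`. It is constant along the chain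
and drops by at least 16 at a light child. -/
noncomputable def baseDepth (v : List A) : ℕ :=
  16 * (Nat.log 2 v.length + (G.logBound - Nat.log 2 (G.weight v)))

/-- The depth within which a node `v` with `IsEntry v τ` is derived. -/
noncomputable def depthBound (v : List A) (τ : ℕ) : ℕ :=
  G.baseDepth v + 4 * (Nat.log 2 (G.weight v) - τ) + 4 * G.logBound + 12

/-- The strings of `P` suffice to derive `v` within its depth bounds. -/
def HasBound (P : Set (List A)) (v : List A) : Prop :=
  ∀ τ, G.IsEntry v τ → DerivableIn P (G.depthBound v τ) v

variable {G}

theorem IsEntry.le_log_weight {τ : ℕ} (h : G.IsEntry v τ) : τ ≤ Nat.log 2 (G.weight v) :=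
  Nat.le_log_of_pow_le Nat.one_lt_two h.le_weight

theorem isEntry_zero_of_mem_roots (hv : v ∈ G.roots) : G.IsEntry v 0 where
  le_weight := weight_pos_of_mem_roots hv
  weight_add_le _ hu := weight_lt_of_mem_roots hv hu.isChild

theorem isEntry_of_not_isHeavy (hv : G.IsNode v) (hw : G.IsChild v w) (hlight : ¬ G.IsHeavy v w) :
    G.IsEntry w (Nat.log 2 (G.weight v)) where
  le_weight := (Nat.pow_log_le_self 2 hv.weight_pos.ne').trans (weight_le_of_isChild hw)
  weight_add_le u hu := by
    have hne : u ≠ v := by rintro rfl; exact hlight hu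
    exact (Nat.add_le_add_left (Nat.pow_log_le_self 2 hv.weight_pos.ne') _).trans
      (weight_add_weight_le hu.isChild hw hne)

variable {P : Set (List A)}

theorem HasBound.derivableIn_of_not_isHeavy (hb : G.HasBound P w) (hv : G.IsNode v)
    (hw : G.IsChild v w) (hlight : ¬ G.IsHeavy v w) :
    DerivableIn P (G.baseDepth v + 4 * (Nat.log 2 w.length + (G.logBound - Nat.log 2 v.length)))
      w := by
  refine (hb _ (isEntry_of_not_isHeavy hv hw hlight)).mono ?_
  have := log_add_log_lt_of_not_isHeavy hv hw hlight
  have := hv.log_length_le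
  have := (hv.of_isChild hw).log_weight_le
  have : Nat.log 2 (G.weight v) ≤ Nat.log 2 (G.weight w) :=
    Nat.log_mono_right (weight_le_of_isChild hw)
  have : Nat.log 2 w.length ≤ Nat.log 2 v.length := Nat.log_mono_right hw.length_lt.le
  unfold depthBound baseDepth
  lia

theorem IsNode.derivableIn_of_forall_not_isHeavy (hv : G.IsNode v) (hlight : ∀ w, ¬ G.IsHeavy v w)
    (hP : v ∈ P) (hb : ∀ w, G.IsNode w → w.length < v.length → G.HasBound P w) :
    DerivableIn P (G.baseDepth v + 4 * (G.logBound + 1)) v := by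
  by_cases hlen : 1 < v.length
  · have hchild : ∀ w, G.IsChild v w → DerivableIn P (G.baseDepth v + 4 * G.logBound) w := by
      intro w hw
      refine ((hb w (hv.of_isChild hw) hw.length_lt).derivableIn_of_not_isHeavy hv hw
        (hlight w)).mono ?_
      have := hv.log_length_le
      have : Nat.log 2 w.length ≤ Nat.log 2 v.length := Nat.log_mono_right hw.length_lt.le
      lia
    rw [← G.left_append_right v] at hP
    have := DerivableIn.append (hchild _ (G.isChild_left hlen)) (hchild _ (G.isChild_right hlen)) hP
    rw [G.left_append_right v] at this
    exact this.mono (by lia)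
  · obtain ⟨a, rfl⟩ := List.length_eq_one_iff.1 (le_antisymm (not_lt.1 hlen) hv.length_pos)
    exact (DerivableIn.singleton (d := 0) hP).mono (by lia)

variable (G)

/-- A coordinate that increases downwards along heavy chains, both with the weight and with the
decrease of the length. On the nodes it varies by less than `2 ^ (logBound + 1)`. -/
noncomputable def coord (v : List A) : ℕ :=
  G.weight v * 2 ^ (G.logBound - Nat.log 2 (G.weight v)) +
    (2 ^ (Nat.log 2 v.length + 1) - v.length) * 2 ^ (G.logBound - Nat.log 2 v.length)

variable {G}

theorem IsNode.le_coord (hv : G.IsNode v) : 2 ^ G.logBound ≤ G.coord v :=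
  calc 2 ^ G.logBound
      = 2 ^ Nat.log 2 (G.weight v) * 2 ^ (G.logBound - Nat.log 2 (G.weight v)) := by
        rw [← pow_add, Nat.add_sub_cancel' hv.log_weight_le]
    _ ≤ G.weight v * 2 ^ (G.logBound - Nat.log 2 (G.weight v)) :=
        Nat.mul_le_mul_right _ (Nat.pow_log_le_self 2 hv.weight_pos.ne')
    _ ≤ G.coord v := Nat.le_add_right _ _

theorem IsNode.coord_lt (hv : G.IsNode v) : G.coord v < 2 ^ G.logBound + 2 ^ (G.logBound + 1) := by
  have hweight : G.weight v * 2 ^ (G.logBound - Nat.log 2 (G.weight v)) < 2 ^ (G.logBound + 1) :=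
    calc _ < 2 ^ (Nat.log 2 (G.weight v) + 1) * 2 ^ (G.logBound - Nat.log 2 (G.weight v)) :=
          Nat.mul_lt_mul_of_pos_right (Nat.lt_pow_succ_log_self Nat.one_lt_two _)
            (Nat.two_pow_pos _)
      _ = 2 ^ (G.logBound + 1) := by
          rw [← pow_add]
          have := hv.log_weight_le
          congr 1
          lia
  have hlength : (2 ^ (Nat.log 2 v.length + 1) - v.length) *
      2 ^ (G.logBound - Nat.log 2 v.length) ≤ 2 ^ G.logBound :=
    calc _ ≤ 2 ^ Nat.log 2 v.length * 2 ^ (G.logBound - Nat.log 2 v.length) := by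
          have := Nat.pow_log_le_self 2 hv.length_pos.ne'
          exact Nat.mul_le_mul_right _ (by rw [pow_succ]; lia)
      _ = 2 ^ G.logBound := by rw [← pow_add, Nat.add_sub_cancel' hv.log_length_le]
  unfold coord
  lia

theorem IsHeavy.coord_add_le_of_length (h : G.IsHeavy u v) (hw : 0 < w.length)
    (hlen : u.length = v.length + w.length) :
    G.coord u + 2 ^ (Nat.log 2 w.length + (G.logBound - Nat.log 2 u.length)) ≤ G.coord v := by
  have hu := Nat.lt_pow_succ_log_self Nat.one_lt_two u.length
  have hw' := Nat.pow_log_le_self 2 hw.ne'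
  unfold coord
  rw [← h.log_weight_eq, ← h.log_length_eq, pow_add 2 (Nat.log 2 w.length),
    add_assoc, ← add_mul]
  exact add_le_add (Nat.mul_le_mul_right _ (weight_le_of_isChild h.isChild))
    (Nat.mul_le_mul_right _ (by lia))

theorem IsHeavy.coord_add_le_of_weight {τ : ℕ} (h : G.IsHeavy u v)
    (hτ : G.weight u + 2 ^ τ ≤ G.weight v) :
    G.coord u + 2 ^ (τ + (G.logBound - Nat.log 2 (G.weight v))) ≤ G.coord v := by
  have hlen := h.isChild.length_lt
  unfold coord
  rw [h.log_weight_eq, h.log_length_eq, pow_add 2 τ, add_right_comm, ← add_mul]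
  exact add_le_add (Nat.mul_le_mul_right _ hτ) (Nat.mul_le_mul_right _ (by lia))

variable (G)

/-- `v 0, …, v p` is a chain of heavy pairs that cannot be extended downwards. -/
structure IsHeavyChain (v : ℕ → List A) (p : ℕ) : Prop where
  isHeavy : ∀ i < p, G.IsHeavy (v i) (v (i + 1))
  isNode_last : G.IsNode (v p)
  not_isHeavy_last : ∀ w, ¬ G.IsHeavy (v p) w

variable {G} {v : ℕ → List A} {p : ℕ}

namespace IsHeavyChain

theorem isNode (h : G.IsHeavyChain v p) {i : ℕ} (hi : i ≤ p) : G.IsNode (v i) := by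
  rcases hi.eq_or_lt with rfl | hi
  · exact h.isNode_last
  · exact (h.isHeavy i hi).isNode

theorem log_weight_eq (h : G.IsHeavyChain v p) {i : ℕ} (hi : i ≤ p) :
    Nat.log 2 (G.weight (v i)) = Nat.log 2 (G.weight (v 0)) := by
  induction i with
  | zero => rfl
  | succ i ih => exact (h.isHeavy i hi).log_weight_eq.symm.trans (ih (Nat.le_of_succ_le hi))

theorem log_length_eq (h : G.IsHeavyChain v p) {i : ℕ} (hi : i ≤ p) :
    Nat.log 2 (v i).length = Nat.log 2 (v 0).length := by
  induction i with
  | zero => rfl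
  | succ i ih => exact (h.isHeavy i hi).log_length_eq.symm.trans (ih (Nat.le_of_succ_le hi))

theorem baseDepth_eq (h : G.IsHeavyChain v p) {i : ℕ} (hi : i ≤ p) :
    G.baseDepth (v i) = G.baseDepth (v 0) := by
  rw [baseDepth, h.log_weight_eq hi, h.log_length_eq hi, baseDepth]

theorem strictAntiOn_length (h : G.IsHeavyChain v p) :
    StrictAntiOn (fun i => (v i).length) (Set.Iic p) :=
  strictAntiOn_of_succ_lt Set.ordConnected_Iic fun i _ _ hi =>
    (h.isHeavy i (Nat.lt_of_succ_le hi)).isChild.length_lt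

theorem injOn (h : G.IsHeavyChain v p) : Set.InjOn v (Set.Iic p) := fun _ hi _ hj hij =>
  h.strictAntiOn_length.injOn hi hj (congrArg List.length hij)

/-- The contexts of the spine are the light siblings, with weight and depth budget governed by
their length. -/
theorem exists_spine (h : G.IsHeavyChain v p) : ∃ (L R : ℕ → List A) (α : ℕ → ℕ),
    Spine v L R (fun i => G.coord (v i)) α 0 p ∧ ∀ P : Set (List A),
      (∀ w, G.IsNode w → w.length < 2 ^ Nat.log 2 (v 0).length → G.HasBound P w) → ∀ j < p,
        DerivableIn P (G.baseDepth (v 0) + 4 * α j) (L j) ∧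
        DerivableIn P (G.baseDepth (v 0) + 4 * α j) (R j) := by
  have hsibling : ∀ j, ∃ L R w, j < p → v j = L ++ v (j + 1) ++ R ∧
      (L = [] ∧ R = w ∨ L = w ∧ R = []) ∧ (v j).length = (v (j + 1)).length + w.length ∧
      G.IsChild (v j) w ∧ ¬ G.IsHeavy (v j) w := by
    intro j
    by_cases hj : j < p
    · obtain ⟨L, R, w, h⟩ := (h.isHeavy j hj).exists_light_sibling
      exact ⟨L, R, w, fun _ => h⟩
    · exact ⟨[], [], [], fun hj' => absurd hj' hj⟩
  choose L R w hw using hsibling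
  refine ⟨L, R, fun j => Nat.log 2 (w j).length + (G.logBound - Nat.log 2 (v 0).length),
    ⟨fun j _ hj => (hw j hj).1, fun j _ hj => ?_⟩, fun P hP j hj => ?_⟩
  · obtain ⟨-, -, hlen, hchild, -⟩ := hw j hj
    rw [← h.log_length_eq hj.le]
    exact (h.isHeavy j hj).coord_add_le_of_length hchild.length_pos hlen
  · obtain ⟨-, hLR, hlen, hchild, hlight⟩ := hw j hj
    have hlength := h.log_length_eq hj.le
    have hwb := hP (w j) ((h.isNode hj.le).of_isChild hchild)
      (hlength ▸ (h.isHeavy j hj).length_sibling_lt hlen)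
    have hwd := hwb.derivableIn_of_not_isHeavy (h.isNode hj.le) hchild hlight
    rw [h.baseDepth_eq hj.le, hlength] at hwd
    rcases hLR with ⟨hL, hR⟩ | ⟨hL, hR⟩ <;> rw [hL, hR]
    · exact ⟨.nil _, hwd⟩
    · exact ⟨hwd, .nil _⟩

theorem exists_finset_hasBound (h : G.IsHeavyChain v p) :
    ∃ P₀ : Finset (List A), P₀.card ≤ 8 * (p + 1) ∧ ∀ P : Set (List A), ↑P₀ ⊆ P → ∀ i ≤ p,
      (∀ w, G.IsNode w → w.length < (v i).length → G.HasBound P w) → G.HasBound P (v i) := by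
  classical
  obtain ⟨L, R, α, hspine, hcontext⟩ := h.exists_spine
  have hcoord : G.coord (v p) < G.coord (v 0) + 2 ^ (G.logBound + 1) :=
    h.isNode_last.coord_lt.trans_le (Nat.add_le_add_right (h.isNode p.zero_le).le_coord _)
  obtain ⟨P₀, CL, CR, hcard, -, hbal⟩ := hspine.hasBalancing p.zero_le hcoord
  refine ⟨insert (v p) P₀, (Finset.card_insert_le _ _).trans (by lia), fun P hP i hi hb τ hτ => ?_⟩
  rw [Finset.coe_insert, Set.insert_subset_iff] at hP
  have hb' : ∀ w, G.IsNode w → w.length < 2 ^ Nat.log 2 (v 0).length → G.HasBound P w := by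
    refine fun w hw hlt => hb w hw (hlt.trans_le ?_)
    rw [← h.log_length_eq hi]
    exact Nat.pow_log_le_self 2 (h.isNode hi).length_pos.ne'
  have hlast := h.isNode_last.derivableIn_of_forall_not_isHeavy h.not_isHeavy_last hP.1
    fun w hw hlt => hb w hw
      (hlt.trans_le (h.strictAntiOn_length.antitoneOn hi Set.self_mem_Iic hi))
  rw [h.baseDepth_eq le_rfl] at hlast
  have hτw := hτ.le_log_weight
  have hwt := (h.isNode hi).log_weight_le
  refine ((hbal P hP.2 _ fun j _ hj => hcontext P hb' j hj).node _ le_rfl hlast i i.zero_le hi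
    (τ + (G.logBound - Nat.log 2 (G.weight (v i)))) (by lia) fun hi₀ => ?_).mono ?_
  · have hheavy := h.isHeavy (i - 1) (by lia)
    rw [Nat.sub_add_cancel (Nat.one_le_of_lt hi₀)] at hheavy
    exact hheavy.coord_add_le_of_weight (hτ.weight_add_le _ hheavy)
  · rw [depthBound, h.baseDepth_eq hi]
    lia

open Classical in
theorem mem_image_of_isHeavy (h : G.IsHeavyChain v p) {u w : List A} (huw : G.IsHeavy u w)
    (hw : w ∈ (Finset.Iic p).image v) (hu : u.length ≤ (v 0).length) :
    u ∈ (Finset.Iic p).image v := by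
  obtain ⟨i, hi, rfl⟩ := Finset.mem_image.1 hw
  rw [Finset.mem_Iic] at hi
  cases i with
  | zero => exact absurd huw.isChild.length_lt hu.not_gt
  | succ i =>
    exact Finset.mem_image.2 ⟨i, Finset.mem_Iic.2 (Nat.le_of_succ_le hi),
      (h.isHeavy i hi).parent_unique huw⟩

theorem mem_of_closed (h : G.IsHeavyChain v p) {K : Finset (List A)}
    (hK : ∀ u ∈ K, ∀ w, G.IsHeavy u w → w ∈ K) (h₀ : v 0 ∈ K) {i : ℕ} (hi : i ≤ p) :
    v i ∈ K := by
  induction i with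
  | zero => exact h₀
  | succ i ih => exact hK _ (ih (Nat.le_of_succ_le hi)) _ (h.isHeavy i hi)

theorem cons {u : List A} (h : G.IsHeavyChain v p) (hu : G.IsHeavy u (v 0)) :
    G.IsHeavyChain (fun i => i.casesOn u v) (p + 1) where
  isHeavy
    | 0, _ => hu
    | i + 1, hi => h.isHeavy i (Nat.succ_lt_succ_iff.1 hi)
  isNode_last := h.isNode_last
  not_isHeavy_last := h.not_isHeavy_last

end IsHeavyChain

theorem IsNode.exists_isHeavyChain {u : List A} (hu : G.IsNode u) :
    ∃ (v : ℕ → List A) (p : ℕ), v 0 = u ∧ G.IsHeavyChain v p := by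
  induction hn : u.length using Nat.strong_induction_on generalizing u with
  | _ n ih =>
    by_cases hlight : ∀ w, ¬ G.IsHeavy u w
    · exact ⟨fun _ => u, 0, rfl, fun i hi => absurd hi i.not_lt_zero, hu, hlight⟩
    · obtain ⟨w, hw⟩ := not_forall_not.1 hlight
      obtain ⟨v, p, rfl, hv⟩ := ih _ (hn ▸ hw.isChild.length_lt) hw.isNode_child rfl
      exact ⟨_, p + 1, rfl, hv.cons hw⟩

/-- Removing from `K` the heavy chain below a longest string keeps `K` closed under heavy children,
because heavy parents are unique. -/
theorem exists_finset_forall_hasBound (K : Finset (List A)) (hnode : ∀ u ∈ K, G.IsNode u)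
    (hK : ∀ u ∈ K, ∀ w, G.IsHeavy u w → w ∈ K) :
    ∃ P₀ : Finset (List A), P₀.card ≤ 8 * K.card ∧ ∀ P : Set (List A), ↑P₀ ⊆ P → ∀ u ∈ K,
      (∀ w, G.IsNode w → w.length < u.length → G.HasBound P w) → G.HasBound P u := by
  classical
  induction K using Finset.strongInduction with
  | H K ih =>
    rcases K.eq_empty_or_nonempty with rfl | hne
    · exact ⟨∅, by simp, by simp⟩
    obtain ⟨u, hu, hmax⟩ := K.exists_max_image List.length hne
    obtain ⟨v, p, rfl, hv⟩ := (hnode u hu).exists_isHeavyChain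
    let C := (Finset.Iic p).image v
    have hCK : C ⊆ K :=
      Finset.image_subset_iff.2 fun i hi => hv.mem_of_closed hK hu (Finset.mem_Iic.1 hi)
    have hcardC : C.card = p + 1 := by
      rw [Finset.card_image_of_injOn (by simpa only [Finset.coe_Iic] using hv.injOn), Nat.card_Iic]
    have hsdiff : ∀ u ∈ K \ C, ∀ w, G.IsHeavy u w → w ∈ K \ C := by
      intro u hu w hw
      rw [Finset.mem_sdiff] at hu ⊢
      exact ⟨hK u hu.1 w hw, fun hwC => hu.2 (hv.mem_image_of_isHeavy hw hwC (hmax u hu.1))⟩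
    obtain ⟨P₁, hcard₁, hP₁⟩ := hv.exists_finset_hasBound
    obtain ⟨P₂, hcard₂, hP₂⟩ := ih (K \ C)
      (Finset.sdiff_ssubset hCK (Finset.card_pos.1 (hcardC ▸ p.succ_pos)))
      (fun u hu => hnode u (Finset.mem_sdiff.1 hu).1) hsdiff
    refine ⟨P₁ ∪ P₂, ?_, fun P hP u hu => ?_⟩
    · have := Finset.card_union_le P₁ P₂
      have := Finset.card_sdiff_add_card_eq_card hCK
      lia
    · rw [Finset.coe_union, Set.union_subset_iff] at hP
      by_cases huC : u ∈ C
      · obtain ⟨i, hi, rfl⟩ := Finset.mem_image.1 huC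
        exact hP₁ P hP.1 i (Finset.mem_Iic.1 hi)
      · exact hP₂ P hP.2 u (Finset.mem_sdiff.2 ⟨hu, huC⟩)

theorem exists_finset_derivableIn_roots (Q : Finset (List A)) (hne : ∀ q ∈ Q, q ≠ [])
    (hroots : G.roots ⊆ Q) (hQ : ∀ u ∈ Q, ∀ w, G.IsChild u w → w ∈ Q) :
    ∃ P : Finset (List A), P.card ≤ 8 * Q.card ∧
      ∀ r ∈ G.roots, DerivableIn ↑P (36 * G.logBound + 12) r := by
  classical
  obtain ⟨P, hcard, hP⟩ := G.exists_finset_forall_hasBound {q ∈ Q | G.IsNode q}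
    (fun u hu => (Finset.mem_filter.1 hu).2) fun u hu w hw => Finset.mem_filter.2
      ⟨hQ u (Finset.mem_filter.1 hu).1 w hw.isChild, hw.isNode_child⟩
  have hbound : ∀ n, ∀ u, G.IsNode u → u.length = n → G.HasBound ↑P u := by
    intro n
    induction n using Nat.strong_induction_on with
    | _ n ih =>
      intro u hu hn
      obtain ⟨r, hr, hru⟩ := Finset.sum_pos_iff.1 hu.weight_pos
      have huQ : u ∈ Q := G.mem_of_occ_pos (Q := ↑Q) hQ (hroots hr) hru
      exact hP ↑P subset_rfl u (Finset.mem_filter.2 ⟨huQ, hu⟩)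
        fun w hw hlt => ih _ (hn ▸ hlt) w hw rfl
  refine ⟨P, hcard.trans (Nat.mul_le_mul_left 8 (Finset.card_filter_le _ _)), fun r hr => ?_⟩
  have hnode : G.IsNode r := ⟨hne r (hroots hr), weight_pos_of_mem_roots hr⟩
  refine (hbound _ r hnode rfl 0 (isEntry_zero_of_mem_roots hr)).mono ?_
  have := hnode.log_length_le
  have := hnode.log_weight_le
  unfold depthBound baseDepth
  lia

end ParseForest

theorem exists_finset_derivableIn {Q R : Finset (List A)} {t : ℕ} (hne : ∀ q ∈ Q, q ≠ [])
    (hQ : ∀ q ∈ Q, 1 < q.length → ∃ y ∈ Q, ∃ z ∈ Q, q = y ++ z) (hRQ : R ⊆ Q)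
    (hR : ∑ r ∈ R, r.length < 2 ^ (t + 1)) :
    ∃ P : Finset (List A), P.card ≤ 8 * Q.card ∧ ∀ r ∈ R, DerivableIn ↑P (36 * t + 12) r := by
  obtain ⟨S, hS⟩ := exists_splitting (Q := (Q : Set (List A))) fun q hq hlen => by
    obtain ⟨y, hy, z, hz, h⟩ := hQ q hq hlen
    exact ⟨y, hy, z, hz, hne y hy, hne z hz, h⟩
  let G : ParseForest A := { S with roots := R, logBound := t, sum_length_lt := hR }
  exact G.exists_finset_derivableIn_roots Q hne hRQ hS

end ParseForest

namespace Str2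

variable {A : Type} {S T : Str2 A} {R R' : List (List A)} {w w' : ℕ}

/-- The 2D string of width `w` with the rows `R`; every row is meant to have length `w`. -/
def ofRows (w : ℕ) (R : List (List A)) : Str2 A :=
  ⟨R.length, w, fun i j => R[i]?.bind (·[j]?)⟩

theorem single_eq_ofRows (a : A) : single a = ofRows 1 [[a]] := by
  simp only [single, mk', ofRows, mk.injEq, List.length_singleton, true_and]
  funext i j
  rcases i with _ | i <;> rcases j with _ | j <;> simp

theorem ofRows_vcat (hR : ∀ r ∈ R, r.length = w) (hR' : ∀ r ∈ R', r.length = w) :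
    (ofRows w R).vcat (ofRows w R') = ofRows w (R ++ R') := by
  simp only [vcat, mk', ofRows, mk.injEq, List.length_append, true_and]
  funext i j
  grind

theorem ofRows_hcat (h : R.length = R'.length) (hR : ∀ r ∈ R, r.length = w)
    (hR' : ∀ r ∈ R', r.length = w') :
    (ofRows w R).hcat (ofRows w' R') = ofRows (w + w') (List.zipWith (· ++ ·) R R') := by
  simp only [hcat, mk', ofRows, mk.injEq, List.length_zipWith, true_and]
  refine ⟨by lia, ?_⟩
  funext i j
  by_cases hi : i < R.length <;> grind

theorem exists_append_of_mem_zipWith {r : List A} (hr : r ∈ List.zipWith (· ++ ·) R R') :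
    ∃ x ∈ R, ∃ y ∈ R', r = x ++ y := by
  obtain ⟨i, hi, rfl⟩ := List.mem_iff_getElem.1 hr
  rw [List.getElem_zipWith]
  exact ⟨_, List.getElem_mem _, _, List.getElem_mem _, rfl⟩

/-- The 2D string `S` is a full rectangle of characters, with rows `R`. -/
structure HasRows (S : Str2 A) (R : List (List A)) : Prop where
  eq_ofRows : S = ofRows S.w R
  length_eq : ∀ r ∈ R, r.length = S.w

theorem hasRows_ofRows (hR : ∀ r ∈ R, r.length = w) : (ofRows w R).HasRows R := ⟨rfl, hR⟩

theorem hasRows_single (a : A) : (single a).HasRows [[a]] := by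
  rw [single_eq_ofRows]
  exact hasRows_ofRows (by simp)

namespace HasRows

theorem h_eq (hS : S.HasRows R) : S.h = R.length := congrArg Str2.h hS.eq_ofRows

theorem hcat (hS : S.HasRows R) (hT : T.HasRows R') (h : S.h = T.h) :
    (S.hcat T).HasRows (List.zipWith (· ++ ·) R R') where
  eq_ofRows := by
    rw [hS.h_eq, hT.h_eq] at h
    conv_lhs => rw [hS.eq_ofRows, hT.eq_ofRows]
    exact ofRows_hcat h hS.length_eq hT.length_eq
  length_eq r hr := by
    obtain ⟨x, hx, y, hy, rfl⟩ := exists_append_of_mem_zipWith hr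
    rw [List.length_append, hS.length_eq x hx, hT.length_eq y hy]
    rfl

theorem vcat (hS : S.HasRows R) (hT : T.HasRows R') (h : S.w = T.w) :
    (S.vcat T).HasRows (R ++ R') where
  eq_ofRows := by
    conv_lhs => rw [hS.eq_ofRows, hT.eq_ofRows, ← h]
    exact ofRows_vcat hS.length_eq (h ▸ hT.length_eq)
  length_eq r hr :=
    (List.mem_append.1 hr).elim (hS.length_eq r) fun hr => (hT.length_eq r hr).trans h.symm

theorem unique (hR : S.HasRows R) (hR' : S.HasRows R') : R = R' := by
  have hf := congrArg Str2.f (hR.eq_ofRows.symm.trans hR'.eq_ofRows)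
  refine List.ext_getElem (hR.h_eq.symm.trans hR'.h_eq) fun i hi hi' =>
    List.ext_getElem? fun j => ?_
  simpa only [ofRows, List.getElem?_eq_getElem hi, List.getElem?_eq_getElem hi',
    Option.bind_some] using congrFun (congrFun hf i) j

end HasRows

end Str2

/-- `DerivableIn2 P d S`: the 2D string `S` has a derivation tree of depth at most `d` all of whose
nodes are 2D strings of `P`. -/
inductive DerivableIn2 {A : Type} (P : Set (Str2 A)) : ℕ → Str2 A → Prop
  | single {d : ℕ} {a : A} : Str2.single a ∈ P → DerivableIn2 P (d + 1) (Str2.single a)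
  | horiz {d : ℕ} {S T : Str2 A} : DerivableIn2 P d S → DerivableIn2 P d T → S.h = T.h →
      S.hcat T ∈ P → DerivableIn2 P (d + 1) (S.hcat T)
  | vert {d : ℕ} {S T : Str2 A} : DerivableIn2 P d S → DerivableIn2 P d T → S.w = T.w →
      S.vcat T ∈ P → DerivableIn2 P (d + 1) (S.vcat T)

section DerivableIn2

variable {A : Type}

theorem DerivableIn2.mem {P : Set (Str2 A)} {d : ℕ} {S : Str2 A} (h : DerivableIn2 P d S) :
    S ∈ P := by
  cases h <;> assumption

theorem DerivableIn2.mono {P : Set (Str2 A)} {d d' : ℕ} {S : Str2 A} (h : DerivableIn2 P d S)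
    (hd : d ≤ d') : DerivableIn2 P d' S := by
  induction h generalizing d' with
  | single ha =>
    obtain ⟨e, rfl⟩ := Nat.exists_eq_add_of_le' (Nat.one_le_of_lt hd)
    exact .single ha
  | horiz _ _ h hP ihS ihT =>
    obtain ⟨e, rfl⟩ := Nat.exists_eq_add_of_le' (Nat.one_le_of_lt hd)
    exact .horiz (ihS (by lia)) (ihT (by lia)) h hP
  | vert _ _ h hP ihS ihT =>
    obtain ⟨e, rfl⟩ := Nat.exists_eq_add_of_le' (Nat.one_le_of_lt hd)
    exact .vert (ihS (by lia)) (ihT (by lia)) h hP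

theorem DerivableIn.toDerivableIn2 {P : Set (List A)} {P' : Set (Str2 A)}
    (hP : ∀ s ∈ P, Str2.ofRows s.length [s] ∈ P') {d : ℕ} {s : List A} (h : DerivableIn P d s)
    (hs : s ≠ []) : DerivableIn2 P' d (Str2.ofRows s.length [s]) := by
  induction h with
  | nil d => exact absurd rfl hs
  | singleton ha =>
    have ha' := hP _ ha
    rw [List.length_singleton, ← Str2.single_eq_ofRows] at ha' ⊢
    exact .single ha'
  | @append d x y _ _ hxy ihx ihy =>
    rcases eq_or_ne x [] with rfl | hx
    · exact (ihy hs).mono d.le_succ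
    rcases eq_or_ne y [] with rfl | hy
    · rw [List.append_nil]
      exact (ihx hx).mono d.le_succ
    have hcat : (Str2.ofRows x.length [x]).hcat (Str2.ofRows y.length [y]) =
        Str2.ofRows (x ++ y).length [x ++ y] := by
      rw [List.length_append]
      exact Str2.ofRows_hcat (R := [x]) (R' := [y]) rfl (by simp) (by simp)
    have hxy' := hP _ hxy
    rw [← hcat] at hxy' ⊢
    exact .horiz (ihx hx) (ihy hy) rfl hxy'

theorem exists_finset_derivableIn2_ofRows {w s : ℕ} {R : List (List A)} (hne : R ≠ [])
    (hs : R.length ≤ 2 ^ s) (hw : ∀ r ∈ R, r.length = w) :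
    ∃ P : Finset (Str2 A), P.card + 1 ≤ R.length ∧ ∀ (P' : Set (Str2 A)) (d : ℕ), ↑P ⊆ P' →
      (∀ r ∈ R, DerivableIn2 P' d (Str2.ofRows w [r])) →
        DerivableIn2 P' (d + s) (Str2.ofRows w R) := by
  classical
  induction s generalizing R with
  | zero =>
    obtain ⟨r, rfl⟩ := List.length_eq_one_iff.1 (hs.antisymm (List.length_pos_iff.2 hne))
    exact ⟨∅, le_rfl, fun _ _ _ h => h r List.mem_cons_self⟩
  | succ s ih =>
    by_cases hlt : R.length ≤ 2 ^ s
    · obtain ⟨P, hP, hder⟩ := ih hne hlt hw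
      exact ⟨P, hP, fun P' d hPP' h => (hder P' d hPP' h).mono (Nat.le_succ _)⟩
    obtain ⟨X, Y, rfl, hX⟩ : ∃ X Y, R = X ++ Y ∧ X.length = 2 ^ s :=
      ⟨_, _, (R.take_append_drop (2 ^ s)).symm, List.length_take_of_le (by lia)⟩
    rw [List.length_append] at hs hlt
    obtain ⟨hXw, hYw⟩ := List.forall_mem_append.1 hw
    obtain ⟨P, hP, hderX⟩ := ih (List.length_pos_iff.1 (by simp [hX])) hX.le hXw
    obtain ⟨P₂, hP₂, hderY⟩ := ih (List.length_pos_iff.1 (by lia)) (by lia) hYw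
    refine ⟨insert (Str2.ofRows w (X ++ Y)) (P ∪ P₂), ?_, fun P' d hPP' h => ?_⟩
    · have := Finset.card_insert_le (Str2.ofRows w (X ++ Y)) (P ∪ P₂)
      have := Finset.card_union_le P P₂
      rw [List.length_append]
      lia
    · simp only [Finset.coe_insert, Finset.coe_union, Set.insert_subset_iff,
        Set.union_subset_iff] at hPP'
      obtain ⟨hmem, hPP, hPP₂⟩ := hPP'
      obtain ⟨hX', hY'⟩ := List.forall_mem_append.1 h
      rw [← Str2.ofRows_vcat hXw hYw] at hmem ⊢
      exact .vert (hderX P' d hPP hX') (hderY P' d hPP₂ hY') rfl hmem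

theorem exists_finset_derivableIn2_of_forall_derivableIn {P : Finset (List A)} {w d s : ℕ}
    {R : List (List A)} (hne : R ≠ []) (hs : R.length ≤ 2 ^ s) (hw : ∀ r ∈ R, r.length = w)
    (hw₀ : 0 < w) (hP : ∀ r ∈ R, DerivableIn ↑P d r) :
    ∃ P' : Finset (Str2 A), P'.card ≤ P.card + R.length ∧
      DerivableIn2 ↑P' (d + s) (Str2.ofRows w R) := by
  classical
  obtain ⟨P₂, hP₂, hder⟩ := exists_finset_derivableIn2_ofRows hne hs hw
  refine ⟨P.image (fun r => Str2.ofRows r.length [r]) ∪ P₂, ?_,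
    hder _ d (mod_cast Finset.subset_union_right) fun r hr => ?_⟩
  · exact (Finset.card_union_le _ _).trans
      (Nat.add_le_add Finset.card_image_le (Nat.le_of_succ_le hP₂))
  · rw [← hw r hr]
    exact (hP r hr).toDerivableIn2
      (fun q hq => Finset.mem_union_left _ (Finset.mem_image_of_mem _ hq))
      (List.ne_nil_of_length_pos (hw r hr ▸ hw₀))

end DerivableIn2

namespace SLP2

variable {A : Type}

theorem rhs_induction (G : SLP2 A) {p : G.V → Prop}
    (chr : ∀ X a, G.rhs X = .chr a → p X)
    (horiz : ∀ X Y Z, G.rhs X = .horiz Y Z → p Y → p Z → p X)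
    (vert : ∀ X Y Z, G.rhs X = .vert Y Z → p Y → p Z → p X) (X : G.V) : p X := by
  induction hn : G.rank X using Nat.strong_induction_on generalizing X with
  | h n ih =>
    subst hn
    cases h : G.rhs X with
    | chr a => exact chr X a h
    | horiz Y Z =>
      obtain ⟨hY, hZ⟩ := G.rank_horiz h
      exact horiz X Y Z h (ih _ hY Y rfl) (ih _ hZ Z rfl)
    | vert Y Z =>
      obtain ⟨hY, hZ⟩ := G.rank_vert h
      exact vert X Y Z h (ih _ hY Y rfl) (ih _ hZ Z rfl)

theorem expAux_eq_expNT (G : SLP2 A) (X : G.V) {n : ℕ} (hn : G.rank X < n) :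
    G.expAux n X = G.expNT X := by
  suffices h : ∀ m, G.rank X < m → G.expAux n X = G.expAux m X from h _ (Nat.lt_succ_self _)
  intro m hm
  induction n generalizing X m with
  | zero => exact absurd hn (Nat.not_lt_zero _)
  | succ n ih =>
    obtain ⟨m, rfl⟩ := Nat.exists_eq_add_of_le' (Nat.one_le_of_lt hm)
    rw [expAux, expAux]
    cases h : G.rhs X with
    | chr a => rfl
    | horiz Y Z =>
      obtain ⟨hY, hZ⟩ := G.rank_horiz h
      exact congrArg₂ Str2.hcat (ih Y (by lia) m (by lia)) (ih Z (by lia) m (by lia))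
    | vert Y Z =>
      obtain ⟨hY, hZ⟩ := G.rank_vert h
      exact congrArg₂ Str2.vcat (ih Y (by lia) m (by lia)) (ih Z (by lia) m (by lia))

theorem expNT_of_rhs_eq_chr {G : SLP2 A} {X : G.V} {a : A} (h : G.rhs X = .chr a) :
    G.expNT X = Str2.single a := by
  simp only [expNT, expAux, h]

theorem expNT_of_rhs_eq_horiz {G : SLP2 A} {X Y Z : G.V} (h : G.rhs X = .horiz Y Z) :
    G.expNT X = (G.expNT Y).hcat (G.expNT Z) := by
  rw [expNT, expAux, h]
  exact congrArg₂ Str2.hcat (G.expAux_eq_expNT Y (G.rank_horiz h).1)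
    (G.expAux_eq_expNT Z (G.rank_horiz h).2)

theorem expNT_of_rhs_eq_vert {G : SLP2 A} {X Y Z : G.V} (h : G.rhs X = .vert Y Z) :
    G.expNT X = (G.expNT Y).vcat (G.expNT Z) := by
  rw [expNT, expAux, h]
  exact congrArg₂ Str2.vcat (G.expAux_eq_expNT Y (G.rank_vert h).1)
    (G.expAux_eq_expNT Z (G.rank_vert h).2)

theorem depthAux_le (G : SLP2 A) (n : ℕ) (X : G.V) : G.depthAux n X ≤ G.rank X + 1 := by
  induction n generalizing X with
  | zero => exact Nat.zero_le _
  | succ n ih =>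
    rw [depthAux]
    cases h : G.rhs X with
    | chr a => exact Nat.le_add_left 1 _
    | horiz Y Z => grind [G.rank_horiz h]
    | vert Y Z => grind [G.rank_vert h]

variable {G : SLP2 A}

theorem WF.h_eq_of_rhs_eq_horiz (hG : G.WF) {X Y Z : G.V} (h : G.rhs X = .horiz Y Z) :
    (G.expNT Y).h = (G.expNT Z).h := by
  simpa only [h] using hG X

theorem WF.w_eq_of_rhs_eq_vert (hG : G.WF) {X Y Z : G.V} (h : G.rhs X = .vert Y Z) :
    (G.expNT Y).w = (G.expNT Z).w := by
  simpa only [h] using hG X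

theorem WF.exists_hasRows (hG : G.WF) (X : G.V) : ∃ R, (G.expNT X).HasRows R := by
  induction X using G.rhs_induction with
  | chr X a h =>
    rw [expNT_of_rhs_eq_chr h]
    exact ⟨_, Str2.hasRows_single a⟩
  | horiz X Y Z h ihY ihZ =>
    obtain ⟨RY, hY⟩ := ihY
    obtain ⟨RZ, hZ⟩ := ihZ
    rw [expNT_of_rhs_eq_horiz h]
    exact ⟨_, hY.hcat hZ (hG.h_eq_of_rhs_eq_horiz h)⟩
  | vert X Y Z h ihY ihZ =>
    obtain ⟨RY, hY⟩ := ihY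
    obtain ⟨RZ, hZ⟩ := ihZ
    rw [expNT_of_rhs_eq_vert h]
    exact ⟨_, hY.vcat hZ (hG.w_eq_of_rhs_eq_vert h)⟩

theorem expNT_h_pos_and_w_pos (G : SLP2 A) (X : G.V) :
    0 < (G.expNT X).h ∧ 0 < (G.expNT X).w := by
  induction X using G.rhs_induction with
  | chr X a h =>
    rw [expNT_of_rhs_eq_chr h]
    exact ⟨Nat.one_pos, Nat.one_pos⟩
  | horiz X Y Z h ihY _ =>
    rw [expNT_of_rhs_eq_horiz h]
    exact ⟨ihY.1, Nat.add_pos_left ihY.2 _⟩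
  | vert X Y Z h ihY _ =>
    rw [expNT_of_rhs_eq_vert h]
    exact ⟨Nat.add_pos_left ihY.1 _, ihY.2⟩

/-- `q` is a row of the expansion of a nonterminal of height at most `N`. -/
def IsRow (G : SLP2 A) (N : ℕ) (q : List A) : Prop :=
  ∃ X R, (G.expNT X).HasRows R ∧ R.length ≤ N ∧ q ∈ R

theorem IsRow.ne_nil {N : ℕ} {q : List A} (hq : G.IsRow N q) : q ≠ [] := by
  obtain ⟨X, R, hR, -, hqR⟩ := hq
  exact List.ne_nil_of_length_pos (hR.length_eq q hqR ▸ (G.expNT_h_pos_and_w_pos X).2)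

theorem IsRow.exists_append (hG : G.WF) {N : ℕ} {q : List A} (hq : G.IsRow N q)
    (hlen : 1 < q.length) : ∃ y, G.IsRow N y ∧ ∃ z, G.IsRow N z ∧ q = y ++ z := by
  obtain ⟨X, R, hR, hRN, hqR⟩ := hq
  induction X using G.rhs_induction generalizing R with
  | chr X a h =>
    rw [expNT_of_rhs_eq_chr h] at hR
    obtain rfl := hR.unique (Str2.hasRows_single a)
    obtain rfl := List.mem_singleton.1 hqR
    exact absurd hlen (lt_irrefl 1)
  | horiz X Y Z h =>
    obtain ⟨RY, hY⟩ := hG.exists_hasRows Y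
    obtain ⟨RZ, hZ⟩ := hG.exists_hasRows Z
    have hYZ := hG.h_eq_of_rhs_eq_horiz h
    rw [expNT_of_rhs_eq_horiz h] at hR
    obtain rfl := hR.unique (hY.hcat hZ hYZ)
    rw [hY.h_eq, hZ.h_eq] at hYZ
    rw [List.length_zipWith] at hRN
    obtain ⟨y, hy, z, hz, rfl⟩ := Str2.exists_append_of_mem_zipWith hqR
    exact ⟨y, ⟨Y, RY, hY, by lia, hy⟩, z, ⟨Z, RZ, hZ, by lia, hz⟩, rfl⟩
  | vert X Y Z h ihY ihZ =>
    obtain ⟨RY, hY⟩ := hG.exists_hasRows Y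
    obtain ⟨RZ, hZ⟩ := hG.exists_hasRows Z
    rw [expNT_of_rhs_eq_vert h] at hR
    obtain rfl := hR.unique (hY.vcat hZ (hG.w_eq_of_rhs_eq_vert h))
    rw [List.length_append] at hRN
    rcases List.mem_append.1 hqR with hqY | hqZ
    · exact ihY RY hY (by lia) hqY
    · exact ihZ RZ hZ (by lia) hqZ

theorem WF.exists_finset_isRow (hG : G.WF) (N : ℕ) :
    ∃ Q : Finset (List A), Q.card ≤ G.numNT * N ∧ ∀ q, q ∈ Q ↔ G.IsRow N q := by
  classical
  let := G.fintypeV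
  choose R hR using hG.exists_hasRows
  refine ⟨({X | (R X).length ≤ N} : Finset G.V).biUnion fun X => (R X).toFinset, ?_, fun q => ?_⟩
  · refine (Finset.card_biUnion_le_card_mul _ _ N fun X hX => ?_).trans
      (Nat.mul_le_mul_right _ (Finset.card_le_univ _))
    exact (List.toFinset_card_le _).trans (Finset.mem_filter_univ X |>.1 hX)
  · simp only [Finset.mem_biUnion, Finset.mem_filter_univ, List.mem_toFinset]
    constructor
    · rintro ⟨X, hX, hq⟩
      exact ⟨X, R X, hR X, hX, hq⟩
    · rintro ⟨X, R', hR', hlen, hq⟩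
      obtain rfl := (hR X).unique hR'
      exact ⟨X, hlen, hq⟩

theorem numNT_le_size (G : SLP2 A) : G.numNT ≤ G.size := by
  let := G.fintypeV
  rw [numNT, size, Fintype.card_eq_sum_ones]
  refine Finset.sum_le_sum fun X _ => ?_
  cases G.rhs X <;> lia

theorem size_pos (G : SLP2 A) : 0 < G.size :=
  let := G.fintypeV
  (Fintype.card_pos_iff.2 ⟨G.start⟩).trans_le G.numNT_le_size

theorem size_le_two_mul_numNT (G : SLP2 A) : G.size ≤ 2 * G.numNT := by
  let := G.fintypeV
  rw [numNT, size, mul_comm, ← smul_eq_mul]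
  refine Finset.sum_le_card_nsmul _ _ 2 fun X _ => ?_
  cases G.rhs X <;> lia

end SLP2

section Realization

variable {A V : Type} {e : V → Str2 A} {rk : V → ℕ} {X : V}

/-- The right-hand side `r` derives `e X` from the strings that `e` assigns to nonterminals of rank
less than that of `X`. -/
def Rhs2.Realizes (e : V → Str2 A) (rk : V → ℕ) (X : V) : Rhs2 A V → Prop
  | .chr a => e X = Str2.single a
  | .horiz Y Z => e X = (e Y).hcat (e Z) ∧ (e Y).h = (e Z).h ∧ rk Y < rk X ∧ rk Z < rk X
  | .vert Y Z => e X = (e Y).vcat (e Z) ∧ (e Y).w = (e Z).w ∧ rk Y < rk X ∧ rk Z < rk X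

theorem exists_slp2_of_realizes [Fintype V] {r : V → Rhs2 A V}
    (hr : ∀ X, (r X).Realizes e rk X) (S : V) :
    ∃ G : SLP2 A, G.WF ∧ G.exp = e S ∧ G.size ≤ 2 * Fintype.card V ∧ G.depth ≤ rk S + 1 := by
  have chr {X a} (h : r X = .chr a) : e X = Str2.single a := by
    simpa only [h, Rhs2.Realizes] using hr X
  have horiz {X Y Z} (h : r X = .horiz Y Z) :
      e X = (e Y).hcat (e Z) ∧ (e Y).h = (e Z).h ∧ rk Y < rk X ∧ rk Z < rk X := by
    simpa only [h, Rhs2.Realizes] using hr X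
  have vert {X Y Z} (h : r X = .vert Y Z) :
      e X = (e Y).vcat (e Z) ∧ (e Y).w = (e Z).w ∧ rk Y < rk X ∧ rk Z < rk X := by
    simpa only [h, Rhs2.Realizes] using hr X
  let G : SLP2 A := ⟨V, inferInstance, S, r, rk, fun h => (horiz h).2.2, fun h => (vert h).2.2⟩
  have expNT_eq (X : V) : G.expNT X = e X := by
    induction X using G.rhs_induction with
    | chr X a h => rw [SLP2.expNT_of_rhs_eq_chr h, chr h]
    | horiz X Y Z h ihY ihZ => rw [SLP2.expNT_of_rhs_eq_horiz h, ihY, ihZ, (horiz h).1]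
    | vert X Y Z h ihY ihZ => rw [SLP2.expNT_of_rhs_eq_vert h, ihY, ihZ, (vert h).1]
  refine ⟨G, fun X => ?_, expNT_eq S, G.size_le_two_mul_numNT, G.depthAux_le _ S⟩
  cases h : G.rhs X with
  | chr a => trivial
  | horiz Y Z => simpa only [expNT_eq] using (horiz h).2.1
  | vert Y Z => simpa only [expNT_eq] using (vert h).2.1

end Realization

theorem DerivableIn2.exists_slp2 {A : Type} {P : Finset (Str2 A)} {D : ℕ} {T : Str2 A}
    (hT : DerivableIn2 ↑P D T) :
    ∃ G : SLP2 A, G.WF ∧ G.exp = T ∧ G.size ≤ 2 * P.card ∧ G.depth ≤ D + 1 := by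
  classical
  let V := {S : P // ∃ d, DerivableIn2 ↑P d S.1}
  let rk (X : V) : ℕ := Nat.find X.2
  have rk_le (X : V) {d : ℕ} (h : DerivableIn2 ↑P d X.1.1) : rk X ≤ d := Nat.find_min' X.2 h
  have exists_realizes (X : V) : ∃ r : Rhs2 A V, r.Realizes (fun Y => Y.1.1) rk X := by
    have hX : DerivableIn2 ↑P (rk X) X.1.1 := Nat.find_spec X.2
    generalize hd : rk X = d at hX
    generalize hs : X.1.1 = s at hX
    cases hX with
    | single ha => exact ⟨.chr _, hs⟩
    | @horiz d Y Z hY hZ hYZ =>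
      exact ⟨.horiz ⟨⟨Y, hY.mem⟩, d, hY⟩ ⟨⟨Z, hZ.mem⟩, d, hZ⟩, hs, hYZ,
        hd ▸ Nat.lt_succ_of_le (rk_le _ hY), hd ▸ Nat.lt_succ_of_le (rk_le _ hZ)⟩
    | @vert d Y Z hY hZ hYZ =>
      exact ⟨.vert ⟨⟨Y, hY.mem⟩, d, hY⟩ ⟨⟨Z, hZ.mem⟩, d, hZ⟩, hs, hYZ,
        hd ▸ Nat.lt_succ_of_le (rk_le _ hY), hd ▸ Nat.lt_succ_of_le (rk_le _ hZ)⟩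
  choose r hr using exists_realizes
  let S : V := ⟨⟨T, hT.mem⟩, D, hT⟩
  obtain ⟨G, hWF, hexp, hsize, hdepth⟩ := exists_slp2_of_realizes hr S
  refine ⟨G, hWF, hexp, hsize.trans ?_, hdepth.trans (Nat.succ_le_succ (rk_le S hT))⟩
  exact Nat.mul_le_mul_left 2 ((Fintype.card_subtype_le _).trans_eq (Fintype.card_coe P))

theorem SLP2.WF.exists_finset_derivableIn_rows {A : Type} {G : SLP2 A} (hG : G.WF)
    {R : List (List A)} (hR : G.exp.HasRows R) :
    ∃ P : Finset (List A), P.card ≤ 8 * (G.size * R.length) ∧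
      ∀ r ∈ R, DerivableIn ↑P (36 * Nat.log 2 (R.length * G.exp.w) + 12) r := by
  classical
  obtain ⟨Q, hQcard, hQ⟩ := hG.exists_finset_isRow R.length
  have hRQ : R.toFinset ⊆ Q := fun r hr =>
    (hQ r).2 ⟨G.start, R, hR, le_rfl, List.mem_toFinset.1 hr⟩
  have hsum : ∑ r ∈ R.toFinset, r.length ≤ R.length * G.exp.w :=
    (Finset.sum_le_card_nsmul _ _ _ fun r hr => (hR.length_eq r (List.mem_toFinset.1 hr)).le).trans
      (Nat.mul_le_mul_right _ (List.toFinset_card_le R))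
  obtain ⟨P, hPcard, hP⟩ := exists_finset_derivableIn (fun q hq => ((hQ q).1 hq).ne_nil)
    (fun q hq hlen => by simpa only [hQ] using ((hQ q).1 hq).exists_append hG hlen) hRQ
    (hsum.trans_lt (Nat.lt_pow_succ_log_self Nat.one_lt_two _))
  refine ⟨P, hPcard.trans (Nat.mul_le_mul_left 8 ?_), fun r hr => hP r (List.mem_toFinset.2 hr)⟩
  exact hQcard.trans (Nat.mul_le_mul_right _ G.numNT_le_size)

theorem SLP2.WF.exists_finset_derivableIn2_exp {A : Type} {G : SLP2 A} (hG : G.WF) :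
    ∃ P : Finset (Str2 A), P.card ≤ 9 * G.size * G.exp.h ∧
      DerivableIn2 ↑P (37 * Nat.log 2 (G.exp.h * G.exp.w) + 13) G.exp := by
  obtain ⟨hh, hw⟩ : 0 < G.exp.h ∧ 0 < G.exp.w := G.expNT_h_pos_and_w_pos G.start
  obtain ⟨R, hR⟩ : ∃ R, G.exp.HasRows R := hG.exists_hasRows G.start
  obtain ⟨P, hPcard, hP⟩ := hG.exists_finset_derivableIn_rows hR
  rw [hR.h_eq] at hh ⊢
  have hlen : R.length ≤ 2 ^ (Nat.log 2 (R.length * G.exp.w) + 1) :=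
    (Nat.le_mul_of_pos_right _ hw).trans (Nat.lt_pow_succ_log_self Nat.one_lt_two _).le
  obtain ⟨P', hP'card, hP'⟩ := exists_finset_derivableIn2_of_forall_derivableIn
    (List.ne_nil_of_length_pos hh) hlen hR.length_eq hw hP
  rw [← hR.eq_ofRows] at hP'
  refine ⟨P', ?_, hP'.mono (by lia)⟩
  calc P'.card ≤ 8 * (G.size * R.length) + R.length := hP'card.trans (by gcongr)
    _ ≤ 8 * (G.size * R.length) + G.size * R.length := by
      gcongr
      exact Nat.le_mul_of_pos_left _ G.size_pos
    _ = 9 * G.size * R.length := by ring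

theorem log_mul_le_two_mul_logb {N M : ℕ} (h : N ≤ M) :
    (Nat.log 2 (N * M) : ℝ) ≤ 2 * Real.logb 2 M :=
  calc (Nat.log 2 (N * M) : ℝ) ≤ Nat.log 2 (M ^ 2) := by
        rw [sq]
        exact_mod_cast Nat.log_mono_right (Nat.mul_le_mul_right M h)
    _ ≤ Real.logb 2 ((M ^ 2 : ℕ) : ℝ) := mod_cast Real.natLog_le_logb (M ^ 2) 2
    _ = 2 * Real.logb 2 M := by rw [Nat.cast_pow, Real.logb_pow, Nat.cast_two]

theorem one_le_logb_two {M : ℕ} (h : 2 ≤ M) : 1 ≤ Real.logb 2 M := by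
  rw [Real.le_logb_iff_rpow_le one_lt_two (by positivity), Real.rpow_one]
  exact_mod_cast h

theorem balancing_standard_2d_slps_general {A : Type} (G : SLP2 A) (hG : G.WF) :
    ∃ G' : SLP2 A, G'.WF ∧ G'.exp = G.exp ∧ G'.size ≤ 18 * G.size * G.exp.h ∧
      G'.depth ≤ 37 * Nat.log 2 (G.exp.h * G.exp.w) + 14 := by
  obtain ⟨P, hP, hder⟩ := hG.exists_finset_derivableIn2_exp
  obtain ⟨G', hWF, hexp, hsize, hdepth⟩ := hder.exists_slp2
  exact ⟨G', hWF, hexp, by lia, hdepth⟩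

/-- There is an absolute constant `c > 0` such that: for every
finite alphabet, `1 ≤ N ≤ M` with `M ≥ 2`, and 2D SLP `G` deriving a 2D string
`T` of size `N × M`, there is a 2D SLP `G'` with `exp G' = T`, size at most
`c * |G| * N`, and depth at most `c * log₂ M`. -/
theorem balancing_standard_2d_slps :
    ∃ c : ℕ, 0 < c ∧
      ∀ (A : Type) (_ : Fintype A) (N M : ℕ) (G : SLP2 A),
        1 ≤ N → N ≤ M → 2 ≤ M → G.WF →
        (G.exp).h = N → (G.exp).w = M →
        ∃ G' : SLP2 A, G'.WF ∧ G'.exp = G.exp ∧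
          G'.size ≤ c * G.size * N ∧
          (G'.depth : ℝ) ≤ (c : ℝ) * Real.logb 2 (M : ℝ) := by
  refine ⟨88, by norm_num, ?_⟩
  rintro A - N M G - hNM hM hG rfl rfl
  obtain ⟨G', hWF, hexp, hsize, hdepth⟩ := balancing_standard_2d_slps_general G hG
  have hdepth' : (G'.depth : ℝ) ≤ 37 * Nat.log 2 (G.exp.h * G.exp.w) + 14 := mod_cast hdepth
  refine ⟨G', hWF, hexp, hsize.trans (by gcongr; norm_num), ?_⟩
  rw [Nat.cast_ofNat]
  linarith [log_mul_le_two_mul_logb hNM, one_le_logb_two hM]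
end

section
/- There is an absolute constant c > 0 such that the following holds. Let G be a 2D SLP with holes deriving a 2D string T over a finite alphabet Σ of size N×M with N·M ≥ 2. Then there exists a 2D SLP with holes G' deriving the same string T, with size |G'| ≤ c·|G| and depth at most c·log₂(N·M). -/
/-!
## 2D strings with a rectangular hole (contexts).
A context over `A` is a 2D string of outer size `oh × ow` from which a
rectangular hole of size `ph × pw` with top-left corner `(px, py)`
(0-indexed) has been removed.  `f i j` is `some` of the character at
row `i`, column `j` when `(i, j)` lies in the outer rectangle but not in
the hole, and `none` otherwise; all operations below produce such
canonical representations. -/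
structure Ctx2 (A : Type) where
  oh : ℕ
  ow : ℕ
  px : ℕ
  py : ℕ
  ph : ℕ
  pw : ℕ
  f : ℕ → ℕ → Option A

namespace Ctx2

variable {A : Type}

/-- `(i, j)` lies in the hole of the context `C`. -/
def inHole (C : Ctx2 A) (i j : ℕ) : Prop :=
  C.px ≤ i ∧ i < C.px + C.ph ∧ C.py ≤ j ∧ j < C.py + C.pw

instance (C : Ctx2 A) (i j : ℕ) : Decidable (C.inHole i j) := by
  unfold inHole; infer_instance

/-- Canonical constructor: pads with `none` outside the outer rectangle and
inside the hole. -/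
def mk' (oh ow px py ph pw : ℕ) (g : ℕ → ℕ → Option A) : Ctx2 A :=
  ⟨oh, ow, px, py, ph, pw, fun i j =>
    if i < oh ∧ j < ow ∧ ¬(px ≤ i ∧ i < px + ph ∧ py ≤ j ∧ j < py + pw)
    then g i j else none⟩

/-- The empty context. -/
def empty : Ctx2 A := ⟨0, 0, 0, 0, 0, 0, fun _ _ => none⟩

/-- Filling the hole of the context `C` with a 2D string `S` (meaningful when
the dimensions of `S` equal the dimensions of the hole of `C`). -/
def fill (C : Ctx2 A) (S : Str2 A) : Str2 A :=
  Str2.mk' C.oh C.ow fun i j =>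
    if C.inHole i j then S.f (i - C.px) (j - C.py) else C.f i j

/-- Substituting the context `D` into the hole of the context `C` (meaningful
when the outer dimensions of `D` equal the dimensions of the hole of `C`). -/
def comp (C D : Ctx2 A) : Ctx2 A :=
  mk' C.oh C.ow (C.px + D.px) (C.py + D.py) D.ph D.pw fun i j =>
    if C.inHole i j then D.f (i - C.px) (j - C.py) else C.f i j

/-- Horizontal concatenation (ground string on the left, context on the right). -/
def hcatSC (S : Str2 A) (C : Ctx2 A) : Ctx2 A :=
  mk' S.h (S.w + C.ow) C.px (S.w + C.py) C.ph C.pw fun i j =>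
    if j < S.w then S.f i j else C.f i (j - S.w)

/-- Horizontal concatenation (context on the left, ground string on the right). -/
def hcatCS (C : Ctx2 A) (S : Str2 A) : Ctx2 A :=
  mk' C.oh (C.ow + S.w) C.px C.py C.ph C.pw fun i j =>
    if j < C.ow then C.f i j else S.f i (j - C.ow)

/-- Vertical concatenation (ground string on top, context below). -/
def vcatSC (S : Str2 A) (C : Ctx2 A) : Ctx2 A :=
  mk' (S.h + C.oh) S.w (S.h + C.px) C.py C.ph C.pw fun i j =>
    if i < S.h then S.f i j else C.f (i - S.h) j

/-- Vertical concatenation (context on top, ground string below). -/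
def vcatCS (C : Ctx2 A) (S : Str2 A) : Ctx2 A :=
  mk' (C.oh + S.h) C.ow C.px C.py C.ph C.pw fun i j =>
    if i < C.oh then C.f i j else S.f (i - C.oh) j

/-- `S ⊞ *` : ground string with a bare hole of size `p × q` to its right
(meaningful when `p = S.h`). -/
def hcatSH (S : Str2 A) (p q : ℕ) : Ctx2 A :=
  mk' S.h (S.w + q) 0 S.w p q fun i j => if j < S.w then S.f i j else none

/-- `* ⊞ S` : bare hole of size `p × q` with a ground string to its right
(meaningful when `p = S.h`). -/
def hcatHS (p q : ℕ) (S : Str2 A) : Ctx2 A :=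
  mk' S.h (q + S.w) 0 0 p q fun i j => if q ≤ j then S.f i (j - q) else none

/-- `S ⊟ *` : ground string with a bare hole of size `p × q` below it
(meaningful when `q = S.w`). -/
def vcatSH (S : Str2 A) (p q : ℕ) : Ctx2 A :=
  mk' (S.h + p) S.w S.h 0 p q fun i j => if i < S.h then S.f i j else none

/-- `* ⊟ S` : bare hole of size `p × q` with a ground string below it
(meaningful when `q = S.w`). -/
def vcatHS (p q : ℕ) (S : Str2 A) : Ctx2 A :=
  mk' (p + S.h) S.w 0 0 p q fun i j => if p ≤ i then S.f (i - p) j else none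

end Ctx2

/-- The right-hand side of a production of a 2D SLP with holes (2D TSLP):
productions of ground nonterminals are a character, a concatenation of two
ground nonterminals, or a context applied to a ground nonterminal (`subGC`);
productions of context nonterminals are a concatenation of a ground
nonterminal and a context nonterminal (in either order and direction), a
concatenation of a ground nonterminal and a bare hole `*` of the indicated
dimensions (in either order and direction), or a composition of two context
nonterminals (`subCC`). -/
inductive RhsT (A V : Type) where
  | chr : A → RhsT A V
  | hcatGG : V → V → RhsT A V
  | vcatGG : V → V → RhsT A V
  | subGC : V → V → RhsT A V
  | hcatGC : V → V → RhsT A V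
  | hcatCG : V → V → RhsT A V
  | vcatGC : V → V → RhsT A V
  | vcatCG : V → V → RhsT A V
  | hcatGH : V → ℕ → ℕ → RhsT A V
  | hcatHG : ℕ → ℕ → V → RhsT A V
  | vcatGH : V → ℕ → ℕ → RhsT A V
  | vcatHG : ℕ → ℕ → V → RhsT A V
  | subCC : V → V → RhsT A V

namespace RhsT

/-- The nonterminals occurring on a right-hand side. -/
def occurs {A V : Type} : RhsT A V → List V
  | .chr _ => []
  | .hcatGG Y Z => [Y, Z]
  | .vcatGG Y Z => [Y, Z]
  | .subGC Y Z => [Y, Z]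
  | .hcatGC Y Z => [Y, Z]
  | .hcatCG Y Z => [Y, Z]
  | .vcatGC Y Z => [Y, Z]
  | .vcatCG Y Z => [Y, Z]
  | .hcatGH Y _ _ => [Y]
  | .hcatHG _ _ Y => [Y]
  | .vcatGH Y _ _ => [Y]
  | .vcatHG _ _ Y => [Y]
  | .subCC Y Z => [Y, Z]

end RhsT

/-- A 2D SLP with holes (2D TSLP) over the alphabet `A`: a finite set `V` of
nonterminals partitioned by `isCtx` into ground nonterminals (deriving 2D
strings) and context nonterminals (deriving 2D strings with a rectangular
hole), a ground starting nonterminal, and a production map `rhs`.  Acyclicity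
is witnessed by the function `rank`. -/
structure TSLP2 (A : Type) where
  V : Type
  fintypeV : Fintype V
  isCtx : V → Bool
  start : V
  rhs : V → RhsT A V
  rank : V → ℕ
  rank_lt : ∀ X : V, ∀ Y ∈ (rhs X).occurs, rank Y < rank X

namespace TSLP2

variable {A : Type}

/-- Extract a ground 2D string from an evaluation result. -/
def getG : Str2 A ⊕ Ctx2 A → Str2 A
  | .inl S => S
  | .inr _ => Str2.empty

/-- Extract a context from an evaluation result. -/
def getC : Str2 A ⊕ Ctx2 A → Ctx2 A
  | .inl _ => Ctx2.empty
  | .inr C => C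

/-- Fuel-based evaluation of expansions. -/
def expAux (G : TSLP2 A) : ℕ → G.V → Str2 A ⊕ Ctx2 A
  | 0, _ => Sum.inl Str2.empty
  | n + 1, X =>
    match G.rhs X with
    | .chr a => Sum.inl (Str2.single a)
    | .hcatGG Y Z => Sum.inl ((getG (G.expAux n Y)).hcat (getG (G.expAux n Z)))
    | .vcatGG Y Z => Sum.inl ((getG (G.expAux n Y)).vcat (getG (G.expAux n Z)))
    | .subGC Y Z => Sum.inl ((getC (G.expAux n Y)).fill (getG (G.expAux n Z)))
    | .hcatGC Y Z => Sum.inr (Ctx2.hcatSC (getG (G.expAux n Y)) (getC (G.expAux n Z)))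
    | .hcatCG Y Z => Sum.inr (Ctx2.hcatCS (getC (G.expAux n Y)) (getG (G.expAux n Z)))
    | .vcatGC Y Z => Sum.inr (Ctx2.vcatSC (getG (G.expAux n Y)) (getC (G.expAux n Z)))
    | .vcatCG Y Z => Sum.inr (Ctx2.vcatCS (getC (G.expAux n Y)) (getG (G.expAux n Z)))
    | .hcatGH Y p q => Sum.inr (Ctx2.hcatSH (getG (G.expAux n Y)) p q)
    | .hcatHG p q Y => Sum.inr (Ctx2.hcatHS p q (getG (G.expAux n Y)))
    | .vcatGH Y p q => Sum.inr (Ctx2.vcatSH (getG (G.expAux n Y)) p q)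
    | .vcatHG p q Y => Sum.inr (Ctx2.vcatHS p q (getG (G.expAux n Y)))
    | .subCC Y Z => Sum.inr ((getC (G.expAux n Y)).comp (getC (G.expAux n Z)))

/-- The expansion of a ground nonterminal. -/
def expG (G : TSLP2 A) (X : G.V) : Str2 A := getG (G.expAux (G.rank X + 1) X)

/-- The expansion of a context nonterminal. -/
def expC (G : TSLP2 A) (X : G.V) : Ctx2 A := getC (G.expAux (G.rank X + 1) X)

/-- The 2D string derived by the TSLP. -/
def exp (G : TSLP2 A) : Str2 A := G.expG G.start

/-- Fuel-based computation of the depth of the derivation tree below a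
nonterminal. -/
def depthAux (G : TSLP2 A) : ℕ → G.V → ℕ
  | 0, _ => 0
  | n + 1, X =>
    match G.rhs X with
    | .chr _ => 1
    | r => 1 + ((r.occurs.map fun Y => G.depthAux n Y).foldr max 0)

/-- The depth of the TSLP: the depth of its derivation tree. -/
def depth (G : TSLP2 A) : ℕ := G.depthAux (G.rank G.start + 1) G.start

/-- The size of the TSLP: the total number of symbols on the right-hand sides
of all productions. -/
def size (G : TSLP2 A) : ℕ :=
  letI := G.fintypeV
  ∑ X : G.V, (match G.rhs X with
    | .chr _ => 1
    | _ => 2)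

/-- The number of nonterminals. -/
def numNT (G : TSLP2 A) : ℕ :=
  letI := G.fintypeV
  Fintype.card G.V

/-- Well-formedness of a TSLP: the starting nonterminal is ground, each
production has the right shape for the sort (ground/context) of its left-hand
side and arguments, and all dimensions match. -/
def WF (G : TSLP2 A) : Prop :=
  G.isCtx G.start = false ∧
  ∀ X : G.V,
    match G.rhs X with
    | .chr _ => G.isCtx X = false
    | .hcatGG Y Z => G.isCtx X = false ∧ G.isCtx Y = false ∧ G.isCtx Z = false ∧
        (G.expG Y).h = (G.expG Z).h
    | .vcatGG Y Z => G.isCtx X = false ∧ G.isCtx Y = false ∧ G.isCtx Z = false ∧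
        (G.expG Y).w = (G.expG Z).w
    | .subGC Y Z => G.isCtx X = false ∧ G.isCtx Y = true ∧ G.isCtx Z = false ∧
        (G.expC Y).ph = (G.expG Z).h ∧ (G.expC Y).pw = (G.expG Z).w
    | .hcatGC Y Z => G.isCtx X = true ∧ G.isCtx Y = false ∧ G.isCtx Z = true ∧
        (G.expG Y).h = (G.expC Z).oh
    | .hcatCG Y Z => G.isCtx X = true ∧ G.isCtx Y = true ∧ G.isCtx Z = false ∧
        (G.expC Y).oh = (G.expG Z).h
    | .vcatGC Y Z => G.isCtx X = true ∧ G.isCtx Y = false ∧ G.isCtx Z = true ∧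
        (G.expG Y).w = (G.expC Z).ow
    | .vcatCG Y Z => G.isCtx X = true ∧ G.isCtx Y = true ∧ G.isCtx Z = false ∧
        (G.expC Y).ow = (G.expG Z).w
    | .hcatGH Y p _ => G.isCtx X = true ∧ G.isCtx Y = false ∧ p = (G.expG Y).h
    | .hcatHG p _ Y => G.isCtx X = true ∧ G.isCtx Y = false ∧ p = (G.expG Y).h
    | .vcatGH Y _ q => G.isCtx X = true ∧ G.isCtx Y = false ∧ q = (G.expG Y).w
    | .vcatHG _ q Y => G.isCtx X = true ∧ G.isCtx Y = false ∧ q = (G.expG Y).w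
    | .subCC Y Z => G.isCtx X = true ∧ G.isCtx Y = true ∧ G.isCtx Z = true ∧
        (G.expC Y).ph = (G.expC Z).oh ∧ (G.expC Y).pw = (G.expC Z).ow

end TSLP2

/-!
A context is the partial map which fills its hole. Give a string of area `a` the weight
`3 * a - 2`, and a context the weight `3 * (b - e) - 1`, where `b` and `e` are the areas of its
outer rectangle and of its hole: then every production is lighter on the right than on the left, so
the grammar is a weighted acyclic multigraph. In its symmetric centroid decomposition, only the
edges along which neither the logarithm of the weight nor that of the number of paths from the root
changes are kept; they form disjoint paths, which a walk from the root leaves only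
`O(log (N * M))` times.

Along a centroid path, each expansion is obtained from the next one by a linear map, which uses
its argument once. Such maps are closed under composition at the cost of `O(1)` new nonterminals;
the point is that attaching `y` to a side of `z` is also attaching `z` to the opposite side of
`y`, so that a context whose ground argument varies can be turned into one whose hole varies. The
linear maps along a path are composed following binary trees that are balanced by weighted
medians, for weights which account for the edges entering and leaving the path. The depth spent on
a path is then the drop of a logarithm plus a constant, and these drops telescope along every walk
from the root.
-/

/-! ### Attaching a string to a side -/

/-- The sides of a rectangle. Both orders of the horizontal and of the vertical concatenation are
instances of attaching one string to a side of another. -/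
inductive Side where
  | left
  | right
  | top
  | bottom

namespace Side

variable {A : Type}

/-- The opposite side. -/
def opp : Side → Side
  | left => right
  | right => left
  | top => bottom
  | bottom => top

/-- `k.join y z` attaches the string `y` to the side `k` of the string `z`. -/
def join : Side → Str2 A → Str2 A → Str2 A
  | left, y, z => y.hcat z
  | right, y, z => z.hcat y
  | top, y, z => y.vcat z
  | bottom, y, z => z.vcat y

/-- The string `y` can be attached to the side `k` of a `p × q` rectangle. -/
def Fits : Side → Str2 A → ℕ → ℕ → Prop
  | left, y, p, _ => p = y.h
  | right, y, p, _ => p = y.h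
  | top, y, _, q => q = y.w
  | bottom, y, _, q => q = y.w

/-- The partial map which attaches `y` to the side `k` of the strings of size `p × q`. -/
def wrap (k : Side) (y : Str2 A) (p q : ℕ) : Str2 A →. Str2 A := fun z =>
  ⟨k.Fits y p q ∧ z.h = p ∧ z.w = q, fun _ => k.join y z⟩

theorem mem_wrap {k : Side} {y z s : Str2 A} {p q : ℕ} :
    s ∈ k.wrap y p q z ↔ k.Fits y p q ∧ z.h = p ∧ z.w = q ∧ k.join y z = s := by
  simp only [wrap, Part.mem_mk_iff, exists_prop, and_assoc]

theorem join_opp (k : Side) (y z : Str2 A) : k.opp.join z y = k.join y z := by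
  cases k <;> rfl

theorem fits_opp {k : Side} {y z : Str2 A} (h : k.Fits y z.h z.w) : k.opp.Fits z y.h y.w := by
  cases k <;> exact h.symm

/-- Attaching `y` to `z` is attaching `z` to `y`: this turns a map with a fixed ground argument
into a map whose argument is that ground string. -/
theorem mem_wrap_opp {k : Side} {y z s : Str2 A} {p q : ℕ} (h : s ∈ k.wrap y p q z) :
    s ∈ k.opp.wrap z y.h y.w y := by
  obtain ⟨hfit, rfl, rfl, rfl⟩ := mem_wrap.1 h
  exact mem_wrap.2 ⟨fits_opp hfit, rfl, rfl, join_opp k y z⟩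

end Side

/-! ### Contexts as partial maps -/

namespace PartialMap

variable {α β γ : Type*} {f : β →. γ} {g : α →. β}

theorem mem_comp {a : α} {c : γ} : c ∈ f.comp g a ↔ ∃ b ∈ g a, c ∈ f b :=
  Part.mem_bind_iff

theorem dom_nonempty_left (h : (f.comp g).Dom.Nonempty) : f.Dom.Nonempty := by
  obtain ⟨a, ha⟩ := h
  obtain ⟨c, hc⟩ := (PFun.mem_dom _ _).1 ha
  obtain ⟨b, -, hb⟩ := mem_comp.1 hc
  exact ⟨b, (PFun.mem_dom _ _).2 ⟨c, hb⟩⟩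

theorem dom_nonempty_right (h : (f.comp g).Dom.Nonempty) : g.Dom.Nonempty := by
  obtain ⟨a, ha⟩ := h
  obtain ⟨c, hc⟩ := (PFun.mem_dom _ _).1 ha
  obtain ⟨b, hb, -⟩ := mem_comp.1 hc
  exact ⟨a, (PFun.mem_dom _ _).2 ⟨b, hb⟩⟩

end PartialMap

namespace Str2

variable {A : Type}

/-- The number of entries. -/
def area (z : Str2 A) : ℕ := z.h * z.w

theorem mk'_congr {h w h' w' : ℕ} {g g' : ℕ → ℕ → Option A} (hh : h = h') (hw : w = w')
    (hg : ∀ i j, i < h → j < w → g i j = g' i j) : mk' h w g = mk' h' w' g' := by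
  subst hh hw
  simp only [mk', mk.injEq, true_and]
  funext i j
  split_ifs with hij
  · exact hg i j hij.1 hij.2
  · rfl

theorem area_join {k : Side} {y z : Str2 A} (h : k.Fits y z.h z.w) :
    (k.join y z).area = y.area + z.area := by
  cases k <;> simp only [Side.Fits] at h <;>
    simp only [area, Side.join, hcat, vcat, mk', h] <;> ring

end Str2

namespace Ctx2

variable {A : Type}

/-- The hole lies inside the outer rectangle. -/
def Fits (C : Ctx2 A) : Prop := C.px + C.ph ≤ C.oh ∧ C.py + C.pw ≤ C.ow

/-- The number of entries of the outer rectangle. -/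
def outerArea (C : Ctx2 A) : ℕ := C.oh * C.ow

/-- The number of entries missing in the hole. -/
def holeArea (C : Ctx2 A) : ℕ := C.ph * C.pw

/-- The partial map on strings which fills the hole. -/
def toPFun (C : Ctx2 A) : Str2 A →. Str2 A := fun z => ⟨z.h = C.ph ∧ z.w = C.pw, fun _ => C.fill z⟩

theorem mem_toPFun {C : Ctx2 A} {y z : Str2 A} :
    y ∈ C.toPFun z ↔ z.h = C.ph ∧ z.w = C.pw ∧ C.fill z = y := by
  simp only [toPFun, Part.mem_mk_iff, exists_prop, and_assoc]

theorem toPFun_dom_nonempty (C : Ctx2 A) : C.toPFun.Dom.Nonempty :=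
  ⟨⟨C.ph, C.pw, fun _ _ => none⟩, rfl, rfl⟩

theorem fill_eq (C : Ctx2 A) (z : Str2 A) : C.fill z = Str2.mk' C.oh C.ow fun i j =>
    if C.px ≤ i ∧ i < C.px + C.ph ∧ C.py ≤ j ∧ j < C.py + C.pw then z.f (i - C.px) (j - C.py)
    else C.f i j := by
  refine Str2.mk'_congr rfl rfl fun i j _ _ => ?_
  simp only [inHole]

theorem comp_f (C D : Ctx2 A) (i j : ℕ) : (C.comp D).f i j =
    if i < C.oh ∧ j < C.ow ∧ ¬(C.px + D.px ≤ i ∧ i < C.px + D.px + D.ph ∧ C.py + D.py ≤ j ∧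
      j < C.py + D.py + D.pw) then
    (if C.px ≤ i ∧ i < C.px + C.ph ∧ C.py ≤ j ∧ j < C.py + C.pw then D.f (i - C.px) (j - C.py)
    else C.f i j) else none := by
  simp only [comp, mk', inHole]

theorem fill_comp {C D : Ctx2 A} (hD : D.Fits) (hh : C.ph = D.oh) (hw : C.pw = D.ow)
    (z : Str2 A) : (C.comp D).fill z = C.fill (D.fill z) := by
  obtain ⟨hD₁, hD₂⟩ := hD
  rw [fill_eq, fill_eq, fill_eq]
  refine Str2.mk'_congr rfl rfl fun i j hi hj => ?_
  rw [comp_f]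
  simp only [comp, mk', Str2.mk'] at hi hj ⊢
  split_ifs <;> first | rfl | omega | (simp only [Nat.sub_sub])

theorem Fits.comp {C D : Ctx2 A} (hC : C.Fits) (hD : D.Fits) (hh : C.ph = D.oh)
    (hw : C.pw = D.ow) : (C.comp D).Fits := by
  obtain ⟨hC₁, hC₂⟩ := hC
  obtain ⟨hD₁, hD₂⟩ := hD
  simp only [Fits, Ctx2.comp, mk']
  omega

theorem toPFun_comp {C D : Ctx2 A} (hD : D.Fits) (hh : C.ph = D.oh) (hw : C.pw = D.ow) :
    (C.comp D).toPFun = C.toPFun.comp D.toPFun := by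
  refine PFun.ext fun z y => ?_
  rw [PartialMap.mem_comp, mem_toPFun, fill_comp hD hh hw]
  constructor
  · rintro ⟨hzh, hzw, rfl⟩
    exact ⟨_, mem_toPFun.2 ⟨hzh, hzw, rfl⟩, mem_toPFun.2 ⟨hh.symm, hw.symm, rfl⟩⟩
  · rintro ⟨u, hu, hy⟩
    obtain ⟨hzh, hzw, rfl⟩ := mem_toPFun.1 hu
    exact ⟨hzh, hzw, (mem_toPFun.1 hy).2.2⟩

/-- The context which attaches `y` to the side `k` of a bare hole of size `p × q`. -/
def hole : Side → Str2 A → ℕ → ℕ → Ctx2 A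
  | .left, y, p, q => hcatSH y p q
  | .right, y, p, q => hcatHS p q y
  | .top, y, p, q => vcatSH y p q
  | .bottom, y, p, q => vcatHS p q y

/-- The context which attaches `y` to the side `k` of the context `C`. -/
def cat : Side → Str2 A → Ctx2 A → Ctx2 A
  | .left, y, C => hcatSC y C
  | .right, y, C => hcatCS C y
  | .top, y, C => vcatSC y C
  | .bottom, y, C => vcatCS C y

section

variable {k : Side} {y : Str2 A} {p q : ℕ} {C : Ctx2 A}

theorem hole_ph : (hole k y p q).ph = p := by cases k <;> rfl

theorem hole_pw : (hole k y p q).pw = q := by cases k <;> rfl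

theorem cat_ph : (cat k y C).ph = C.ph := by cases k <;> rfl

theorem cat_pw : (cat k y C).pw = C.pw := by cases k <;> rfl

theorem fits_hole (h : k.Fits y p q) : (hole k y p q).Fits := by
  cases k <;> simp only [Side.Fits] at h <;>
    simp only [Fits, hole, hcatSH, hcatHS, vcatSH, vcatHS, mk'] <;> omega

theorem Fits.cat (hC : C.Fits) (h : k.Fits y C.oh C.ow) : (cat k y C).Fits := by
  obtain ⟨hC₁, hC₂⟩ := hC
  cases k <;> simp only [Side.Fits] at h <;>
    simp only [Fits, Ctx2.cat, hcatSC, hcatCS, vcatSC, vcatCS, mk'] <;> omega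

theorem outerArea_hole (h : k.Fits y p q) : (hole k y p q).outerArea = y.area + p * q := by
  cases k <;> simp only [Side.Fits] at h <;>
    simp only [Str2.area, outerArea, hole, hcatSH, hcatHS, vcatSH, vcatHS, mk', h] <;> ring

theorem holeArea_hole : (hole k y p q).holeArea = p * q := by
  rw [holeArea, hole_ph, hole_pw]

theorem outerArea_cat (h : k.Fits y C.oh C.ow) :
    (cat k y C).outerArea = y.area + C.outerArea := by
  cases k <;> simp only [Side.Fits] at h <;>
    simp only [Str2.area, outerArea, cat, hcatSC, hcatCS, vcatSC, vcatCS, mk', h] <;> ring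

theorem holeArea_cat : (cat k y C).holeArea = C.holeArea := by
  rw [holeArea, holeArea, cat_ph, cat_pw]

theorem fill_hole {z : Str2 A} (h : k.Fits y z.h z.w) :
    (hole k y z.h z.w).fill z = k.join y z := by
  rw [fill_eq]
  cases k <;> simp only [Side.Fits, hole, Side.join] at h ⊢ <;>
    refine Str2.mk'_congr ?_ ?_ fun i j => ?_ <;>
    simp only [hcatSH, hcatHS, vcatSH, vcatHS, mk', zero_add, Nat.zero_le, true_and,
      Nat.sub_zero] <;>
    (try intro hi hj) <;> first | omega | (split_ifs <;> first | rfl | omega)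

theorem fill_cat {z : Str2 A} (hC : C.Fits) (h : k.Fits y C.oh C.ow) :
    (cat k y C).fill z = k.join y (C.fill z) := by
  obtain ⟨hC₁, hC₂⟩ := hC
  rw [fill_eq, fill_eq]
  cases k <;> simp only [Side.Fits, cat, Side.join] at h ⊢ <;>
    refine Str2.mk'_congr ?_ ?_ fun i j => ?_ <;>
    simp only [hcatSC, hcatCS, vcatSC, vcatCS, mk', Str2.mk'] <;>
    (try intro hi hj) <;>
    first | omega | (split_ifs <;> first | rfl | omega | (simp only [Nat.sub_sub]))

theorem toPFun_hole (h : k.Fits y p q) : (hole k y p q).toPFun = k.wrap y p q := by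
  refine PFun.ext fun z s => ?_
  rw [mem_toPFun, Side.mem_wrap, hole_ph, hole_pw]
  constructor
  · rintro ⟨rfl, rfl, rfl⟩
    exact ⟨h, rfl, rfl, (fill_hole h).symm⟩
  · rintro ⟨-, rfl, rfl, rfl⟩
    exact ⟨rfl, rfl, fill_hole h⟩

theorem toPFun_cat (hC : C.Fits) (h : k.Fits y C.oh C.ow) :
    (cat k y C).toPFun = (k.wrap y C.oh C.ow).comp C.toPFun := by
  refine PFun.ext fun z s => ?_
  rw [PartialMap.mem_comp, mem_toPFun, cat_ph, cat_pw, fill_cat hC h]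
  constructor
  · rintro ⟨hzh, hzw, rfl⟩
    exact ⟨_, mem_toPFun.2 ⟨hzh, hzw, rfl⟩, Side.mem_wrap.2 ⟨h, rfl, rfl, rfl⟩⟩
  · rintro ⟨u, hu, hs⟩
    obtain ⟨hzh, hzw, rfl⟩ := mem_toPFun.1 hu
    exact ⟨hzh, hzw, (Side.mem_wrap.1 hs).2.2.2⟩

end

end Ctx2

/-! ### Programs computing strings and contexts -/

/-- A string, or a context viewed as a partial map on strings. -/
abbrev Value (A : Type) := Str2 A ⊕ (Str2 A →. Str2 A)

/-- A grammar under construction: the values of its nonterminals, each with a rank which bounds the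
depth of its derivation tree. -/
abbrev Program (A : Type) := Finset (Value A × ℕ)

namespace Program

variable {A : Type}

/-- The value `x` occurs in the program with rank at most `r`. -/
def Available (S : Program A) (x : Value A) (r : ℕ) : Prop := ∃ r' ≤ r, (x, r') ∈ S

/-- The map `f` is available with rank at most `r`, or needs no nonterminal because it is the
identity. -/
def AvailableOrId (S : Program A) (f : Str2 A →. Str2 A) (r : ℕ) : Prop :=
  f = PFun.id _ ∨ S.Available (.inr f) r

/-- `S.Derivable x r` states that one production, whose operands have rank less than `r` in `S`,
yields the value `x`. -/
inductive Derivable (S : Program A) : Value A → ℕ → Prop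
  | chr (a : A) (r : ℕ) : Derivable S (.inl (Str2.single a)) r
  | fill {f : Str2 A →. Str2 A} {z y : Str2 A} {r : ℕ} :
      S.Available (.inr f) r → S.Available (.inl z) r → y ∈ f z → Derivable S (.inl y) (r + 1)
  | comp {f g : Str2 A →. Str2 A} {r : ℕ} :
      S.Available (.inr f) r → S.Available (.inr g) r → (f.comp g).Dom.Nonempty →
      Derivable S (.inr (f.comp g)) (r + 1)
  | wrap {k : Side} {y : Str2 A} {p q r : ℕ} :
      S.Available (.inl y) r → k.Fits y p q → Derivable S (.inr (k.wrap y p q)) (r + 1)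

/-- Every value of the program is derivable from values of smaller rank. -/
def Valid (S : Program A) : Prop := ∀ e ∈ S, S.Derivable e.1 e.2

/-- The program `S'` arises from `S` by adding at most `n` values. -/
structure Extends (S S' : Program A) (n : ℕ) : Prop where
  subset : S ⊆ S'
  card_le : S'.card ≤ S.card + n
  valid : S.Valid → S'.Valid

section

variable {S S' : Program A} {x : Value A} {r r' n m : ℕ}

theorem Available.mono (h : S.Available x r) (hS : S ⊆ S') (hr : r ≤ r') : S'.Available x r' := by
  obtain ⟨a, ha, hx⟩ := h
  exact ⟨a, ha.trans hr, hS hx⟩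

theorem Available.of_le (h : S.Available x r) (hr : r ≤ r') : S.Available x r' :=
  h.mono subset_rfl hr

theorem AvailableOrId.mono {f : Str2 A →. Str2 A} (h : S.AvailableOrId f r) (hS : S ⊆ S')
    (hr : r ≤ r') : S'.AvailableOrId f r' :=
  h.imp_right fun h => h.mono hS hr

theorem Derivable.mono (h : S.Derivable x r) (hS : S ⊆ S') : S'.Derivable x r := by
  cases h with
  | chr a => exact .chr a r
  | fill hf hz hy => exact .fill (hf.mono hS le_rfl) (hz.mono hS le_rfl) hy
  | comp hf hg hfg => exact .comp (hf.mono hS le_rfl) (hg.mono hS le_rfl) hfg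
  | wrap hy hfit => exact .wrap (hy.mono hS le_rfl) hfit

theorem Extends.refl (S : Program A) (n : ℕ) : S.Extends S n :=
  ⟨subset_rfl, Nat.le_add_right _ _, id⟩

theorem Extends.trans {S'' : Program A} (h : S.Extends S' n) (h' : S'.Extends S'' m) :
    S.Extends S'' (n + m) :=
  ⟨h.subset.trans h'.subset, by have := h.card_le; have := h'.card_le; omega, h'.valid ∘ h.valid⟩

theorem Extends.of_le (h : S.Extends S' n) (hn : n ≤ m) : S.Extends S' m :=
  ⟨h.subset, h.card_le.trans (Nat.add_le_add_left hn _), h.valid⟩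

theorem Derivable.exists_extends (h : S.Derivable x r) :
    ∃ S', S.Extends S' 1 ∧ S'.Available x r := by
  classical
  refine ⟨insert (x, r) S, ⟨Finset.subset_insert _ _, Finset.card_insert_le _ _, ?_⟩, r, le_rfl,
    Finset.mem_insert_self _ _⟩
  intro hS e he
  rcases Finset.mem_insert.1 he with rfl | he
  · exact h.mono (Finset.subset_insert _ _)
  · exact (hS e he).mono (Finset.subset_insert _ _)

end

section

variable {S : Program A} {f g : Str2 A →. Str2 A} {y z : Str2 A} {r : ℕ}

theorem Available.comp_right (hf : S.Available (.inr f) r) (hg : S.AvailableOrId g r)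
    (hfg : (f.comp g).Dom.Nonempty) :
    ∃ S', S.Extends S' 1 ∧ S'.Available (.inr (f.comp g)) (r + 1) := by
  rcases hg with rfl | hg
  · exact ⟨S, .refl S 1, by rw [PFun.comp_id]; exact hf.of_le (Nat.le_succ r)⟩
  · exact (Derivable.comp hf hg hfg).exists_extends

theorem AvailableOrId.comp_available (hf : S.AvailableOrId f r) (hg : S.Available (.inr g) r)
    (hfg : (f.comp g).Dom.Nonempty) :
    ∃ S', S.Extends S' 1 ∧ S'.Available (.inr (f.comp g)) (r + 1) := by
  rcases hf with rfl | hf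
  · exact ⟨S, .refl S 1, by rw [PFun.id_comp]; exact hg.of_le (Nat.le_succ r)⟩
  · exact (Derivable.comp hf hg hfg).exists_extends

theorem AvailableOrId.comp (hf : S.AvailableOrId f r) (hg : S.AvailableOrId g r)
    (hfg : (f.comp g).Dom.Nonempty) :
    ∃ S', S.Extends S' 1 ∧ S'.AvailableOrId (f.comp g) (r + 1) := by
  rcases hg with rfl | hg
  · exact ⟨S, .refl S 1, by rw [PFun.comp_id]; exact hf.mono subset_rfl (Nat.le_succ r)⟩
  · obtain ⟨S', hS', hfg'⟩ := hf.comp_available hg hfg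
    exact ⟨S', hS', .inr hfg'⟩

theorem AvailableOrId.apply (hf : S.AvailableOrId f r) (hz : S.Available (.inl z) r)
    (hy : y ∈ f z) : ∃ S', S.Extends S' 1 ∧ S'.Available (.inl y) (r + 1) := by
  rcases hf with rfl | hf
  · obtain rfl := Part.mem_some_iff.1 hy
    exact ⟨S, .refl S 1, hz.of_le (Nat.le_succ r)⟩
  · exact (Derivable.fill hf hz hy).exists_extends

theorem Available.conj {h : Str2 A →. Str2 A} (hg : S.Available (.inr g) r)
    (hf : S.AvailableOrId f r) (hh : S.AvailableOrId h r)
    (hdom : (f.comp (g.comp h)).Dom.Nonempty) :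
    ∃ S', S.Extends S' 2 ∧ S'.Available (.inr (f.comp (g.comp h))) (r + 2) := by
  obtain ⟨S₁, e₁, hgh⟩ := hg.comp_right hh (PartialMap.dom_nonempty_right hdom)
  obtain ⟨S₂, e₂, hfgh⟩ := (hf.mono e₁.subset (Nat.le_succ r)).comp_available hgh hdom
  exact ⟨S₂, e₁.trans e₂, hfgh⟩

end

/-! ### Linear maps -/

/-- The value `a` produces the string `s`: either `a` is `s`, or `a` is a context and `s` is
obtained by filling it with an available string. -/
inductive Plug (S : Program A) (r : ℕ) : Value A → Str2 A → Prop
  | ground (s : Str2 A) : Plug S r (.inl s) s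
  | context {f : Str2 A →. Str2 A} {t s : Str2 A} :
      S.Available (.inl t) r → s ∈ f t → Plug S r (.inr f) s

/-- The string `y` is obtained by substituting the string produced by `a` into an available
context. -/
def GroundMap (S : Program A) (r : ℕ) (a : Value A) (y : Str2 A) : Prop :=
  ∃ f s, S.Plug r a s ∧ S.AvailableOrId f r ∧ y ∈ f s

/-- `S.LinearImage r a b` states that `b` is the image of `a` under a linear map, one which uses its
argument once, whose coefficients have rank at most `r` in `S`. These maps are closed under
composition and have boundedly many coefficients. -/
inductive LinearImage (S : Program A) (r : ℕ) : Value A → Value A → Prop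
  | ground {a : Value A} {y : Str2 A} : S.GroundMap r a y → LinearImage S r a (.inl y)
  | wrap {a : Value A} {f h : Str2 A →. Str2 A} {k : Side} {y : Str2 A} {p q : ℕ} :
      S.AvailableOrId f r → S.AvailableOrId h r → S.GroundMap r a y →
      (f.comp ((k.wrap y p q).comp h)).Dom.Nonempty →
      LinearImage S r a (.inr (f.comp ((k.wrap y p q).comp h)))
  | conj {f g h : Str2 A →. Str2 A} :
      S.AvailableOrId f r → S.AvailableOrId h r → (f.comp (g.comp h)).Dom.Nonempty →
      LinearImage S r (.inr g) (.inr (f.comp (g.comp h)))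

section

variable {S S' : Program A} {a b c : Value A} {r r' : ℕ}

theorem Plug.mono {s : Str2 A} (h : S.Plug r a s) (hS : S ⊆ S') (hr : r ≤ r') :
    S'.Plug r' a s := by
  cases h with
  | ground => exact .ground _
  | context ht hs => exact .context (ht.mono hS hr) hs

theorem GroundMap.mono {y : Str2 A} (h : S.GroundMap r a y) (hS : S ⊆ S') (hr : r ≤ r') :
    S'.GroundMap r' a y := by
  obtain ⟨f, s, hs, hf, hy⟩ := h
  exact ⟨f, s, hs.mono hS hr, hf.mono hS hr, hy⟩

theorem LinearImage.mono (h : S.LinearImage r a b) (hS : S ⊆ S') (hr : r ≤ r') :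
    S'.LinearImage r' a b := by
  cases h with
  | ground hy => exact .ground (hy.mono hS hr)
  | wrap hf hh hy hdom => exact .wrap (hf.mono hS hr) (hh.mono hS hr) (hy.mono hS hr) hdom
  | conj hf hh hdom => exact .conj (hf.mono hS hr) (hh.mono hS hr) hdom

theorem GroundMap.postcomp {g : Str2 A →. Str2 A} {y y' : Str2 A} (h : S.GroundMap r a y)
    (hg : S.AvailableOrId g r) (hy' : y' ∈ g y) :
    ∃ S', S.Extends S' 1 ∧ S'.GroundMap (r + 1) a y' := by
  obtain ⟨f, s, hs, hf, hy⟩ := h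
  have hmem : y' ∈ g.comp f s := PartialMap.mem_comp.2 ⟨y, hy, hy'⟩
  obtain ⟨S₁, e₁, hgf⟩ := hg.comp hf ⟨s, (PFun.mem_dom _ _).2 ⟨y', hmem⟩⟩
  exact ⟨S₁, e₁, _, s, hs.mono e₁.subset (Nat.le_succ r), hgf, hmem⟩

/-- Substituting an available string `t` into a context built around `y` is, with the roles of the
two strings exchanged, a ground map applied to `y`. -/
theorem GroundMap.comp_wrap {f g h : Str2 A →. Str2 A} {k : Side} {p q : ℕ} {y t s x : Str2 A}
    (hy : S.GroundMap r a y) (hg : S.AvailableOrId g r) (hf : S.AvailableOrId f r)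
    (hh : S.AvailableOrId h r) (ht : S.Available (.inl t) r)
    (hs : s ∈ f.comp ((k.wrap y p q).comp h) t) (hx : x ∈ g s) :
    ∃ S', S.Extends S' 5 ∧ S'.GroundMap (r + 5) a x := by
  obtain ⟨u, hu, hs⟩ := PartialMap.mem_comp.1 hs
  obtain ⟨v, hv, hu⟩ := PartialMap.mem_comp.1 hu
  have hflip := Side.mem_wrap_opp hu
  obtain ⟨S₁, e₁, hv⟩ := hh.apply ht hv
  obtain ⟨S₂, e₂, hwrap⟩ := (Derivable.wrap hv (Side.mem_wrap.1 hflip).1).exists_extends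
  have e₁₂ := e₁.trans e₂
  obtain ⟨S₃, e₃, hu⟩ :=
    (hy.mono e₁₂.subset (show r ≤ r + 2 by omega)).postcomp (.inr hwrap) hflip
  have e₁₃ := e₁₂.trans e₃
  obtain ⟨S₄, e₄, hs⟩ := hu.postcomp (hf.mono e₁₃.subset (show r ≤ r + 3 by omega)) hs
  have e₁₄ := e₁₃.trans e₄
  obtain ⟨S₅, e₅, hx⟩ := hs.postcomp (hg.mono e₁₄.subset (show r ≤ r + 4 by omega)) hx
  exact ⟨S₅, e₁₄.trans e₅, hx⟩

theorem GroundMap.comp {y : Str2 A} (hy : S.GroundMap r b y) (hab : S.LinearImage r a b) :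
    ∃ S', S.Extends S' 5 ∧ S'.GroundMap (r + 5) a y := by
  obtain ⟨g, s, hs, hg, hy⟩ := hy
  cases hab with
  | ground hb =>
    obtain ⟨z⟩ := hs
    obtain ⟨S₁, e₁, hay⟩ := hb.postcomp hg hy
    exact ⟨S₁, e₁.of_le (by omega), hay.mono subset_rfl (by omega)⟩
  | wrap hf hh hz hdom =>
    obtain - | ⟨ht, hs⟩ := hs
    exact hz.comp_wrap hg hf hh ht hs hy
  | conj hf hh hdom =>
    obtain - | ⟨ht, hs⟩ := hs
    obtain ⟨u, hu, hs⟩ := PartialMap.mem_comp.1 hs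
    obtain ⟨v, hv, hu⟩ := PartialMap.mem_comp.1 hu
    obtain ⟨S₁, e₁, hv⟩ := hh.apply ht hv
    have hau : S₁.GroundMap (r + 1) (.inr _) u := ⟨PFun.id _, u, .context hv hu, .inl rfl,
      Part.mem_some u⟩
    obtain ⟨S₂, e₂, has⟩ := hau.postcomp (hf.mono e₁.subset (Nat.le_succ r)) hs
    obtain ⟨S₃, e₃, hay⟩ := has.postcomp
      (hg.mono (e₁.trans e₂).subset (show r ≤ r + 2 by omega)) hy
    exact ⟨S₃, ((e₁.trans e₂).trans e₃).of_le (by omega), hay.mono subset_rfl (by omega)⟩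

theorem LinearImage.conj_comp {f g h : Str2 A →. Str2 A} (hf : S.AvailableOrId f r)
    (hh : S.AvailableOrId h r) (hdom : (f.comp (g.comp h)).Dom.Nonempty)
    (hg : S.LinearImage r a (.inr g)) :
    ∃ S', S.Extends S' 2 ∧ S'.LinearImage (r + 2) a (.inr (f.comp (g.comp h))) := by
  have assoc (f' g' h' : Str2 A →. Str2 A) :
      f.comp ((f'.comp (g'.comp h')).comp h) = (f.comp f').comp (g'.comp (h'.comp h)) := by
    simp only [PFun.comp_assoc]
  have extend {f' g' h' : Str2 A →. Str2 A} (hf' : S.AvailableOrId f' r)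
      (hh' : S.AvailableOrId h' r)
      (hdom : ((f.comp f').comp (g'.comp (h'.comp h))).Dom.Nonempty) :
      ∃ S', S.Extends S' 2 ∧ S'.AvailableOrId (f.comp f') (r + 2) ∧
        S'.AvailableOrId (h'.comp h) (r + 2) := by
    obtain ⟨S₁, e₁, hff'⟩ := hf.comp hf' (PartialMap.dom_nonempty_left hdom)
    obtain ⟨S₂, e₂, hhh'⟩ := (hh'.mono e₁.subset le_rfl).comp (hh.mono e₁.subset le_rfl)
      (PartialMap.dom_nonempty_right (PartialMap.dom_nonempty_right hdom))
    exact ⟨S₂, e₁.trans e₂, hff'.mono e₂.subset (by omega), hhh'.mono subset_rfl (by omega)⟩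
  cases hg with
  | wrap hf' hh' hy _ =>
    rw [assoc] at hdom ⊢
    obtain ⟨S₁, e₁, hff', hhh'⟩ := extend hf' hh' hdom
    exact ⟨S₁, e₁, .wrap hff' hhh' (hy.mono e₁.subset (by omega)) hdom⟩
  | conj hf' hh' _ =>
    rw [assoc] at hdom ⊢
    obtain ⟨S₁, e₁, hff', hhh'⟩ := extend hf' hh' hdom
    exact ⟨S₁, e₁, .conj hff' hhh' hdom⟩

theorem LinearImage.comp (hbc : S.LinearImage r b c) (hab : S.LinearImage r a b) :
    ∃ S', S.Extends S' 5 ∧ S'.LinearImage (r + 5) a c := by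
  cases hbc with
  | ground hy =>
    obtain ⟨S₁, e₁, hay⟩ := hy.comp hab
    exact ⟨S₁, e₁, .ground hay⟩
  | wrap hf hh hy hdom =>
    obtain ⟨S₁, e₁, hay⟩ := hy.comp hab
    exact ⟨S₁, e₁, .wrap (hf.mono e₁.subset (by omega)) (hh.mono e₁.subset (by omega)) hay hdom⟩
  | conj hf hh hdom =>
    obtain ⟨S₁, e₁, hac⟩ := LinearImage.conj_comp hf hh hdom hab
    exact ⟨S₁, e₁.of_le (by omega), hac.mono subset_rfl (by omega)⟩

theorem GroundMap.apply {y : Str2 A} (h : S.GroundMap r a y) (ha : S.Available a r) :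
    ∃ S', S.Extends S' 2 ∧ S'.Available (.inl y) (r + 2) := by
  obtain ⟨f, s, hs, hf, hy⟩ := h
  obtain ⟨S₁, e₁, hs⟩ : ∃ S', S.Extends S' 1 ∧ S'.Available (.inl s) (r + 1) := by
    cases hs with
    | ground => exact ⟨S, .refl S 1, ha.of_le (Nat.le_succ r)⟩
    | context ht hs => exact AvailableOrId.apply (.inr ha) ht hs
  obtain ⟨S₂, e₂, hy⟩ := (hf.mono e₁.subset (Nat.le_succ r)).apply hs hy
  exact ⟨S₂, e₁.trans e₂, hy⟩

theorem LinearImage.apply (h : S.LinearImage r a b) (ha : S.Available a r) :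
    ∃ S', S.Extends S' 5 ∧ S'.Available b (r + 5) := by
  cases h with
  | ground hy =>
    obtain ⟨S₁, e₁, hy⟩ := hy.apply ha
    exact ⟨S₁, e₁.of_le (by omega), hy.of_le (by omega)⟩
  | wrap hf hh hy hdom =>
    obtain ⟨x, hx⟩ := PartialMap.dom_nonempty_left (PartialMap.dom_nonempty_right hdom)
    obtain ⟨S₁, e₁, hy⟩ := hy.apply ha
    obtain ⟨S₂, e₂, hwrap⟩ := (Derivable.wrap hy hx.1).exists_extends
    have e₁₂ := e₁.trans e₂
    obtain ⟨S₃, e₃, hb⟩ := hwrap.conj (hf.mono e₁₂.subset (show r ≤ r + 3 by omega))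
      (hh.mono e₁₂.subset (show r ≤ r + 3 by omega)) hdom
    exact ⟨S₃, e₁₂.trans e₃, hb⟩
  | conj hf hh hdom =>
    obtain ⟨S₁, e₁, hb⟩ := ha.conj hf hh hdom
    exact ⟨S₁, e₁.of_le (by omega), hb.of_le (by omega)⟩

end

end Program

/-! ### Balancing a path -/

/-- Binary trees whose leaves, from left to right, are the integers of the interval `[i, k)`. -/
inductive IntervalTree : ℕ → ℕ → Type
  | leaf (i : ℕ) : IntervalTree i (i + 1)
  | node {i j k : ℕ} : IntervalTree i j → IntervalTree j k → IntervalTree i k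

namespace IntervalTree

/-- The depth of the leaf `p`; the value is irrelevant if `p` is not a leaf. -/
def depth : {i k : ℕ} → IntervalTree i k → ℕ → ℕ
  | _, _, leaf _, _ => 0
  | _, _, @node _ j _ l r, p => (if p < j then l.depth p else r.depth p) + 1

theorem lt {i k : ℕ} (t : IntervalTree i k) : i < k := by
  induction t with
  | leaf i => exact Nat.lt_succ_self i
  | node _ _ hl hr => exact hl.trans hr

section

variable {i j k p : ℕ} (l : IntervalTree i j) (r : IntervalTree j k)

theorem depth_node_of_lt (hp : p < j) : (node l r).depth p = l.depth p + 1 := by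
  rw [depth, if_pos hp]

theorem depth_node_of_le (hp : j ≤ p) : (node l r).depth p = r.depth p + 1 := by
  rw [depth, if_neg hp.not_gt]

end

open Finset

theorem exists_weighted_median (a : ℕ → ℕ) {i k : ℕ} (hik : i < k) :
    ∃ x, i ≤ x ∧ x < k ∧ 2 * ∑ p ∈ Ico i x, a p ≤ ∑ p ∈ Ico i k, a p ∧
      2 * ∑ p ∈ Ico (x + 1) k, a p ≤ ∑ p ∈ Ico i k, a p := by
  have hex : ∃ x, i ≤ x ∧ ∑ p ∈ Ico i k, a p ≤ 2 * ∑ p ∈ Ico i (x + 1), a p := by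
    refine ⟨k - 1, by omega, ?_⟩
    rw [Nat.sub_add_cancel (by omega)]
    omega
  classical
  obtain ⟨hix, hx⟩ := Nat.find_spec hex
  set x := Nat.find hex
  have hxk : x < k := by
    have : x ≤ k - 1 := Nat.find_min' hex ⟨by omega, by
      rw [Nat.sub_add_cancel (by omega)]
      omega⟩
    omega
  refine ⟨x, hix, hxk, ?_, ?_⟩
  · rcases hix.eq_or_lt with h | h
    · rw [← h, Ico_self, sum_empty]
      exact Nat.zero_le _
    · have := Nat.find_min hex (m := x - 1) (by omega)
      rw [not_and, Nat.sub_add_cancel (by omega)] at this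
      exact (not_le.1 (this (by omega))).le
  · have := sum_Ico_consecutive a (show i ≤ x + 1 by omega) hxk
    omega

/-- The tree splits at a weighted median, which becomes a leaf of depth at most two, so that two
levels halve the total weight. -/
theorem exists_balanced (a : ℕ → ℕ) {i k : ℕ} (hik : i < k) : ∃ t : IntervalTree i k,
    ∀ p, i ≤ p → p < k → 2 ^ t.depth p * a p ^ 2 ≤ 4 * (∑ q ∈ Ico i k, a q) ^ 2 := by
  induction hn : k - i using Nat.strong_induction_on generalizing i k with
  | _ n ih =>
  subst hn
  obtain ⟨x, hix, hxk, hleft, hright⟩ := exists_weighted_median a hik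
  set W := ∑ q ∈ Ico i k, a q
  have single (p : ℕ) (hip : i ≤ p) (hpk : p < k) : a p ^ 2 ≤ W ^ 2 :=
    Nat.pow_le_pow_left (single_le_sum (f := a) (fun _ _ => Nat.zero_le _)
      (mem_Ico.2 ⟨hip, hpk⟩)) 2
  have halve {d y U : ℕ} (hU : 2 * U ≤ W) (h : 2 ^ d * y ≤ 4 * U ^ 2) :
      2 ^ (d + 2) * y ≤ 4 * W ^ 2 := by
    have := Nat.pow_le_pow_left hU 2
    rw [pow_add]
    nlinarith
  obtain ⟨r, hr⟩ : ∃ r : IntervalTree x k, ∀ p, x ≤ p → p < k →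
      2 ^ (r.depth p + 1) * a p ^ 2 ≤ 4 * W ^ 2 := by
    rcases (show x + 1 ≤ k from hxk).eq_or_lt with rfl | hxk'
    · refine ⟨leaf x, fun p hxp hpk => ?_⟩
      have := single p (hix.trans hxp) hpk
      rw [depth]
      omega
    · obtain ⟨t, ht⟩ := ih (k - (x + 1)) (by omega) hxk' rfl
      refine ⟨node (leaf x) t, fun p hxp hpk => ?_⟩
      rcases hxp.eq_or_lt with rfl | hxp
      · rw [depth_node_of_lt _ _ (Nat.lt_succ_self x), depth]
        have := single x hix hxk
        omega
      · rw [depth_node_of_le _ _ hxp]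
        exact halve hright (ht p hxp hpk)
  rcases hix.eq_or_lt with rfl | hix'
  · refine ⟨r, fun p hp hpk => le_trans ?_ (hr p hp hpk)⟩
    gcongr <;> omega
  · obtain ⟨l, hl⟩ := ih (x - i) (by omega) hix' rfl
    refine ⟨node l r, fun p hip hpk => ?_⟩
    rcases lt_or_ge p x with hpx | hxp
    · rw [depth_node_of_lt _ _ hpx]
      refine le_trans ?_ (halve hleft (hl p hip hpx))
      gcongr <;> omega
    · rw [depth_node_of_le _ _ hxp]
      exact hr p hxp hpk

variable {A : Type} {X : ℕ → Value A}

/-- For each subinterval `[i, k)` of the tree, a linear map of rank at most `M` in `S` sends `X k`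
to `X i`. -/
def HasMaps (X : ℕ → Value A) (S : Program A) (M : ℕ) : {i k : ℕ} → IntervalTree i k → Prop
  | _, _, leaf i => S.LinearImage M (X (i + 1)) (X i)
  | i, k, node l r => l.HasMaps X S M ∧ r.HasMaps X S M ∧ S.LinearImage M (X k) (X i)

section

variable {S S' : Program A} {M M' i k : ℕ} {t : IntervalTree i k}

theorem HasMaps.linearImage (h : t.HasMaps X S M) : S.LinearImage M (X k) (X i) := by
  cases t with
  | leaf => exact h
  | node => exact h.2.2

theorem HasMaps.mono (h : t.HasMaps X S M) (hS : S ⊆ S') (hM : M ≤ M') : t.HasMaps X S' M' := by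
  induction t with
  | leaf => exact Program.LinearImage.mono h hS hM
  | node l r hl hr => exact ⟨hl h.1, hr h.2.1, h.2.2.mono hS hM⟩

end

theorem exists_hasMaps {i k : ℕ} (t : IntervalTree i k) {S₀ S : Program A} {M : ℕ} {σ : ℕ → ℕ}
    (hS : S₀ ⊆ S)
    (hstep : ∀ p, i ≤ p → p < k → ∀ S, S₀ ⊆ S →
      ∃ S', S.Extends S' 1 ∧ S'.LinearImage (σ p) (X (p + 1)) (X p))
    (hσ : ∀ p, i ≤ p → p < k → σ p + 5 * t.depth p ≤ M) :
    ∃ S', S.Extends S' (6 * (k - i) - 5) ∧ t.HasMaps X S' M := by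
  induction t generalizing S M with
  | leaf i =>
    obtain ⟨S₁, e₁, h⟩ := hstep i le_rfl (Nat.lt_succ_self i) S hS
    exact ⟨S₁, e₁.of_le (by omega), h.mono subset_rfl (hσ i le_rfl (Nat.lt_succ_self i))⟩
  | @node i j k l r ihl ihr =>
    have hij := l.lt
    have hjk := r.lt
    have hσl (p : ℕ) (hip : i ≤ p) (hpj : p < j) : σ p + 5 * l.depth p + 5 ≤ M := by
      have := hσ p hip (hpj.trans hjk)
      rw [depth_node_of_lt _ _ hpj] at this
      omega
    have hσr (p : ℕ) (hjp : j ≤ p) (hpk : p < k) : σ p + 5 * r.depth p + 5 ≤ M := by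
      have := hσ p (hij.le.trans hjp) hpk
      rw [depth_node_of_le _ _ hjp] at this
      omega
    have hM := hσl i le_rfl hij
    obtain ⟨S₁, e₁, hl⟩ := ihl (M := M - 5) hS (fun p hip hpj => hstep p hip (hpj.trans hjk))
      fun p hip hpj => by have := hσl p hip hpj; omega
    obtain ⟨S₂, e₂, hr⟩ := ihr (M := M - 5) (hS.trans e₁.subset)
      (fun p hjp => hstep p (hij.le.trans hjp)) fun p hjp hpk => by have := hσr p hjp hpk; omega
    obtain ⟨S₃, e₃, h⟩ := (hl.linearImage.mono e₂.subset le_rfl).comp hr.linearImage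
    exact ⟨S₃, ((e₁.trans e₂).trans e₃).of_le (by omega),
      hl.mono (e₂.subset.trans e₃.subset) (by omega), hr.mono e₃.subset (by omega),
      h.mono subset_rfl (by omega)⟩

theorem HasMaps.exists_available {i k : ℕ} {t : IntervalTree i k} {S : Program A} {M τ : ℕ}
    (h : t.HasMaps X S M) (hτ : M ≤ τ) (hX : S.Available (X k) τ) :
    ∃ S', S.Extends S' (10 * (k - i) - 5) ∧
      ∀ p, i ≤ p → p < k → S'.Available (X p) (τ + 5 * (t.depth p + 1)) := by
  induction t generalizing S τ with
  | leaf i =>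
    obtain ⟨S₁, e₁, hX⟩ := (h.linearImage.mono subset_rfl hτ).apply hX
    refine ⟨S₁, e₁.of_le (by omega), fun p hip hpi => ?_⟩
    obtain rfl : p = i := by omega
    exact hX
  | @node i j k l r ihl ihr =>
    have hij := l.lt
    have hjk := r.lt
    obtain ⟨S₁, e₁, hXj⟩ := (h.2.1.linearImage.mono subset_rfl hτ).apply hX
    obtain ⟨S₂, e₂, hr⟩ := ihr (h.2.1.mono e₁.subset le_rfl) hτ (hX.mono e₁.subset le_rfl)
    obtain ⟨S₃, e₃, hl⟩ := ihl (τ := τ + 5) (h.1.mono (e₁.subset.trans e₂.subset) le_rfl)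
      (by omega) (hXj.mono e₂.subset le_rfl)
    refine ⟨S₃, ((e₁.trans e₂).trans e₃).of_le (by omega), fun p hip hpk => ?_⟩
    rcases lt_or_ge p j with hpj | hjp
    · rw [depth_node_of_lt _ _ hpj]
      exact (hl p hip hpj).of_le (by omega)
    · rw [depth_node_of_le _ _ hjp]
      exact (hr p hjp hpk).mono e₃.subset (by omega)

end IntervalTree

/-! ### Centroid paths -/

/-- A directed acyclic multigraph with weights such that the weight of every vertex exceeds the
total weight of its children. -/
structure WeightedDAG (V : Type) where
  root : V
  children : V → Multiset V
  weight : V → ℕ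
  sum_weight_lt : ∀ v, ((children v).map weight).sum < weight v

namespace WeightedDAG

variable {V : Type} (G : WeightedDAG V)

theorem weight_pos (v : V) : 0 < G.weight v := (Nat.zero_le _).trans_lt (G.sum_weight_lt v)

theorem weight_le_sum {s : Multiset V} {v : V} (h : v ∈ s) :
    G.weight v ≤ (s.map G.weight).sum :=
  Multiset.single_le_sum (fun _ _ => Nat.zero_le _) _ (Multiset.mem_map_of_mem _ h)

theorem weight_lt {u v : V} (h : v ∈ G.children u) : G.weight v < G.weight u :=
  (G.weight_le_sum h).trans_lt (G.sum_weight_lt u)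

theorem weight_add_le {u v c : V} {s : Multiset V} (hs : G.children u = v ::ₘ s) (hc : c ∈ s) :
    G.weight c + G.weight v ≤ G.weight u := by
  have hsum := G.sum_weight_lt u
  have := G.weight_le_sum hc
  rw [hs, Multiset.map_cons, Multiset.sum_cons] at hsum
  omega

section

variable [DecidableEq V]

/-- The adjacency matrix, with the multiplicities of the edges as entries. -/
def adj : Matrix V V ℕ := Matrix.of fun u v => (G.children u).count v

theorem adj_apply (u v : V) : G.adj u v = (G.children u).count v := rfl

theorem mem_children_of_adj_ne_zero {u v : V} (h : G.adj u v ≠ 0) : v ∈ G.children u :=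
  Multiset.count_ne_zero.1 h

end

variable [Fintype V] [DecidableEq V]

open Finset

/-- The matrix whose entry at `u, v` is the number of paths from `u` to `v`. -/
def paths : Matrix V V ℕ := ∑ k ∈ range (∑ v, G.weight v), G.adj ^ k

/-- The number of paths from the root. -/
def pathCount (v : V) : ℕ := G.paths G.root v

theorem sum_adj_mul_weight_le (u : V) : ∑ v, G.adj u v * G.weight v ≤ G.weight u := by
  refine le_trans (le_of_eq ?_) (G.sum_weight_lt u).le
  rw [sum_multiset_map_count]
  refine (sum_subset (subset_univ _) fun v _ hv => ?_).symm
  rw [Multiset.mem_toFinset, ← Multiset.count_eq_zero] at hv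
  rw [adj_apply, hv, zero_mul]

theorem weight_add_le_of_adj_pow_ne_zero (k : ℕ) {u v : V} (h : (G.adj ^ k) u v ≠ 0) :
    G.weight v + k ≤ G.weight u := by
  induction k generalizing u with
  | zero =>
    rw [pow_zero, Matrix.one_apply] at h
    obtain rfl : u = v := by_contra fun huv => h (if_neg huv)
    exact le_rfl
  | succ k ih =>
    rw [pow_succ', Matrix.mul_apply] at h
    obtain ⟨c, -, hc⟩ := exists_ne_zero_of_sum_ne_zero h
    have := G.weight_lt (G.mem_children_of_adj_ne_zero (left_ne_zero_of_mul hc))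
    have := ih (right_ne_zero_of_mul hc)
    omega

theorem adj_pow_eq_zero : G.adj ^ (∑ v, G.weight v) = 0 := by
  ext u v
  by_contra h
  have := G.weight_add_le_of_adj_pow_ne_zero _ h
  have := single_le_sum (f := G.weight) (fun _ _ => Nat.zero_le _) (mem_univ u)
  have := G.weight_pos v
  omega

theorem paths_eq_adj_mul : G.paths = G.adj * G.paths + 1 := by
  have := geom_sum_succ (x := G.adj) (n := ∑ v, G.weight v)
  rwa [geom_sum_succ', adj_pow_eq_zero, zero_add] at this

theorem paths_eq_mul_adj : G.paths = G.paths * G.adj + 1 := by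
  have hcomm : Commute G.adj G.paths :=
    Commute.sum_right _ _ _ fun k _ => (Commute.refl G.adj).pow_right k
  rw [← hcomm.eq]
  exact G.paths_eq_adj_mul

theorem weight_le_of_paths_ne_zero {u v : V} (h : G.paths u v ≠ 0) :
    G.weight v ≤ G.weight u := by
  rw [paths, Matrix.sum_apply] at h
  obtain ⟨k, -, hk⟩ := exists_ne_zero_of_sum_ne_zero h
  exact (Nat.le_add_right _ k).trans (G.weight_add_le_of_adj_pow_ne_zero k hk)

theorem paths_self (v : V) : G.paths v v = 1 := by
  rw [paths_eq_adj_mul, Matrix.add_apply, Matrix.mul_apply, Matrix.one_apply_eq,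
    Finset.sum_eq_zero, zero_add]
  intro c _
  by_contra h
  have := G.weight_lt (G.mem_children_of_adj_ne_zero (left_ne_zero_of_mul h))
  have := G.weight_le_of_paths_ne_zero (right_ne_zero_of_mul h)
  omega

theorem paths_mul_weight_le (u v : V) : G.paths u v * G.weight v ≤ G.weight u := by
  induction hn : G.weight u using Nat.strong_induction_on generalizing u with
  | _ n ih =>
  subst hn
  rcases eq_or_ne u v with rfl | huv
  · rw [paths_self, one_mul]
  · rw [paths_eq_adj_mul, Matrix.add_apply, Matrix.one_apply_ne huv, add_zero, Matrix.mul_apply,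
      sum_mul]
    refine (sum_le_sum fun c _ => ?_).trans (G.sum_adj_mul_weight_le u)
    rw [mul_assoc]
    rcases eq_or_ne (G.adj u c) 0 with h | h
    · rw [h, zero_mul, zero_mul]
    · exact Nat.mul_le_mul_left _
        (ih _ (G.weight_lt (G.mem_children_of_adj_ne_zero h)) c rfl)

theorem pathCount_mul_weight_le (v : V) : G.pathCount v * G.weight v ≤ G.weight G.root :=
  G.paths_mul_weight_le G.root v

theorem log_pathCount_le (v : V) :
    Nat.log 2 (G.pathCount v) ≤ Nat.log 2 (G.weight G.root) :=
  Nat.log_mono_right ((Nat.le_mul_of_pos_right _ (G.weight_pos v)).trans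
    (G.pathCount_mul_weight_le v))

theorem pathCount_eq (v : V) : G.pathCount v =
    (if G.root = v then 1 else 0) + ∑ u, G.pathCount u * G.adj u v := by
  unfold pathCount
  conv_lhs => rw [paths_eq_mul_adj, Matrix.add_apply, Matrix.mul_apply, Matrix.one_apply]
  exact add_comm _ _

theorem pathCount_le_mul_adj {u v : V} (h : v ∈ G.children u) :
    G.pathCount u ≤ G.pathCount u * G.adj u v :=
  Nat.le_mul_of_pos_right _ (Multiset.count_pos.2 h)

/-- The edges of the symmetric centroid decomposition: along `u → v` neither the weight nor the
number of paths from the root changes its order of magnitude. -/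
def CentroidEdge (u v : V) : Prop :=
  v ∈ G.children u ∧ Nat.log 2 (G.weight u) = Nat.log 2 (G.weight v) ∧
    Nat.log 2 (G.pathCount u) = Nat.log 2 (G.pathCount v) ∧ 0 < G.pathCount u

instance : DecidableRel G.CentroidEdge := fun _ _ => inferInstanceAs (Decidable (_ ∧ _))

/-- The number of paths from the root whose last edge, if any, is not a centroid edge. -/
def sideCount (v : V) : ℕ :=
  (if G.root = v then 1 else 0) + ∑ u with ¬G.CentroidEdge u v, G.pathCount u * G.adj u v

theorem pathCount_eq_sideCount_add (v : V) : G.pathCount v =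
    G.sideCount v + ∑ u with G.CentroidEdge u v, G.pathCount u * G.adj u v := by
  rw [pathCount_eq, sideCount, add_assoc, add_comm (∑ u with ¬_, _), sum_filter_add_sum_filter_not]

theorem sideCount_root_pos : 0 < G.sideCount G.root := by
  rw [sideCount, if_pos rfl]
  omega

section

variable {G} {u u' v c : V}

theorem sideCount_le (v : V) : G.sideCount v ≤ G.pathCount v := by
  rw [pathCount_eq_sideCount_add]
  exact Nat.le_add_right _ _

theorem pathCount_le_of_mem_children (h : v ∈ G.children u) : G.pathCount u ≤ G.pathCount v := by
  rw [G.pathCount_eq v]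
  have := single_le_sum (f := fun u => G.pathCount u * G.adj u v) (fun _ _ => Nat.zero_le _)
    (mem_univ u)
  have := G.pathCount_le_mul_adj h
  omega

theorem CentroidEdge.sideCount_add_pathCount_le (h : G.CentroidEdge u v) :
    G.sideCount v + G.pathCount u ≤ G.pathCount v := by
  rw [G.pathCount_eq_sideCount_add v]
  exact Nat.add_le_add_left ((G.pathCount_le_mul_adj h.1).trans
    (single_le_sum (f := fun u => G.pathCount u * G.adj u v) (fun _ _ => Nat.zero_le _)
      (mem_filter.2 ⟨mem_univ u, h⟩))) _

theorem pathCount_le_sideCount (hv : v ∈ G.children u) (h : ¬G.CentroidEdge u v) :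
    G.pathCount u ≤ G.sideCount v :=
  ((G.pathCount_le_mul_adj hv).trans
    (single_le_sum (f := fun u => G.pathCount u * G.adj u v) (fun _ _ => Nat.zero_le _)
      (mem_filter.2 ⟨mem_univ u, h⟩))).trans (Nat.le_add_left _ _)

theorem CentroidEdge.source_unique (h : G.CentroidEdge u v) (h' : G.CentroidEdge u' v) :
    u = u' := by
  by_contra hne
  have hsum : G.pathCount u + G.pathCount u' ≤ G.pathCount v := by
    refine (Nat.add_le_add (G.pathCount_le_mul_adj h.1) (G.pathCount_le_mul_adj h'.1)).trans ?_
    rw [G.pathCount_eq v, ← sum_pair (f := fun u => G.pathCount u * G.adj u v) hne]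
    exact (sum_le_sum_of_subset (subset_univ _)).trans (Nat.le_add_left _ _)
  have hu := Nat.pow_log_le_self 2 h.2.2.2.ne'
  have hu' := Nat.pow_log_le_self 2 h'.2.2.2.ne'
  have hv := Nat.lt_pow_succ_log_self one_lt_two (G.pathCount v)
  rw [h.2.2.1] at hu
  rw [h'.2.2.1] at hu'
  rw [pow_succ] at hv
  omega

theorem CentroidEdge.not_centroidEdge (h : G.CentroidEdge u v) {s : Multiset V}
    (hs : G.children u = v ::ₘ s) (hc : c ∈ s) : ¬G.CentroidEdge u c := by
  intro h'
  have := G.weight_add_le hs hc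
  have hwc := Nat.pow_log_le_self 2 (G.weight_pos c).ne'
  have hwv := Nat.pow_log_le_self 2 (G.weight_pos v).ne'
  have hwu := Nat.lt_pow_succ_log_self one_lt_two (G.weight u)
  rw [← h'.2.1] at hwc
  rw [← h.2.1] at hwv
  rw [pow_succ] at hwu
  omega

end

/-- The sequence `x 0, …, x n` is a path of centroid edges. -/
def IsCentroidPath (x : ℕ → V) (n : ℕ) : Prop := ∀ i < n, G.CentroidEdge (x i) (x (i + 1))

variable {G}

theorem exists_isCentroidPath (v : V) : ∃ (x : ℕ → V) (n : ℕ), x 0 = v ∧ G.IsCentroidPath x n ∧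
    ∀ u, ¬G.CentroidEdge (x n) u := by
  induction hn : G.weight v using Nat.strong_induction_on generalizing v with
  | _ N ih =>
  subst hn
  by_cases h : ∃ u, G.CentroidEdge v u
  · obtain ⟨u, hu⟩ := h
    obtain ⟨x, n, rfl, hx, hlast⟩ := ih _ (G.weight_lt hu.1) u rfl
    refine ⟨fun | 0 => v | i + 1 => x i, n + 1, rfl, ?_, hlast⟩
    rintro (_ | i) hi
    · exact hu
    · exact hx i (by omega)
  · exact ⟨fun _ => v, 0, rfl, fun i hi => absurd hi i.not_lt_zero, not_exists.1 h⟩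

namespace IsCentroidPath

variable {x : ℕ → V} {n : ℕ}

theorem log_weight_eq (h : G.IsCentroidPath x n) {i : ℕ} (hi : i ≤ n) :
    Nat.log 2 (G.weight (x i)) = Nat.log 2 (G.weight (x 0)) := by
  induction i with
  | zero => rfl
  | succ i ih => rw [← (h i hi).2.1, ih (by omega)]

theorem log_pathCount_eq (h : G.IsCentroidPath x n) {i : ℕ} (hi : i ≤ n) :
    Nat.log 2 (G.pathCount (x i)) = Nat.log 2 (G.pathCount (x 0)) := by
  induction i with
  | zero => rfl
  | succ i ih => rw [← (h i hi).2.2.1, ih (by omega)]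

theorem pathCount_pos (h : G.IsCentroidPath x n) (h₀ : 0 < G.pathCount (x 0)) {i : ℕ}
    (hi : i ≤ n) : 0 < G.pathCount (x i) := by
  induction i with
  | zero => exact h₀
  | succ i ih => exact (ih (by omega)).trans_le (pathCount_le_of_mem_children (h i hi).1)

theorem injOn (h : G.IsCentroidPath x n) : Set.InjOn x (range (n + 1)) := by
  have hanti : StrictAntiOn (G.weight ∘ x) (Set.Iic n) :=
    strictAntiOn_Iic_of_succ_lt fun i hi => G.weight_lt (h i hi).1
  rw [coe_range, ← Order.succ_eq_add_one, Order.Iio_succ]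
  exact Set.InjOn.of_comp hanti.injOn

theorem sum_sideCount_le (h : G.IsCentroidPath x n) :
    ∑ i ∈ range n, G.sideCount (x i) ≤ G.pathCount (x n) := by
  have hle : ∀ j ≤ n, ∑ i ∈ range (j + 1), G.sideCount (x i) ≤ G.pathCount (x j) := by
    intro j hj
    induction j with
    | zero =>
      rw [sum_range_one]
      exact sideCount_le _
    | succ j ih =>
      rw [sum_range_succ]
      have := ih (by omega)
      have := (h j hj).sideCount_add_pathCount_le
      omega
  have := hle n le_rfl
  rw [sum_range_succ] at this
  omega

theorem sum_weight_sub_le (h : G.IsCentroidPath x n) :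
    ∑ i ∈ range n, (G.weight (x i) - G.weight (x (i + 1))) ≤ G.weight (x 0) := by
  have hle : ∀ j ≤ n, ∑ i ∈ range j, (G.weight (x i) - G.weight (x (i + 1))) +
      G.weight (x j) ≤ G.weight (x 0) := by
    intro j hj
    induction j with
    | zero => rw [sum_range_zero, zero_add]
    | succ j ih =>
      rw [sum_range_succ]
      have := ih (by omega)
      have := G.weight_lt (h j hj).1
      omega
  exact (Nat.le_add_right _ _).trans (hle n le_rfl)

theorem sum_mul_add_mul_le (h : G.IsCentroidPath x n) :
    ∑ i ∈ range n, (G.sideCount (x i) * 2 ^ Nat.log 2 (G.weight (x 0)) +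
      (G.weight (x i) - G.weight (x (i + 1))) * 2 ^ Nat.log 2 (G.pathCount (x 0))) ≤
    2 ^ (Nat.log 2 (G.weight (x 0)) + Nat.log 2 (G.pathCount (x 0)) + 2) := by
  have hside := h.sum_sideCount_le.trans (Nat.lt_pow_succ_log_self one_lt_two _).le
  rw [h.log_pathCount_eq le_rfl, pow_succ] at hside
  have hweight := h.sum_weight_sub_le.trans (Nat.lt_pow_succ_log_self one_lt_two _).le
  rw [pow_succ] at hweight
  rw [sum_add_distrib, ← sum_mul, ← sum_mul]
  refine (Nat.add_le_add (Nat.mul_le_mul_right _ hside) (Nat.mul_le_mul_right _ hweight)).trans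
    (le_of_eq ?_)
  ring

end IsCentroidPath

theorem add_two_mul_log_le {d k m s a y : ℕ} (h : 2 ^ d * a ^ 2 ≤ 4 * s ^ 2)
    (hs : s ≤ 2 ^ (k + m + 2)) (hy : 0 < y) (ha : y * 2 ^ m ≤ a) :
    d + 2 * Nat.log 2 y ≤ 2 * k + 6 := by
  have hpow : 2 ^ (d + 2 * Nat.log 2 y + 2 * m) ≤ 2 ^ (2 * k + 6 + 2 * m) := by
    calc 2 ^ (d + 2 * Nat.log 2 y + 2 * m) = 2 ^ d * (2 ^ Nat.log 2 y * 2 ^ m) ^ 2 := by ring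
      _ ≤ 2 ^ d * a ^ 2 := by
        gcongr
        exact (Nat.mul_le_mul_right _ (Nat.pow_log_le_self 2 hy.ne')).trans ha
      _ ≤ 4 * s ^ 2 := h
      _ ≤ 4 * (2 ^ (k + m + 2)) ^ 2 := by gcongr
      _ = 2 ^ (2 * k + 6 + 2 * m) := by ring
  have := (Nat.pow_le_pow_iff_right one_lt_two).1 hpow
  omega

/-- The tree balances `sideCount * weight` and `weight * pathCount` simultaneously, so that both the
edges entering the path from outside and the edges leaving it are charged logarithmic depth. -/
theorem IsCentroidPath.exists_tree {x : ℕ → V} {n : ℕ} (h : G.IsCentroidPath x n) (hn : 0 < n) :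
    ∃ t : IntervalTree 0 n, ∀ i < n,
      (∀ y, 0 < y → y + G.weight (x (i + 1)) ≤ G.weight (x i) →
        t.depth i + 2 * Nat.log 2 y ≤ 2 * Nat.log 2 (G.weight (x 0)) + 6) ∧
      (0 < G.sideCount (x i) → t.depth i + 2 * Nat.log 2 (G.sideCount (x i)) ≤
        2 * Nat.log 2 (G.pathCount (x 0)) + 6) := by
  obtain ⟨t, ht⟩ := IntervalTree.exists_balanced
    (fun i => G.sideCount (x i) * 2 ^ Nat.log 2 (G.weight (x 0)) +
      (G.weight (x i) - G.weight (x (i + 1))) * 2 ^ Nat.log 2 (G.pathCount (x 0))) hn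
  simp only [← range_eq_Ico] at ht
  have hsum := h.sum_mul_add_mul_le
  refine ⟨t, fun i hi => ⟨fun y hy hyw => ?_, fun hpos => ?_⟩⟩
  · refine add_two_mul_log_le (ht i i.zero_le hi) hsum hy (le_trans ?_ (Nat.le_add_left _ _))
    exact Nat.mul_le_mul_right _ (by omega)
  · refine add_two_mul_log_le (ht i i.zero_le hi) (hsum.trans_eq ?_) hpos (Nat.le_add_right _ _)
    ring

end WeightedDAG

/-! ### Balancing a program -/

/-- `Production x s` states that one production of a grammar yields the value `x` from operands with
the values `s`. -/
inductive Production {A : Type} : Value A → Multiset (Value A) → Prop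
  | chr (a : A) : Production (.inl (Str2.single a)) 0
  | join {k : Side} {y z : Str2 A} : k.Fits y z.h z.w →
      Production (.inl (k.join y z)) {.inl y, .inl z}
  | fill {f : Str2 A →. Str2 A} {y z : Str2 A} : y ∈ f z →
      Production (.inl y) {.inr f, .inl z}
  | cat {k : Side} {y : Str2 A} {p q : ℕ} {f : Str2 A →. Str2 A} :
      ((k.wrap y p q).comp f).Dom.Nonempty →
      Production (.inr ((k.wrap y p q).comp f)) {.inl y, .inr f}
  | hole {k : Side} {y : Str2 A} {p q : ℕ} : k.Fits y p q →
      Production (.inr (k.wrap y p q)) {.inl y}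
  | comp {f g : Str2 A →. Str2 A} : (f.comp g).Dom.Nonempty →
      Production (.inr (f.comp g)) {.inr f, .inr g}

section

open Multiset

theorem cons_eq_pair {α : Type*} {a b c : α} {s : Multiset α} (h : c ::ₘ s = {a, b}) :
    c = a ∧ s = {b} ∨ c = b ∧ s = {a} := by
  rcases cons_eq_cons.1 h with h | ⟨-, t, rfl, ht⟩
  · exact .inl h
  · obtain ⟨rfl, rfl⟩ := (singleton_eq_cons_iff t).1 ht
    exact .inr ⟨rfl, rfl⟩

end

namespace Side

variable {A : Type} {k : Side} {y z : Str2 A} {p q : ℕ}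

theorem join_mem_wrap (h : k.Fits y z.h z.w) : k.join y z ∈ k.wrap y z.h z.w z :=
  mem_wrap.2 ⟨h, rfl, rfl, rfl⟩

theorem fits_of_dom_nonempty (h : (k.wrap y p q).Dom.Nonempty) : k.Fits y p q := by
  obtain ⟨z, hz⟩ := h
  exact hz.1

theorem wrap_dom_nonempty (h : k.Fits y p q) : (k.wrap y p q).Dom.Nonempty :=
  ⟨⟨p, q, fun _ _ => none⟩, h, rfl, rfl⟩

end Side

namespace Program

variable {A : Type} {S : Program A} {f g : Str2 A →. Str2 A} {y z : Str2 A} {k : Side} {p q r : ℕ}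

theorem Available.exists_linearImage_join (hy : S.Available (.inl y) r) (h : k.Fits y z.h z.w) :
    ∃ S', S.Extends S' 1 ∧ S'.LinearImage (r + 1) (.inl z) (.inl (k.join y z)) := by
  obtain ⟨S₁, e₁, hw⟩ := (Derivable.wrap hy h).exists_extends
  exact ⟨S₁, e₁, .ground ⟨_, z, .ground z, .inr hw, Side.join_mem_wrap h⟩⟩

theorem LinearImage.wrap_comp (hf : S.AvailableOrId f r)
    (hdom : ((k.wrap y p q).comp f).Dom.Nonempty) :
    S.LinearImage r (.inl y) (.inr ((k.wrap y p q).comp f)) := by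
  rw [← PFun.id_comp (PFun.comp _ _)] at hdom ⊢
  exact .wrap (.inl rfl) hf ⟨PFun.id _, y, .ground y, .inl rfl, Part.mem_some y⟩ hdom

theorem LinearImage.comp_left (hf : S.Available (.inr f) r) (hdom : (f.comp g).Dom.Nonempty) :
    S.LinearImage r (.inr g) (.inr (f.comp g)) := by
  have := LinearImage.conj (g := g) (.inr hf) (.inl rfl) (by rwa [PFun.comp_id])
  rwa [PFun.comp_id] at this

theorem LinearImage.comp_right (hg : S.Available (.inr g) r) (hdom : (f.comp g).Dom.Nonempty) :
    S.LinearImage r (.inr f) (.inr (f.comp g)) := by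
  have := LinearImage.conj (g := f) (.inl rfl) (.inr hg) (by rwa [PFun.id_comp])
  rwa [PFun.id_comp] at this

end Program

namespace Production

open Program

variable {A : Type} {S : Program A} {x c : Value A} {s : Multiset (Value A)} {r : ℕ}

theorem exists_available (h : Production x s) (hs : ∀ a ∈ s, S.Available a r) :
    ∃ S', S.Extends S' 2 ∧ S'.Available x (r + 2) := by
  cases h with
  | chr a =>
    obtain ⟨S₁, e₁, hx⟩ := (Derivable.chr (S := S) a r).exists_extends
    exact ⟨S₁, e₁.of_le (by omega), hx.of_le (by omega)⟩
  | join hfit =>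
    obtain ⟨S₁, e₁, hw⟩ := (Derivable.wrap (hs _ (by simp)) hfit).exists_extends
    obtain ⟨S₂, e₂, hx⟩ := (Derivable.fill hw ((hs _ (by simp)).mono e₁.subset (Nat.le_succ r))
      (Side.join_mem_wrap hfit)).exists_extends
    exact ⟨S₂, e₁.trans e₂, hx⟩
  | fill hy =>
    obtain ⟨S₁, e₁, hx⟩ := (Derivable.fill (hs _ (by simp)) (hs _ (by simp)) hy).exists_extends
    exact ⟨S₁, e₁.of_le (by omega), hx.of_le (by omega)⟩
  | cat hdom =>
    obtain ⟨S₁, e₁, hw⟩ := (Derivable.wrap (hs _ (by simp))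
      (Side.fits_of_dom_nonempty (PartialMap.dom_nonempty_left hdom))).exists_extends
    obtain ⟨S₂, e₂, hx⟩ := (Derivable.comp hw ((hs _ (by simp)).mono e₁.subset (Nat.le_succ r))
      hdom).exists_extends
    exact ⟨S₂, e₁.trans e₂, hx⟩
  | hole hfit =>
    obtain ⟨S₁, e₁, hx⟩ := (Derivable.wrap (hs _ (by simp)) hfit).exists_extends
    exact ⟨S₁, e₁.of_le (by omega), hx.of_le (by omega)⟩
  | comp hdom =>
    obtain ⟨S₁, e₁, hx⟩ := (Derivable.comp (hs _ (by simp)) (hs _ (by simp)) hdom).exists_extends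
    exact ⟨S₁, e₁.of_le (by omega), hx.of_le (by omega)⟩

theorem exists_linearImage (h : Production x (c ::ₘ s)) (hs : ∀ a ∈ s, S.Available a r) :
    ∃ S', S.Extends S' 1 ∧ S'.LinearImage (r + 1) c x := by
  generalize hm : c ::ₘ s = m at h
  have operand {b : Value A} (hb : s = {b}) : S.Available b r :=
    hs b (hb ▸ Multiset.mem_singleton_self b)
  have of_old {a b : Value A} (h : S.LinearImage r a b) :
      ∃ S', S.Extends S' 1 ∧ S'.LinearImage (r + 1) a b :=
    ⟨S, .refl S 1, h.mono subset_rfl (Nat.le_succ r)⟩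
  cases h with
  | chr => exact absurd hm Multiset.cons_ne_zero
  | join hfit =>
    obtain ⟨rfl, hb⟩ | ⟨rfl, hb⟩ := cons_eq_pair hm
    · rw [← Side.join_opp]
      exact (operand hb).exists_linearImage_join (Side.fits_opp hfit)
    · exact (operand hb).exists_linearImage_join hfit
  | @fill f y z hy =>
    obtain ⟨rfl, hb⟩ | ⟨rfl, hb⟩ := cons_eq_pair hm
    · exact of_old (.ground ⟨PFun.id _, y, .context (operand hb) hy, .inl rfl, Part.mem_some y⟩)
    · exact of_old (.ground ⟨f, z, .ground z, .inr (operand hb), hy⟩)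
  | cat hdom =>
    obtain ⟨rfl, hb⟩ | ⟨rfl, hb⟩ := cons_eq_pair hm
    · exact of_old (.wrap_comp (.inr (operand hb)) hdom)
    · obtain ⟨S₁, e₁, hw⟩ := (Derivable.wrap (operand hb)
        (Side.fits_of_dom_nonempty (PartialMap.dom_nonempty_left hdom))).exists_extends
      exact ⟨S₁, e₁, .comp_left hw hdom⟩
  | @hole k y p q hfit =>
    obtain ⟨rfl, -⟩ := (Multiset.singleton_eq_cons_iff s).1 hm.symm
    have hdom := Side.wrap_dom_nonempty hfit
    rw [← PFun.comp_id (k.wrap y p q)] at hdom ⊢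
    exact of_old (.wrap_comp (.inl rfl) hdom)
  | comp hdom =>
    obtain ⟨rfl, hb⟩ | ⟨rfl, hb⟩ := cons_eq_pair hm
    · exact of_old (.comp_right (operand hb) hdom)
    · exact of_old (.comp_left (operand hb) hdom)

end Production

namespace WeightedDAG

variable {V : Type}

section

variable [Fintype V] [DecidableEq V] (G : WeightedDAG V)

open Finset

/-- The potential of the centroid decomposition, which drops along all other edges: the order of
magnitude of the weight decreases and that of the number of paths from the root increases. -/
def level (v : V) : ℕ :=
  Nat.log 2 (G.weight v) + (Nat.log 2 (G.weight G.root) - Nat.log 2 (G.pathCount v))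

/-- The rank at which the vertex `v` becomes available in the balanced program. -/
def rankBound (v : V) : ℕ :=
  10 * (Nat.log 2 (G.weight v) + (Nat.log 2 (G.weight G.root) - Nat.log 2 (G.sideCount v))) +
    66 * (G.level v + 1)

variable {G} {u v : V}

theorem CentroidEdge.level_eq (h : G.CentroidEdge u v) : G.level v = G.level u := by
  rw [level, level, h.2.1, h.2.2.1]

theorem level_lt (h : v ∈ G.children u) (hu : 0 < G.pathCount u) (hside : ¬G.CentroidEdge u v) :
    G.level v < G.level u := by
  have hw := Nat.log_mono_right (b := 2) (G.weight_lt h).le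
  have he := Nat.log_mono_right (b := 2) (pathCount_le_of_mem_children h)
  have hne : ¬(Nat.log 2 (G.weight u) = Nat.log 2 (G.weight v) ∧
      Nat.log 2 (G.pathCount u) = Nat.log 2 (G.pathCount v)) :=
    fun hne => hside ⟨h, hne.1, hne.2, hu⟩
  have := G.log_pathCount_le v
  unfold level
  omega

theorem rankBound_add_le (h : v ∈ G.children u) (hu : 0 < G.pathCount u)
    (hside : ¬G.CentroidEdge u v) :
    G.rankBound v + 10 * Nat.log 2 (G.weight u) ≤
      76 * G.level u + 10 * Nat.log 2 (G.weight v) := by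
  have := level_lt h hu hside
  have := Nat.log_mono_right (b := 2) (pathCount_le_sideCount h hside)
  unfold rankBound level at *
  omega

theorem level_add_le_rankBound (v : V) :
    76 * G.level v + 10 * Nat.log 2 (G.pathCount v) + 66 ≤
      G.rankBound v + 10 * Nat.log 2 (G.sideCount v) := by
  have := G.log_pathCount_le v
  have := Nat.log_mono_right (b := 2) (sideCount_le (G := G) v)
  unfold rankBound level
  omega

theorem rankBound_root_le : G.rankBound G.root ≤ 152 * Nat.log 2 (G.weight G.root) + 66 := by
  unfold rankBound level
  omega

namespace IsCentroidPath

theorem level_eq {x : ℕ → V} {n : ℕ} (h : G.IsCentroidPath x n) {i : ℕ} (hi : i ≤ n) :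
    G.level (x i) = G.level (x 0) := by
  rw [level, level, h.log_weight_eq hi, h.log_pathCount_eq hi]

variable {A : Type} {val : V → Value A} {x : ℕ → V} {n : ℕ} {S : Program A}

theorem ne_of_not_centroidEdge (h : G.IsCentroidPath x n) (h₀ : 0 < G.pathCount (x 0)) {i j : ℕ}
    (hi : i ≤ n) (hj : j ≤ n) (hv : v ∈ G.children (x i)) (hside : ¬G.CentroidEdge (x i) v) :
    x j ≠ v := by
  rintro rfl
  have := level_lt hv (h.pathCount_pos h₀ hi) hside
  rw [h.level_eq hi, h.level_eq hj] at this
  exact lt_irrefl _ this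

theorem exists_available_last (h : G.IsCentroidPath x n) (h₀ : 0 < G.pathCount (x 0))
    (hval : ∀ v, Production (val v) ((G.children v).map val))
    (hlast : ∀ u, ¬G.CentroidEdge (x n) u)
    (hS : ∀ c ∈ G.children (x n), S.Available (val c) (G.rankBound c)) :
    ∃ S', S.Extends S' 2 ∧ S'.Available (val (x n)) (76 * G.level (x 0) + 2) := by
  refine (hval (x n)).exists_available fun a ha => ?_
  obtain ⟨c, hc, rfl⟩ := Multiset.mem_map.1 ha
  refine (hS c hc).of_le ?_
  have := rankBound_add_le hc (h.pathCount_pos h₀ le_rfl) (hlast c)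
  have := Nat.log_mono_right (b := 2) (G.weight_lt hc).le
  rw [← h.level_eq le_rfl]
  omega

theorem exists_hasMaps (h : G.IsCentroidPath x n) (h₀ : 0 < G.pathCount (x 0))
    (hval : ∀ v, Production (val v) ((G.children v).map val)) {t : IntervalTree 0 n}
    (ht : ∀ i < n, ∀ y, 0 < y → y + G.weight (x (i + 1)) ≤ G.weight (x i) →
      t.depth i + 2 * Nat.log 2 y ≤ 2 * Nat.log 2 (G.weight (x 0)) + 6)
    (hS : ∀ i < n, ∀ c ∈ G.children (x i), ¬G.CentroidEdge (x i) c →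
      S.Available (val c) (G.rankBound c)) :
    ∃ S', S.Extends S' (6 * n - 5) ∧
      t.HasMaps (fun i => val (x i)) S' (76 * G.level (x 0) + 31) := by
  have hdepth (i : ℕ) (hi : i < n) : 5 * t.depth i + 1 ≤ 76 * G.level (x 0) + 31 := by
    have := ht i hi 1 one_pos (by have := G.weight_lt (h i hi).1; omega)
    unfold level
    rw [Nat.log_one_right] at this
    omega
  refine t.exists_hasMaps (σ := fun i => 76 * G.level (x 0) + 31 - 5 * t.depth i) subset_rfl
    (fun i _ hi S' hSS' => ?_) fun i _ hi => by have := hdepth i hi; omega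
  obtain ⟨s, hs⟩ := Multiset.exists_cons_of_mem (h i hi).1
  have hprod := hval (x i)
  rw [hs, Multiset.map_cons] at hprod
  have hside (a : Value A) (ha : a ∈ s.map val) :
      S'.Available a (76 * G.level (x 0) + 30 - 5 * t.depth i) := by
    obtain ⟨c, hc, rfl⟩ := Multiset.mem_map.1 ha
    have hmem : c ∈ G.children (x i) := hs ▸ Multiset.mem_cons_of_mem hc
    have hcent := (h i hi).not_centroidEdge hs hc
    refine (hS i hi c hmem hcent).mono hSS' ?_
    have hrank := rankBound_add_le hmem (h.pathCount_pos h₀ hi.le) hcent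
    have := ht i hi _ (G.weight_pos c) (G.weight_add_le hs hc)
    rw [h.log_weight_eq hi.le, h.level_eq hi.le] at hrank
    omega
  obtain ⟨S₁, e₁, hmap⟩ := hprod.exists_linearImage hside
  exact ⟨S₁, e₁, hmap.mono subset_rfl (by have := hdepth i hi; omega)⟩

theorem exists_available (h : G.IsCentroidPath x n) (h₀ : 0 < G.pathCount (x 0))
    (hval : ∀ v, Production (val v) ((G.children v).map val))
    (hlast : ∀ u, ¬G.CentroidEdge (x n) u)
    (hS : ∀ i ≤ n, ∀ c ∈ G.children (x i), ¬G.CentroidEdge (x i) c →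
      S.Available (val c) (G.rankBound c)) :
    ∃ S', S.Extends S' (16 * (n + 1)) ∧
      ∀ i ≤ n, 0 < G.sideCount (x i) → S'.Available (val (x i)) (G.rankBound (x i)) := by
  obtain ⟨S₁, e₁, hxn⟩ := h.exists_available_last h₀ hval hlast
    fun c hc => hS n le_rfl c hc (hlast c)
  have hxn' : S₁.Available (val (x n)) (G.rankBound (x n)) := by
    refine hxn.of_le ?_
    have := level_add_le_rankBound (G := G) (x n)
    have := Nat.log_mono_right (b := 2) (sideCount_le (G := G) (x n))
    rw [← h.level_eq le_rfl]
    omega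
  rcases n.eq_zero_or_pos with rfl | hn
  · refine ⟨S₁, e₁.of_le (by omega), fun i hi _ => ?_⟩
    rwa [Nat.le_zero.1 hi]
  obtain ⟨t, ht⟩ := h.exists_tree hn
  obtain ⟨S₂, e₂, hmaps⟩ := h.exists_hasMaps h₀ hval (fun i hi => (ht i hi).1)
    fun i hi c hc hside => (hS i hi.le c hc hside).mono e₁.subset le_rfl
  obtain ⟨S₃, e₃, hx⟩ := hmaps.exists_available le_rfl (hxn.mono e₂.subset (by omega))
  refine ⟨S₃, ((e₁.trans e₂).trans e₃).of_le (by omega), fun i hi hpos => ?_⟩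
  rcases hi.lt_or_eq with hi | rfl
  · refine (hx i i.zero_le hi).of_le ?_
    have hrank := level_add_le_rankBound (G := G) (x i)
    have := (ht i hi).2 hpos
    rw [h.level_eq hi.le, h.log_pathCount_eq hi.le] at hrank
    omega
  · exact hxn'.mono (e₂.trans e₃).subset le_rfl

end IsCentroidPath

/-- A maximal centroid path starting at `v` may be processed after all other vertices of `s` if no
edge of `s` enters it from outside, which holds when `v` has maximal level and, among those, maximal
weight. -/
theorem exists_removable_path {s : Finset V} (hs : s.Nonempty) (hpos : ∀ v ∈ s, 0 < G.pathCount v)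
    (hchildren : ∀ u ∈ s, ∀ c ∈ G.children u, c ∈ s) :
    ∃ (x : ℕ → V) (n : ℕ), G.IsCentroidPath x n ∧ (∀ u, ¬G.CentroidEdge (x n) u) ∧
      (∀ i ≤ n, x i ∈ s) ∧ ∀ u ∈ s, ∀ i ≤ n, x i ∈ G.children u → ∃ j ≤ n, u = x j := by
  obtain ⟨v, hv, hmax⟩ := s.exists_max_image (fun v => toLex (G.level v, G.weight v)) hs
  obtain ⟨x, n, rfl, hx, hlast⟩ := exists_isCentroidPath (G := G) v
  refine ⟨x, n, hx, hlast, fun i => ?_, fun u hu i hi hc => ?_⟩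
  · induction i with
    | zero => exact fun _ => hv
    | succ i ih => exact fun hi => hchildren _ (ih (by omega)) _ (hx i hi).1
  · have hle := Prod.Lex.toLex_le_toLex.1 (hmax u hu)
    by_cases hside : G.CentroidEdge u (x i)
    · rcases i with _ | i
      · have := G.weight_lt hc
        have := hside.level_eq
        omega
      · exact ⟨i, by omega, hside.source_unique (hx i hi)⟩
    · have := level_lt hc (hpos u hu) hside
      have := hx.level_eq hi
      omega

theorem exists_program {A : Type} {val : V → Value A}
    (hval : ∀ v, Production (val v) ((G.children v).map val)) (s : Finset V)
    (hpos : ∀ v ∈ s, 0 < G.pathCount v) (hchildren : ∀ u ∈ s, ∀ c ∈ G.children u, c ∈ s) :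
    ∃ S : Program A, S.Valid ∧ S.card ≤ 16 * s.card ∧
      ∀ v ∈ s, 0 < G.sideCount v → S.Available (val v) (G.rankBound v) := by
  induction hN : s.card using Nat.strong_induction_on generalizing s with
  | _ N ih =>
  subst hN
  rcases s.eq_empty_or_nonempty with rfl | hs
  · exact ⟨∅, fun _ h => absurd h (notMem_empty _), Nat.zero_le _,
      fun _ h => absurd h (notMem_empty _)⟩
  obtain ⟨x, n, hx, hlast, hmem, henter⟩ := exists_removable_path hs hpos hchildren
  set P := (range (n + 1)).image x
  have mem_P (v : V) : v ∈ P ↔ ∃ i ≤ n, x i = v := by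
    simp only [P, mem_image, mem_range, Nat.lt_succ_iff]
  have hcard : (s \ P).card + (n + 1) = s.card := by
    have hsub : P ⊆ s := by
      simpa only [P, image_subset_iff, mem_range, Nat.lt_succ_iff] using hmem
    rw [← card_sdiff_add_card_eq_card hsub, card_image_of_injOn hx.injOn, card_range]
  have hrest : ∀ u ∈ s \ P, ∀ c ∈ G.children u, c ∈ s \ P := by
    intro u hu c hc
    rw [mem_sdiff] at hu ⊢
    refine ⟨hchildren u hu.1 c hc, fun hcP => hu.2 ?_⟩
    obtain ⟨i, hi, rfl⟩ := (mem_P c).1 hcP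
    obtain ⟨j, hj, rfl⟩ := henter u hu.1 i hi hc
    exact (mem_P _).2 ⟨j, hj, rfl⟩
  obtain ⟨S, hS, hScard, hrank⟩ := ih (s \ P).card (by omega) (s \ P)
    (fun v hv => hpos v (mem_sdiff.1 hv).1) hrest rfl
  have h₀ := hpos _ (hmem 0 n.zero_le)
  obtain ⟨S', e, hS'⟩ := hx.exists_available h₀ hval hlast (S := S) fun i hi c hc hside => by
    refine hrank c (mem_sdiff.2 ⟨hchildren _ (hmem i hi) c hc, fun hcP => ?_⟩)
      ((hpos _ (hmem i hi)).trans_le (pathCount_le_sideCount hc hside))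
    obtain ⟨j, hj, hjc⟩ := (mem_P c).1 hcP
    exact hx.ne_of_not_centroidEdge h₀ hi hj hc hside hjc
  refine ⟨S', e.valid hS, by have := e.card_le; omega, fun v hv hv_pos => ?_⟩
  by_cases hvP : v ∈ P
  · obtain ⟨i, hi, rfl⟩ := (mem_P v).1 hvP
    exact hS' i hi hv_pos
  · exact (hrank v (mem_sdiff.2 ⟨hv, hvP⟩) hv_pos).mono e.subset le_rfl

end

theorem exists_balanced_program [Fintype V] (G : WeightedDAG V) {A : Type} {val : V → Value A}
    (hval : ∀ v, Production (val v) ((G.children v).map val)) :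
    ∃ S : Program A, S.Valid ∧ S.card ≤ 16 * Fintype.card V ∧
      S.Available (val G.root) (152 * Nat.log 2 (G.weight G.root) + 66) := by
  classical
  obtain ⟨S, hS, hcard, hrank⟩ := exists_program hval {v | 0 < G.pathCount v}
    (fun v hv => (Finset.mem_filter_univ v).1 hv) fun u hu c hc => (Finset.mem_filter_univ c).2
      (((Finset.mem_filter_univ u).1 hu).trans_le (pathCount_le_of_mem_children hc))
  have hroot := G.sideCount_root_pos
  exact ⟨S, hS, hcard.trans (Nat.mul_le_mul_left _ (Finset.card_le_univ _)),
    (hrank G.root ((Finset.mem_filter_univ _).2 (hroot.trans_le (sideCount_le _))) hroot).of_le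
      rankBound_root_le⟩

end WeightedDAG

/-! ### The grammar as a weighted DAG -/

/-- The expansion of a nonterminal: a string or a context. -/
abbrev Expansion (A : Type) := Str2 A ⊕ Ctx2 A

namespace Expansion

variable {A : Type}

/-- A string, or the partial map which fills the hole of a context. -/
def toValue : Expansion A → Value A := Sum.map id Ctx2.toPFun

/-- Nondegeneracy: the expansion has an entry, and the hole of a context lies inside its outer
rectangle. -/
def Proper : Expansion A → Prop
  | .inl y => 0 < y.area
  | .inr C => C.Fits ∧ C.holeArea < C.outerArea

/-- The number of entries, scaled and shifted (junk on improper expansions) so that every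
production, also one with a single operand, has smaller total weight on its right-hand side. -/
def weight : Expansion A → ℕ
  | .inl y => 3 * y.area - 2
  | .inr C => 3 * (C.outerArea - C.holeArea) - 1

/-- `Rule x s` states that one production of a well-formed grammar derives `x` from nonterminals
with the expansions `s`. -/
inductive Rule : Expansion A → Multiset (Expansion A) → Prop
  | chr (a : A) : Rule (.inl (Str2.single a)) 0
  | join {k : Side} {y z : Str2 A} : k.Fits y z.h z.w →
      Rule (.inl (k.join y z)) {.inl y, .inl z}
  | fill {C : Ctx2 A} {z : Str2 A} : C.ph = z.h → C.pw = z.w →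
      Rule (.inl (C.fill z)) {.inr C, .inl z}
  | cat {k : Side} {y : Str2 A} {C : Ctx2 A} : k.Fits y C.oh C.ow →
      Rule (.inr (C.cat k y)) {.inl y, .inr C}
  | hole {k : Side} {y : Str2 A} {p q : ℕ} : k.Fits y p q →
      Rule (.inr (Ctx2.hole k y p q)) {.inl y}
  | comp {C D : Ctx2 A} : C.ph = D.oh → C.pw = D.ow →
      Rule (.inr (C.comp D)) {.inr C, .inr D}

namespace Rule

variable {x : Expansion A} {s : Multiset (Expansion A)}

theorem proper (h : Rule x s) (hs : ∀ y ∈ s, y.Proper) : x.Proper := by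
  cases h with
  | chr a => exact one_pos
  | @join k y z hfit =>
    rw [Proper, Str2.area_join hfit]
    exact Nat.add_pos_left (hs (.inl y) (by simp)) _
  | @fill C z hh hw => exact (Nat.zero_le _).trans_lt (hs (.inr C) (by simp)).2
  | @cat k y C hfit =>
    obtain ⟨hC, hlt⟩ := hs (.inr C) (by simp)
    refine ⟨hC.cat hfit, ?_⟩
    rw [Ctx2.holeArea_cat, Ctx2.outerArea_cat hfit]
    omega
  | @hole k y p q hfit =>
    refine ⟨Ctx2.fits_hole hfit, ?_⟩
    rw [Ctx2.holeArea_hole, Ctx2.outerArea_hole hfit]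
    exact Nat.lt_add_of_pos_left (hs (.inl y) (by simp))
  | @comp C D hh hw =>
    obtain ⟨hC, hlt⟩ := hs (.inr C) (by simp)
    obtain ⟨hD, hlt'⟩ := hs (.inr D) (by simp)
    have harea : C.holeArea = D.outerArea := congrArg₂ (· * ·) hh hw
    exact ⟨hC.comp hD hh hw, hlt'.trans (harea ▸ hlt)⟩

theorem production (h : Rule x s) (hs : ∀ y ∈ s, y.Proper) :
    Production x.toValue (s.map toValue) := by
  cases h with
  | chr a => exact .chr a
  | join hfit => exact .join hfit
  | fill hh hw => exact .fill (Ctx2.mem_toPFun.2 ⟨hh.symm, hw.symm, rfl⟩)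
  | @cat k y C hfit =>
    have hcat := Ctx2.toPFun_cat (hs (.inr C) (by simp)).1 hfit
    have := Production.cat (hcat ▸ (C.cat k y).toPFun_dom_nonempty)
    rwa [← hcat] at this
  | hole hfit =>
    have := Production.hole hfit
    rwa [← Ctx2.toPFun_hole hfit] at this
  | @comp C D hh hw =>
    have hcomp := Ctx2.toPFun_comp (hs (.inr D) (by simp)).1 hh hw
    have := Production.comp (hcomp ▸ (C.comp D).toPFun_dom_nonempty)
    rwa [← hcomp] at this

theorem sum_weight_lt (h : Rule x s) (hs : ∀ y ∈ s, y.Proper) : (s.map weight).sum < x.weight := by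
  cases h with
  | chr a => exact one_pos
  | @join k y z hfit =>
    have hy : 0 < y.area := hs (.inl y) (by simp)
    have hz : 0 < z.area := hs (.inl z) (by simp)
    simp only [Multiset.insert_eq_cons, Multiset.map_cons, Multiset.map_singleton,
      Multiset.sum_cons, Multiset.sum_singleton, weight, Str2.area_join hfit]
    omega
  | @fill C z hh hw =>
    have hC : C.holeArea < C.outerArea := (hs (.inr C) (by simp)).2
    have hz : 0 < z.area := hs (.inl z) (by simp)
    have hhole : C.holeArea = z.area := congrArg₂ (· * ·) hh hw
    have hfill : (C.fill z).area = C.outerArea := rfl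
    simp only [Multiset.insert_eq_cons, Multiset.map_cons, Multiset.map_singleton,
      Multiset.sum_cons, Multiset.sum_singleton, weight, hfill]
    omega
  | @cat k y C hfit =>
    have hy : 0 < y.area := hs (.inl y) (by simp)
    have hC : C.holeArea < C.outerArea := (hs (.inr C) (by simp)).2
    simp only [Multiset.insert_eq_cons, Multiset.map_cons, Multiset.map_singleton,
      Multiset.sum_cons, Multiset.sum_singleton, weight, Ctx2.holeArea_cat,
      Ctx2.outerArea_cat hfit]
    omega
  | @hole k y p q hfit =>
    have hy : 0 < y.area := hs (.inl y) (by simp)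
    simp only [Multiset.map_singleton, Multiset.sum_singleton, weight, Ctx2.holeArea_hole,
      Ctx2.outerArea_hole hfit]
    omega
  | @comp C D hh hw =>
    have hC : C.holeArea < C.outerArea := (hs (.inr C) (by simp)).2
    have hD : D.holeArea < D.outerArea := (hs (.inr D) (by simp)).2
    have hhole : C.holeArea = D.outerArea := congrArg₂ (· * ·) hh hw
    have houter : (C.comp D).outerArea = C.outerArea := rfl
    have hhole' : (C.comp D).holeArea = D.holeArea := rfl
    simp only [Multiset.insert_eq_cons, Multiset.map_cons, Multiset.map_singleton,
      Multiset.sum_cons, Multiset.sum_singleton, weight, houter, hhole']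
    omega

end Rule

end Expansion

namespace TSLP2

variable {A : Type} {G : TSLP2 A}

theorem expAux_stable {X : G.V} {n m : ℕ} (hn : G.rank X < n) (hm : G.rank X < m) :
    G.expAux n X = G.expAux m X := by
  induction n generalizing m X with
  | zero => omega
  | succ n ih =>
    obtain ⟨m, rfl⟩ := Nat.exists_eq_add_one_of_ne_zero (Nat.ne_zero_of_lt hm)
    have hoccurs : ∀ Y ∈ (G.rhs X).occurs, G.expAux n Y = G.expAux m Y := fun Y hY => by
      have := G.rank_lt X Y hY
      exact ih (by omega) (by omega)
    rw [expAux, expAux]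
    cases h : G.rhs X <;>
      simp only [h, RhsT.occurs, List.forall_mem_cons] at hoccurs <;>
      simp only [hoccurs]

/-- The expansion of the nonterminal `X`, of which `expG` and `expC` are the two projections. -/
def expansion (G : TSLP2 A) (X : G.V) : Expansion A := G.expAux (G.rank X + 1) X

theorem WF.expansion_eq_inl (hG : G.WF) {X : G.V} (hX : G.isCtx X = false) :
    G.expansion X = .inl (G.expG X) := by
  have hWF := hG.2 X
  rw [expG, expansion, expAux]
  cases h : G.rhs X <;> simp only [h, hX, Bool.false_eq_true, false_and] at hWF <;> rfl

theorem WF.expansion_eq_inr (hG : G.WF) {X : G.V} (hX : G.isCtx X = true) :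
    G.expansion X = .inr (G.expC X) := by
  have hWF := hG.2 X
  rw [expC, expansion, expAux]
  cases h : G.rhs X <;> simp only [h, hX, Bool.true_eq_false, false_and] at hWF <;> rfl

theorem WF.rule (hG : G.WF) (X : G.V) :
    Expansion.Rule (G.expansion X) ((G.rhs X).occurs.map G.expansion : Multiset (Expansion A)) := by
  have hoccurs : ∀ Y ∈ (G.rhs X).occurs, G.expAux (G.rank X) Y = G.expansion Y := fun Y hY =>
    expAux_stable (G.rank_lt X Y hY) (Nat.lt_succ_self _)
  have hWF := hG.2 X
  have hX : G.expansion X = G.expAux (G.rank X + 1) X := rfl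
  rw [expAux] at hX
  cases h : G.rhs X <;>
    simp only [h, RhsT.occurs, List.forall_mem_cons] at hoccurs hX hWF ⊢ <;>
    simp only [hX, hoccurs, List.map]
  case chr a => exact .chr a
  case hcatGG | vcatGG =>
    obtain ⟨-, hY, hZ, hYZ⟩ := hWF
    rw [hG.expansion_eq_inl hY, hG.expansion_eq_inl hZ]
    first | exact .join (k := .left) hYZ.symm | exact .join (k := .top) hYZ.symm
  case subGC =>
    obtain ⟨-, hY, hZ, hh, hw⟩ := hWF
    rw [hG.expansion_eq_inr hY, hG.expansion_eq_inl hZ]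
    exact .fill hh hw
  case hcatGC | vcatGC =>
    obtain ⟨-, hY, hZ, hYZ⟩ := hWF
    rw [hG.expansion_eq_inl hY, hG.expansion_eq_inr hZ]
    first | exact .cat (k := .left) hYZ.symm | exact .cat (k := .top) hYZ.symm
  case hcatCG | vcatCG =>
    obtain ⟨-, hY, hZ, hYZ⟩ := hWF
    rw [hG.expansion_eq_inr hY, hG.expansion_eq_inl hZ, ← Multiset.coe_eq_coe.2 (.swap _ _ [])]
    first | exact .cat (k := .right) hYZ | exact .cat (k := .bottom) hYZ
  case hcatGH | hcatHG | vcatGH | vcatHG =>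
    obtain ⟨-, hY, hfit⟩ := hWF
    rw [hG.expansion_eq_inl hY]
    first
      | exact .hole (k := .left) hfit
      | exact .hole (k := .right) hfit
      | exact .hole (k := .top) hfit
      | exact .hole (k := .bottom) hfit
  case subCC =>
    obtain ⟨-, hY, hZ, hh, hw⟩ := hWF
    rw [hG.expansion_eq_inr hY, hG.expansion_eq_inr hZ]
    exact .comp hh hw

theorem WF.proper (hG : G.WF) (X : G.V) : (G.expansion X).Proper := by
  induction hn : G.rank X using Nat.strong_induction_on generalizing X with
  | _ n ih =>
    refine (hG.rule X).proper fun y hy => ?_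
    obtain ⟨Y, hY, rfl⟩ := List.mem_map.1 (Multiset.mem_coe.1 hy)
    exact ih _ (hn ▸ G.rank_lt X Y hY) Y rfl

theorem WF.proper_of_mem_occurs (hG : G.WF) (X : G.V) :
    ∀ y ∈ ((G.rhs X).occurs.map G.expansion : Multiset (Expansion A)), y.Proper := by
  intro y hy
  obtain ⟨Y, -, rfl⟩ := List.mem_map.1 (Multiset.mem_coe.1 hy)
  exact hG.proper Y

/-- The multigraph of the occurrences of nonterminals on right-hand sides. -/
def WF.dag (hG : G.WF) : WeightedDAG G.V where
  root := G.start
  children X := (G.rhs X).occurs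
  weight X := (G.expansion X).weight
  sum_weight_lt X := by
    have h := (hG.rule X).sum_weight_lt (hG.proper_of_mem_occurs X)
    rwa [Multiset.map_coe, List.map_map, ← Multiset.map_coe] at h

theorem WF.production (hG : G.WF) (X : G.V) :
    Production (G.expansion X).toValue
      ((hG.dag.children X).map fun Y => (G.expansion Y).toValue) := by
  have h := (hG.rule X).production (hG.proper_of_mem_occurs X)
  rwa [Multiset.map_coe, List.map_map, ← Multiset.map_coe] at h

end TSLP2

/-! ### Programs as grammars -/

namespace RhsT

variable {A V : Type}

/-- The right-hand side which attaches a ground nonterminal to the side `k` of a bare hole. -/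
def hole : Side → V → ℕ → ℕ → RhsT A V
  | .left, Y, p, q => .hcatGH Y p q
  | .right, Y, p, q => .hcatHG p q Y
  | .top, Y, p, q => .vcatGH Y p q
  | .bottom, Y, p, q => .vcatHG p q Y

theorem occurs_hole (k : Side) (Y : V) (p q : ℕ) : (hole (A := A) k Y p q).occurs = [Y] := by
  cases k <;> rfl

/-- `ρ.Yields val x` states that the right-hand side `ρ`, of one of the kinds which occur in
programs, has the value `x` when the nonterminals have the values `val`. -/
inductive Yields (val : V → Value A) : RhsT A V → Value A → Prop
  | chr (a : A) : Yields val (.chr a) (.inl (Str2.single a))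
  | fill {Y Z : V} {f : Str2 A →. Str2 A} {z y : Str2 A} : val Y = .inr f → val Z = .inl z →
      y ∈ f z → Yields val (.subGC Y Z) (.inl y)
  | comp {Y Z : V} {f g : Str2 A →. Str2 A} : val Y = .inr f → val Z = .inr g →
      (f.comp g).Dom.Nonempty → Yields val (.subCC Y Z) (.inr (f.comp g))
  | hole {k : Side} {Y : V} {y : Str2 A} {p q : ℕ} : val Y = .inl y → k.Fits y p q →
      Yields val (hole k Y p q) (.inr (k.wrap y p q))

end RhsT

theorem Program.Derivable.exists_yields {A : Type} {S : Program A} {x : Value A} {r : ℕ}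
    (h : S.Derivable x r) :
    ∃ ρ : RhsT A S, ρ.Yields (fun e => e.1.1) x ∧ ∀ e ∈ ρ.occurs, e.1.2 < r := by
  cases h with
  | chr a => exact ⟨.chr a, .chr a, by simp [RhsT.occurs]⟩
  | fill hf hz hy =>
    obtain ⟨r₁, hr₁, hf⟩ := hf
    obtain ⟨r₂, hr₂, hz⟩ := hz
    exact ⟨.subGC ⟨_, hf⟩ ⟨_, hz⟩, .fill rfl rfl hy,
      by simpa [RhsT.occurs, Nat.lt_succ_iff] using ⟨hr₁, hr₂⟩⟩
  | comp hf hg hfg =>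
    obtain ⟨r₁, hr₁, hf⟩ := hf
    obtain ⟨r₂, hr₂, hg⟩ := hg
    exact ⟨.subCC ⟨_, hf⟩ ⟨_, hg⟩, .comp rfl rfl hfg,
      by simpa [RhsT.occurs, Nat.lt_succ_iff] using ⟨hr₁, hr₂⟩⟩
  | @wrap k y p q r hy hfit =>
    obtain ⟨r₁, hr₁, hy⟩ := hy
    exact ⟨.hole k ⟨_, hy⟩ p q, .hole rfl hfit,
      by simpa [RhsT.occurs_hole, Nat.lt_succ_iff] using hr₁⟩

namespace Ctx2

variable {A : Type} {C D : Ctx2 A}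

theorem dims_eq_of_comp_dom_nonempty (h : (C.toPFun.comp D.toPFun).Dom.Nonempty) :
    C.ph = D.oh ∧ C.pw = D.ow := by
  obtain ⟨z, hz⟩ := h
  obtain ⟨s, hs⟩ := (PFun.mem_dom _ _).1 hz
  obtain ⟨u, hu, hs⟩ := PartialMap.mem_comp.1 hs
  obtain ⟨-, -, rfl⟩ := mem_toPFun.1 hu
  obtain ⟨hh, hw, -⟩ := mem_toPFun.1 hs
  exact ⟨hh.symm, hw.symm⟩

end Ctx2

namespace Expansion

variable {A : Type} {x : Expansion A} {v : Value A}

/-- The expansion has the given value, and the hole of a context lies inside its outer rectangle. -/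
inductive Represents : Expansion A → Value A → Prop
  | string (y : Str2 A) : Represents (.inl y) (.inl y)
  | context {C : Ctx2 A} : C.Fits → Represents (.inr C) (.inr C.toPFun)

theorem Represents.getG_eq {y : Str2 A} (h : x.Represents v) (hv : v = .inl y) :
    TSLP2.getG x = y := by
  subst hv
  cases h
  rfl

theorem Represents.fits_and_eq {f : Str2 A →. Str2 A} (h : x.Represents v) (hv : v = .inr f) :
    (TSLP2.getC x).Fits ∧ f = (TSLP2.getC x).toPFun := by
  subst hv
  cases h with
  | context hC => exact ⟨hC, rfl⟩

end Expansion

namespace TSLP2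

variable {A : Type} {G : TSLP2 A} {val : G.V → Value A}

theorem expAux_succ_of_rhs_eq_hole {X Y : G.V} {k : Side} {p q : ℕ}
    (h : G.rhs X = .hole k Y p q) (n : ℕ) :
    G.expAux (n + 1) X = .inr (.hole k (getG (G.expAux n Y)) p q) := by
  rw [expAux, h]
  cases k <;> rfl

theorem represents_expAux (hval : ∀ X, (G.rhs X).Yields val (val X)) {X : G.V} {n : ℕ}
    (hn : G.rank X < n) : Expansion.Represents (G.expAux n X) (val X) := by
  induction n generalizing X with
  | zero => omega
  | succ n ih =>
    have hoccurs : ∀ Y ∈ (G.rhs X).occurs, Expansion.Represents (G.expAux n Y) (val Y) :=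
      fun Y hY => ih (by have := G.rank_lt X Y hY; omega)
    have hX := hval X
    generalize hρ : G.rhs X = ρ at hX hoccurs
    generalize val X = x at hX
    cases hX with
    | chr a =>
      rw [expAux, hρ]
      exact .string _
    | @fill Y Z f z y hY hZ hy =>
      obtain ⟨-, rfl⟩ := (hoccurs Y (by simp [RhsT.occurs])).fits_and_eq hY
      have hz := (hoccurs Z (by simp [RhsT.occurs])).getG_eq hZ
      obtain ⟨-, -, rfl⟩ := Ctx2.mem_toPFun.1 hy
      rw [expAux, hρ, ← hz]
      exact .string _
    | @comp Y Z f g hY hZ hfg =>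
      obtain ⟨hC, rfl⟩ := (hoccurs Y (by simp [RhsT.occurs])).fits_and_eq hY
      obtain ⟨hD, rfl⟩ := (hoccurs Z (by simp [RhsT.occurs])).fits_and_eq hZ
      obtain ⟨hh, hw⟩ := Ctx2.dims_eq_of_comp_dom_nonempty hfg
      rw [expAux, hρ, ← Ctx2.toPFun_comp hD hh hw]
      exact .context (hC.comp hD hh hw)
    | @hole k Y y p q hY hfit =>
      have hy := (hoccurs Y (by simp [RhsT.occurs_hole])).getG_eq hY
      rw [expAux_succ_of_rhs_eq_hole hρ, hy, ← Ctx2.toPFun_hole hfit]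
      exact .context (Ctx2.fits_hole hfit)

theorem represents_expansion (hval : ∀ X, (G.rhs X).Yields val (val X)) (X : G.V) :
    (G.expansion X).Represents (val X) :=
  represents_expAux hval (Nat.lt_succ_self _)

theorem wf_of_yields (hval : ∀ X, (G.rhs X).Yields val (val X))
    (hctx : ∀ X, G.isCtx X = (val X).isRight) (hstart : G.isCtx G.start = false) : G.WF := by
  have expG_eq {X : G.V} {y : Str2 A} (hX : val X = .inl y) : G.expG X = y :=
    (represents_expansion hval X).getG_eq hX
  have expC_toPFun {X : G.V} {f : Str2 A →. Str2 A} (hX : val X = .inr f) :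
      f = (G.expC X).toPFun :=
    ((represents_expansion hval X).fits_and_eq hX).2
  refine ⟨hstart, fun X => ?_⟩
  have hX := hval X
  have hctxX := hctx X
  generalize G.rhs X = ρ at hX
  generalize val X = x at hX hctxX
  cases hX with
  | chr a => exact hctxX
  | @fill Y Z f z y hY hZ hy =>
    obtain rfl := expC_toPFun hY
    obtain ⟨hh, hw, -⟩ := Ctx2.mem_toPFun.1 hy
    refine ⟨hctxX, by rw [hctx, hY]; rfl, by rw [hctx, hZ]; rfl, ?_⟩
    rw [expG_eq hZ]
    exact ⟨hh.symm, hw.symm⟩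
  | @comp Y Z f g hY hZ hfg =>
    refine ⟨hctxX, by rw [hctx, hY]; rfl, by rw [hctx, hZ]; rfl, ?_⟩
    obtain rfl := expC_toPFun hY
    obtain rfl := expC_toPFun hZ
    exact Ctx2.dims_eq_of_comp_dom_nonempty hfg
  | @hole k Y y p q hY hfit =>
    have hYctx : G.isCtx Y = false := by rw [hctx, hY]; rfl
    obtain rfl := expG_eq hY
    cases k <;> exact ⟨hctxX, hYctx, hfit⟩

theorem card_le_size (G : TSLP2 A) : G.numNT ≤ G.size := by
  let := G.fintypeV
  rw [numNT, size, Fintype.card_eq_sum_ones]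
  refine Finset.sum_le_sum fun X _ => ?_
  split <;> omega

theorem size_le_two_mul_card (G : TSLP2 A) : G.size ≤ 2 * G.numNT := by
  rw [numNT, size, mul_comm, ← smul_eq_mul]
  refine Finset.sum_le_card_nsmul _ _ 2 fun X _ => ?_
  split <;> omega

theorem depthAux_le_rank (n : ℕ) (X : G.V) : G.depthAux n X ≤ G.rank X + 1 := by
  induction n generalizing X with
  | zero => exact Nat.zero_le _
  | succ n ih =>
    have hfold : ((G.rhs X).occurs.map fun Y => G.depthAux n Y).foldr max 0 ≤ G.rank X := by
      refine List.max_le_of_forall_le _ _ fun d hd => ?_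
      obtain ⟨Y, hY, rfl⟩ := List.mem_map.1 hd
      exact (ih Y).trans (G.rank_lt X Y hY)
    rw [depthAux]
    split <;> omega

end TSLP2

theorem Program.Valid.exists_tslp2 {A : Type} {S : Program A} (hS : S.Valid) {T : Str2 A} {r : ℕ}
    (hT : S.Available (.inl T) r) :
    ∃ G : TSLP2 A, G.WF ∧ G.exp = T ∧ G.size ≤ 2 * S.card ∧ G.depth ≤ r + 1 := by
  obtain ⟨r', hr', hT⟩ := hT
  choose ρ hyields hrank using fun e : S => (hS e e.2).exists_yields
  let G : TSLP2 A :=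
    { V := S
      fintypeV := inferInstance
      isCtx := fun e => e.1.1.isRight
      start := ⟨_, hT⟩
      rhs := ρ
      rank := fun e => e.1.2
      rank_lt := hrank }
  have hrepr := TSLP2.represents_expansion (G := G) hyields G.start
  have hsize := G.size_le_two_mul_card
  refine ⟨G, TSLP2.wf_of_yields hyields (fun _ => rfl) rfl, hrepr.getG_eq rfl, ?_,
    (TSLP2.depthAux_le_rank _ _).trans (Nat.add_le_add_right hr' 1)⟩
  rwa [TSLP2.numNT, Fintype.card_coe] at hsize

/-! ### The balanced grammar -/

namespace TSLP2

variable {A : Type} {G : TSLP2 A}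

theorem WF.expansion_start (hG : G.WF) : G.expansion G.start = .inl G.exp :=
  hG.expansion_eq_inl hG.1

theorem WF.exists_balanced (hG : G.WF) :
    ∃ G' : TSLP2 A, G'.WF ∧ G'.exp = G.exp ∧ G'.size ≤ 32 * G.size ∧
      G'.depth ≤ 152 * Nat.log 2 G.exp.area + 371 := by
  let := G.fintypeV
  obtain ⟨S, hS, hcard, hstart⟩ := hG.dag.exists_balanced_program hG.production
  have hvalue : (G.expansion hG.dag.root).toValue = .inl G.exp :=
    congrArg Expansion.toValue hG.expansion_start
  have hweight : hG.dag.weight hG.dag.root = 3 * G.exp.area - 2 :=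
    congrArg Expansion.weight hG.expansion_start
  rw [hvalue, hweight] at hstart
  obtain ⟨G', hWF, hexp, hsize, hdepth⟩ := hS.exists_tslp2 hstart
  have harea : 0 < G.exp.area := by
    have := hG.proper G.start
    rwa [hG.expansion_start] at this
  have hlog : Nat.log 2 (3 * G.exp.area - 2) ≤ Nat.log 2 G.exp.area + 2 := calc
    Nat.log 2 (3 * G.exp.area - 2) ≤ Nat.log 2 (G.exp.area * 2 * 2) := Nat.log_mono_right (by omega)
    _ = Nat.log 2 G.exp.area + 2 := by
      rw [Nat.log_mul_base one_lt_two (by positivity), Nat.log_mul_base one_lt_two harea.ne']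
  have hV : Fintype.card G.V ≤ G.size := G.card_le_size
  exact ⟨G', hWF, hexp, by omega, by omega⟩

end TSLP2

theorem balancing_2d_slps_with_holes_general :
    ∃ c : ℕ, 0 < c ∧
      ∀ (A : Type) (G : TSLP2 A), G.WF → 2 ≤ (G.exp).h * (G.exp).w →
        ∃ G' : TSLP2 A, G'.WF ∧ G'.exp = G.exp ∧
          G'.size ≤ c * G.size ∧
          (G'.depth : ℝ) ≤ (c : ℝ) * Real.logb 2 (((G.exp).h * (G.exp).w : ℕ) : ℝ) := by
  refine ⟨523, by norm_num, fun A G hG harea => ?_⟩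
  obtain ⟨G', hWF, hexp, hsize, hdepth⟩ := hG.exists_balanced
  refine ⟨G', hWF, hexp, hsize.trans (Nat.mul_le_mul_right _ (by norm_num)), ?_⟩
  have hlog : 1 ≤ Nat.log 2 G.exp.area := Nat.log_pos one_lt_two harea
  calc (G'.depth : ℝ) ≤ 523 * (Nat.log 2 G.exp.area : ℕ) := by
        exact_mod_cast (by omega : G'.depth ≤ 523 * Nat.log 2 G.exp.area)
    _ ≤ _ := by
      gcongr
      · norm_num
      · exact Real.natLog_le_logb _ _

/-- balancing 2D SLPs with holes. There is an absolute
constant `c > 0` such that: given a 2D SLP with holes `G` deriving a 2D string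
`T` of size `N × M` with `N * M ≥ 2`, there is a 2D SLP with holes `G'`
deriving the same string `T`, of size at most `c * |G|` and depth at most
`c * log₂ (N * M)`. -/
theorem balancing_2d_slps_with_holes :
    ∃ c : ℕ, 0 < c ∧
      ∀ (A : Type) (_ : Fintype A) (G : TSLP2 A), G.WF →
        2 ≤ (G.exp).h * (G.exp).w →
        ∃ G' : TSLP2 A, G'.WF ∧ G'.exp = G.exp ∧
          G'.size ≤ c * G.size ∧
          (G'.depth : ℝ) ≤ (c : ℝ) * Real.logb 2 (((G.exp).h * (G.exp).w : ℕ) : ℝ) := by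
  obtain ⟨c, hc, h⟩ := balancing_2d_slps_with_holes_general
  exact ⟨c, hc, fun A _ => h A⟩
end
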